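/- arXiv:2604.10682 — 4 statements merged into one kernel-verified Lean document; each statement's English description precedes it below -/
import Mathlib

section
/- Let d ≥ 1 be an integer, let σ > −d be a real number, let λ > 0, ε > 0, C₀ ≥ 0, and let k ∈ ℕ. Suppose F : ℝ^d → E (E a finite-dimensional complex normed space) is (d + ⌊σ⌋ + 1)-times continuously differentiable on ℝ^d \ {0} and satisfies ‖∇ⁿF(ξ)‖ ≤ C₀ |ξ|^{σ−n} exp(−λ^ε |ξ|^ε) for every integer 0 ≤ n ≤ d + ⌊σ⌋ + 1 and every ξ ≠ 0. Define G(x) := ∫_{ℝ^d} F(ξ) e^{i x·ξ} dξ. Then G is k-times continuously differentiable on ℝ^d and there is a constant C, depending only on d, k, σ and ε, such that ‖∇^k G(x)‖ ≤ C C₀ λ^{−d−k−σ} (1 + |x|/λ)^{−(d+σ)} for all x ∈ ℝ^d. -/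
open MeasureTheory Set
open scoped InnerProductSpace

lemma pkb_fd_bound {E : Type*} [NormedAddCommGroup E] [NormedSpace ℝ E] (N : ℕ) :
    ∀ (f : ℕ → ℝ → E) (a B : ℝ),
      (∀ j < N, ∀ t ∈ Icc a (a + N), HasDerivAt (f j) (f (j + 1) t) t) →
      (∀ t ∈ Icc a (a + N), ‖f N t‖ ≤ B) → ‖(fwdDiff (1 : ℝ))^[N] (f 0) a‖ ≤ B := by
  induction N with
  | zero =>
    intro f a B _ h
    simpa using h a (by simp)
  | succ N ih =>
    intro f a B hd hB
    push_cast at hd hB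
    rw [Function.iterate_succ_apply]
    refine ih (fun j => fwdDiff (1 : ℝ) (f j)) a B ?_ ?_
    · intro j hj t ht
      have h1 := hd j (by omega) (t + 1) ⟨by linarith [ht.1], by linarith [ht.2]⟩
      have h2 := hd j (by omega) t ⟨by linarith [ht.1], by linarith [ht.2]⟩
      exact (h1.comp_add_const t 1).sub h2
    · intro t ht
      have := (convex_Icc t (t + 1)).norm_image_sub_le_of_norm_hasDerivWithin_le
        (f := f N) (f' := f (N + 1)) (C := B) (x := t) (y := t + 1)
        (fun s hs => (hd N (by omega) s
          ⟨by linarith [ht.1, hs.1], by linarith [ht.2, hs.2]⟩).hasDerivWithinAt)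
        (fun s hs => hB s ⟨by linarith [ht.1, hs.1], by linarith [ht.2, hs.2]⟩)
        (by simp) (by simp)
      simpa [fwdDiff] using this

lemma pkb_fd_bound' {V E : Type*} [NormedAddCommGroup V] [NormedSpace ℝ V]
    [NormedAddCommGroup E] [NormedSpace ℝ E] (N : ℕ) (F : V → E) (ξ h : V) (B : ℝ)
    (hF : ContDiffOn ℝ N F {0}ᶜ)
    (hne : ∀ t ∈ Icc (0 : ℝ) N, ξ + t • h ≠ 0)
    (hB : ∀ t ∈ Icc (0 : ℝ) N, ‖iteratedFDerivWithin ℝ N F {0}ᶜ (ξ + t • h)‖ ≤ B) :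
    ‖(fwdDiff h)^[N] F ξ‖ ≤ B * ‖h‖ ^ N := by
  have hopen : IsOpen ({0}ᶜ : Set V) := isOpen_compl_singleton
  have e : (fwdDiff h)^[N] F ξ = (fwdDiff (1 : ℝ))^[N]
      ((fun (j : ℕ) (t : ℝ) => iteratedFDerivWithin ℝ j F {0}ᶜ (ξ + t • h) (fun _ => h)) 0) 0 := by
    simp [fwdDiff_iter_eq_sum_shift, Nat.cast_smul_eq_nsmul]
  rw [e]
  apply pkb_fd_bound N (fun (j : ℕ) (t : ℝ) =>
    iteratedFDerivWithin ℝ j F {0}ᶜ (ξ + t • h) (fun _ => h))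
  · intro j hj t ht
    rw [zero_add] at ht
    have h1 := (hF.differentiableOn_iteratedFDerivWithin (m := j) (by exact_mod_cast hj)
      hopen.uniqueDiffOn _ (hne t ht)).hasFDerivWithinAt.hasFDerivAt (hopen.mem_nhds (hne t ht))
    have h2 : HasDerivAt (fun t : ℝ => ξ + t • h) h t := by
      simpa using ((hasDerivAt_id t).smul_const h).const_add ξ
    have h3 := h1.comp_hasDerivAt t h2
    have h4 := (ContinuousMultilinearMap.apply ℝ (fun _ : Fin j => V) E
      (fun _ => h)).hasFDerivAt.comp_hasDerivAt t h3
    convert h4 using 1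
    · rfl
    · rw [iteratedFDerivWithin_succ_apply_left]
      rfl
  · intro t ht
    rw [zero_add] at ht
    refine (ContinuousMultilinearMap.le_opNorm _ _).trans ?_
    simp only [Finset.prod_const, Finset.card_univ, Fintype.card_fin]
    gcongr
    exact hB t ht

/-- symbol class -/
def PkbSym {V E : Type*} [NormedAddCommGroup V] [NormedSpace ℝ V]
    [NormedAddCommGroup E] [NormedSpace ℝ E] (N : ℕ) (s A : ℝ) (w : V → ℝ) (F : V → E) : Prop :=
  ContDiffOn ℝ N F {0}ᶜ ∧ ∀ n ≤ N, ∀ ξ : V, ξ ≠ 0 →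
    ‖iteratedFDerivWithin ℝ n F {0}ᶜ ξ‖ ≤ A * ‖ξ‖ ^ (s - n) * w ξ

lemma pkb_mul {V E : Type*} [NormedAddCommGroup V] [NormedSpace ℝ V]
    [NormedAddCommGroup E] [NormedSpace ℝ E] (N : ℕ) (s A : ℝ) (w : V → ℝ) (F : V → E)
    (hw : ∀ ξ, 0 ≤ w ξ) (hA : 0 ≤ A) (hF : PkbSym N s A w F) (L : V →L[ℝ] ℝ) (K : ℝ)
    (hL : ‖L‖ ≤ K) :
    PkbSym N (s + 1) ((1 + N) * A * K) w (fun ξ => L ξ • F ξ) := by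
  have hopen : IsOpen ({0}ᶜ : Set V) := isOpen_compl_singleton
  have hK : 0 ≤ K := (norm_nonneg _).trans hL
  refine ⟨L.contDiff.contDiffOn.smul hF.1, fun n hn ξ hξ => ?_⟩
  have hx : 0 < ‖ξ‖ := norm_pos_iff.2 hξ
  have hmem : ξ ∈ ({0}ᶜ : Set V) := hξ
  have h0 := norm_iteratedFDerivWithin_smul_le (𝕜 := ℝ) (N := N) (n := n)
    (L.contDiff.contDiffOn (s := {0}ᶜ)) hF.1 hopen.uniqueDiffOn hmem (by exact_mod_cast hn)
  have hn0 : ‖iteratedFDerivWithin ℝ 0 L {0}ᶜ ξ‖ ≤ K * ‖ξ‖ := by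
    rw [norm_iteratedFDerivWithin_zero]
    exact (L.le_opNorm ξ).trans (by gcongr)
  have hn1 : ‖iteratedFDerivWithin ℝ 1 L {0}ᶜ ξ‖ ≤ K := by
    rw [norm_iteratedFDerivWithin_one _ (hopen.uniqueDiffWithinAt hmem),
      fderivWithin_of_isOpen hopen hmem, L.fderiv]
    exact hL
  have hn2 : ∀ i, 2 ≤ i → ‖iteratedFDerivWithin ℝ i L {0}ᶜ ξ‖ = 0 := by
    intro i hi
    obtain ⟨j, rfl⟩ := Nat.exists_eq_add_of_le' hi
    rw [← norm_iteratedFDerivWithin_fderivWithin hopen.uniqueDiffOn hmem,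
      iteratedFDerivWithin_congr (f := fun _ => L)
      (fun y hy => by rw [fderivWithin_of_isOpen hopen hy, L.fderiv]) hmem,
      iteratedFDerivWithin_const_of_ne (by omega)]
    simp
  refine h0.trans ?_
  have hb0 := hF.2 n hn ξ hξ
  have epow : ‖ξ‖ ^ (s + 1 - n) = ‖ξ‖ * ‖ξ‖ ^ (s - n) := by
    rw [show s + 1 - (n : ℝ) = 1 + (s - n) by ring, Real.rpow_add hx, Real.rpow_one]
  have hX : 0 ≤ ‖ξ‖ ^ (s + 1 - n) := by positivity
  have hT0 : (n.choose 0 : ℝ) * ‖iteratedFDerivWithin ℝ 0 L {0}ᶜ ξ‖ *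
        ‖iteratedFDerivWithin ℝ (n - 0) F {0}ᶜ ξ‖ ≤ A * K * ‖ξ‖ ^ (s + 1 - n) * w ξ := by
    rw [epow]
    calc _ ≤ 1 * (K * ‖ξ‖) * (A * ‖ξ‖ ^ (s - n) * w ξ) := by
          simp only [Nat.choose_zero_right, Nat.cast_one, Nat.sub_zero]
          gcongr
      _ = _ := by ring
  rcases n with _ | n
  · simp only [zero_add, Finset.sum_range_one]
    refine hT0.trans ?_
    have : A * K ≤ (1 + N) * A * K := by
      have : 0 ≤ N * (A * K) := by positivity
      linarith
    gcongr
    exact hw ξ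
  · have hb1 := hF.2 n (by omega) ξ hξ
    have epow1 : ‖ξ‖ ^ (s + 1 - (n + 1 : ℕ)) = ‖ξ‖ ^ (s - n) := by
      congr 1; push_cast; ring
    rw [Finset.sum_range_succ', Finset.sum_range_succ']
    have hz : ∑ k ∈ Finset.range n, ((n + 1).choose (k + 1 + 1) : ℝ) *
        ‖iteratedFDerivWithin ℝ (k + 1 + 1) L {0}ᶜ ξ‖ *
        ‖iteratedFDerivWithin ℝ (n + 1 - (k + 1 + 1)) F {0}ᶜ ξ‖ = 0 := by
      apply Finset.sum_eq_zero
      intro k _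
      rw [hn2 _ (by omega)]; simp
    rw [hz]
    have hT1 : ((n + 1).choose (0 + 1) : ℝ) * ‖iteratedFDerivWithin ℝ (0 + 1) L {0}ᶜ ξ‖ *
        ‖iteratedFDerivWithin ℝ (n + 1 - (0 + 1)) F {0}ᶜ ξ‖ ≤
        N * (A * K * ‖ξ‖ ^ (s + 1 - (n + 1 : ℕ)) * w ξ) := by
      rw [epow1]
      have hnN : ((n + 1 : ℕ) : ℝ) ≤ N := by exact_mod_cast hn
      calc _ ≤ N * K * (A * ‖ξ‖ ^ (s - n) * w ξ) := by
            simp only [zero_add, Nat.choose_one_right]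
            gcongr
            exact hb1
        _ = _ := by ring
    calc _ ≤ 0 + N * (A * K * ‖ξ‖ ^ (s + 1 - (n + 1 : ℕ)) * w ξ) +
          A * K * ‖ξ‖ ^ (s + 1 - (n + 1 : ℕ)) * w ξ := by gcongr
      _ = _ := by ring

lemma pkb_prod {V E : Type*} [NormedAddCommGroup V] [NormedSpace ℝ V]
    [NormedAddCommGroup E] [NormedSpace ℝ E] (N : ℕ) (s A : ℝ) (w : V → ℝ) (F : V → E)
    (hw : ∀ ξ, 0 ≤ w ξ) (hA : 0 ≤ A) (hF : PkbSym N s A w F) (k : ℕ) :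
    ∀ (L : Fin k → V →L[ℝ] ℝ) (K : Fin k → ℝ), (∀ i, ‖L i‖ ≤ K i) →
    PkbSym N (s + k) ((1 + N) ^ k * A * ∏ i, K i) w (fun ξ => (∏ i, L i ξ) • F ξ) := by
  induction k with
  | zero => intro L K _; simpa using hF
  | succ k ih =>
    intro L K hL
    have h1 := ih (fun i => L i.succ) (fun i => K i.succ) (fun i => hL _)
    have hK : 0 ≤ ∏ i : Fin k, K i.succ :=
      Finset.prod_nonneg fun i _ => (norm_nonneg _).trans (hL _)
    have h2 := pkb_mul N _ _ w _ hw (by positivity) h1 (L 0) (K 0) (hL 0)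
    convert h2 using 1
    · push_cast; ring
    · rw [Fin.prod_univ_succ]; ring
    · ext ξ
      rw [Fin.prod_univ_succ, mul_smul]

lemma pkb_int_exp (d : ℕ) (hd : 1 ≤ d) (s ε : ℝ) (hs : -(d : ℝ) < s) (hε : 0 < ε) :
    Integrable (fun ξ : EuclideanSpace ℝ (Fin d) => ‖ξ‖ ^ s * Real.exp (-‖ξ‖ ^ ε)) := by
  have : Nonempty (Fin d) := ⟨⟨0, hd⟩⟩
  have h := integrable_fun_norm_addHaar (volume : Measure (EuclideanSpace ℝ (Fin d)))
    (f := fun y : ℝ => y ^ s * Real.exp (-y ^ ε))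
  refine h.2 ?_
  refine (integrableOn_rpow_mul_exp_neg_rpow (s := s + d - 1) (by linarith) hε).congr_fun ?_
    measurableSet_Ioi
  intro y hy
  have hy : 0 < y := hy
  simp only [finrank_euclideanSpace, Fintype.card_fin, smul_eq_mul]
  rw [← mul_assoc, ← Real.rpow_natCast, ← Real.rpow_add hy, Nat.cast_sub hd]
  congr 2; push_cast; ring

lemma pkb_int_small (d : ℕ) (hd : 1 ≤ d) (s R : ℝ) (hs : -(d : ℝ) < s) :
    Integrable (fun ξ : EuclideanSpace ℝ (Fin d) =>
      (Iio R).indicator (fun y : ℝ => y ^ s) ‖ξ‖) := by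
  refine ((pkb_int_exp d hd s 1 hs one_pos).const_mul (Real.exp R)).mono' ?_ ?_
  · have : Measurable ((Iio R).indicator (fun y : ℝ => y ^ s)) :=
      Measurable.indicator (by fun_prop) measurableSet_Iio
    exact (this.comp measurable_norm).aestronglyMeasurable
  · refine Filter.Eventually.of_forall fun ξ => ?_
    by_cases h : ‖ξ‖ < R
    · rw [indicator_of_mem (by exact h), Real.rpow_one, Real.norm_of_nonneg (by positivity),
        mul_left_comm, ← Real.exp_add]
      exact le_mul_of_one_le_right (by positivity) (Real.one_le_exp (by linarith))
    · rw [indicator_of_notMem (by exact h)]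
      simp only [norm_zero]
      positivity

lemma pkb_int_large (d : ℕ) (hd : 1 ≤ d) (s R : ℝ) (hs : s < -(d : ℝ)) (hR : 0 < R) :
    Integrable (fun ξ : EuclideanSpace ℝ (Fin d) =>
      (Ici R).indicator (fun y : ℝ => y ^ s) ‖ξ‖) := by
  have : Nonempty (Fin d) := ⟨⟨0, hd⟩⟩
  have h := integrable_fun_norm_addHaar (volume : Measure (EuclideanSpace ℝ (Fin d)))
    (f := (Ici R).indicator (fun y : ℝ => y ^ s))
  refine h.2 ?_
  have h1 : IntegrableOn (fun y : ℝ => y ^ (s + d - 1)) (Ici R) := by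
    rw [integrableOn_Ici_iff_integrableOn_Ioi]
    exact integrableOn_Ioi_rpow_of_lt (by linarith) hR
  refine ((integrable_indicator_iff measurableSet_Ici).2 h1).integrableOn.congr_fun ?_
    measurableSet_Ioi
  intro y hy
  have hy : 0 < y := hy
  simp only [finrank_euclideanSpace, Fintype.card_fin, smul_eq_mul]
  by_cases hyR : y ∈ Ici R
  · rw [indicator_of_mem hyR, indicator_of_mem hyR, ← Real.rpow_natCast, ← Real.rpow_add hy,
      Nat.cast_sub hd]
    congr 1; push_cast; ring
  · rw [indicator_of_notMem hyR, indicator_of_notMem hyR, mul_zero]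

lemma pkb_norm_e {V : Type*} [NormedAddCommGroup V] [InnerProductSpace ℝ V] (x ξ : V) :
    ‖Complex.exp ((⟪x, ξ⟫_ℝ : ℂ) * Complex.I)‖ = 1 := Complex.norm_exp_ofReal_mul_I _

lemma pkb_integrable_e {d : ℕ} {E : Type*} [NormedAddCommGroup E] [NormedSpace ℂ E]
    (x : EuclideanSpace ℝ (Fin d)) {F : EuclideanSpace ℝ (Fin d) → E} (hF : Integrable F) :
    Integrable (fun ξ => Complex.exp ((⟪x, ξ⟫_ℝ : ℂ) * Complex.I) • F ξ) := by
  refine hF.norm.mono' ?_ ?_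
  · refine AEStronglyMeasurable.smul (Continuous.aestronglyMeasurable ?_) hF.1
    fun_prop
  · refine Filter.Eventually.of_forall fun ξ => ?_
    rw [norm_smul, pkb_norm_e, one_mul]

lemma pkb_shift {d : ℕ} {E : Type*} [NormedAddCommGroup E] [NormedSpace ℂ E]
    (x h : EuclideanSpace ℝ (Fin d)) (hx : ⟪x, h⟫_ℝ = Real.pi) (N : ℕ) :
    ∀ (F : EuclideanSpace ℝ (Fin d) → E), Integrable F →
    ∫ ξ, Complex.exp ((⟪x, ξ⟫_ℝ : ℂ) * Complex.I) • ((fwdDiff h)^[N] F) ξ =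
      ((-2 : ℂ) ^ N) • ∫ ξ, Complex.exp ((⟪x, ξ⟫_ℝ : ℂ) * Complex.I) • F ξ := by
  induction N with
  | zero => intro F _; simp
  | succ N ih =>
    intro F hF
    have hF1 : Integrable (fun ξ => F (ξ + h)) := hF.comp_add_right h
    rw [Function.iterate_succ_apply, ih (fwdDiff h F) (hF1.sub hF), pow_succ, mul_smul]
    congr 1
    have e1 : ∫ ξ, Complex.exp ((⟪x, ξ⟫_ℝ : ℂ) * Complex.I) • F (ξ + h) =
        -∫ ξ, Complex.exp ((⟪x, ξ⟫_ℝ : ℂ) * Complex.I) • F ξ := by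
      rw [← integral_add_right_eq_self
        (fun ξ => Complex.exp ((⟪x, ξ⟫_ℝ : ℂ) * Complex.I) • F ξ) h, ← integral_neg]
      congr 1
      ext ξ
      rw [inner_add_right, hx, Complex.ofReal_add, add_mul, Complex.exp_add, Complex.exp_pi_mul_I]
      simp
    simp only [fwdDiff, smul_sub]
    rw [integral_sub (pkb_integrable_e x hF1) (pkb_integrable_e x hF), e1]
    module

lemma pkb_decay (d N : ℕ) (hd : 1 ≤ d) (σ : ℝ) (hσ : -(d : ℝ) < σ) (hN : d + σ < N) :
    ∃ C : ℝ, 0 < C ∧ ∀ (E : Type) [NormedAddCommGroup E] [NormedSpace ℂ E],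
      ∀ (A : ℝ) (F : EuclideanSpace ℝ (Fin d) → E), 0 ≤ A → Integrable F →
      ContDiffOn ℝ N F {0}ᶜ →
      (∀ ξ, ξ ≠ 0 → ‖F ξ‖ ≤ A * ‖ξ‖ ^ σ) →
      (∀ ξ, ξ ≠ 0 → ‖iteratedFDerivWithin ℝ N F {0}ᶜ ξ‖ ≤ A * ‖ξ‖ ^ (σ - N)) →
      ∀ x, x ≠ 0 → ‖∫ ξ, Complex.exp ((⟪x, ξ⟫_ℝ : ℂ) * Complex.I) • F ξ‖ ≤
        C * A * ‖x‖ ^ (-(d + σ)) := by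
  have : Nonempty (Fin d) := ⟨⟨0, hd⟩⟩
  have hN0 : (0 : ℝ) < N := by linarith
  set φ : EuclideanSpace ℝ (Fin d) → ℝ :=
    fun ξ => (Iio (3 * N : ℝ)).indicator (fun y : ℝ => y ^ σ) ‖ξ‖ with hφ
  set ψ : EuclideanSpace ℝ (Fin d) → ℝ :=
    fun ξ => (Ici (2 * N : ℝ)).indicator (fun y : ℝ => y ^ (σ - N)) ‖ξ‖ with hψ
  have iφ : Integrable φ := pkb_int_small d hd σ _ hσ
  have iψ : Integrable ψ := pkb_int_large d hd (σ - N) _ (by linarith) (by positivity)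
  have φ0 : ∀ ξ, 0 ≤ φ ξ := fun ξ => indicator_apply_nonneg fun _ => by positivity
  have ψ0 : ∀ ξ, 0 ≤ ψ ξ := fun ξ => indicator_apply_nonneg fun _ => by positivity
  set C : ℝ := Real.pi ^ (d + σ) * (2 ^ N * (∫ ξ, φ ξ) + 2 ^ (N - σ) * ∫ ξ, ψ ξ) with hC
  have hC0 : 0 ≤ C := by
    have := integral_nonneg (μ := volume) (show (0 : EuclideanSpace ℝ (Fin d) → ℝ) ≤ φ from φ0)
    have := integral_nonneg (μ := volume) (show (0 : EuclideanSpace ℝ (Fin d) → ℝ) ≤ ψ from ψ0)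
    positivity
  refine ⟨C + 1, by positivity, ?_⟩
  intro E _ _ A F hA iF cF bF bN x hx
  have hx0 : 0 < ‖x‖ := norm_pos_iff.2 hx
  set h : EuclideanSpace ℝ (Fin d) := (Real.pi / ‖x‖ ^ 2) • x with hh
  set r : ℝ := Real.pi / ‖x‖ with hr
  have hr0 : 0 < r := by positivity
  have hhr : ‖h‖ = r := by
    rw [hh, norm_smul, Real.norm_of_nonneg (by positivity), hr]; field_simp
  have hxh : ⟪x, h⟫_ℝ = Real.pi := by
    rw [hh, inner_smul_right, real_inner_self_eq_norm_sq]; field_simp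
  have key := pkb_shift x h hxh N F iF
  -- majorant
  set M : EuclideanSpace ℝ (Fin d) → ℝ := fun ξ => A * r ^ σ *
    (∑ k ∈ Finset.range (N + 1), (N.choose k : ℝ) * φ (r⁻¹ • (ξ + k • h)) +
      2 ^ (N - σ) * ψ (r⁻¹ • ξ)) with hM
  have hrinv : r⁻¹ ≠ 0 := by positivity
  have iφk : ∀ k : ℕ, Integrable (fun ξ => φ (r⁻¹ • (ξ + k • h))) := fun k =>
    (iφ.comp_smul hrinv).comp_add_right (k • h)
  have iψr : Integrable (fun ξ => ψ (r⁻¹ • ξ)) := iψ.comp_smul hrinv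
  have iM : Integrable M := by
    refine Integrable.const_mul (Integrable.add ?_ (iψr.const_mul _)) _
    exact integrable_finsetSum _ fun k _ => (iφk k).const_mul _
  have intM : ∫ ξ, M ξ = C * A * ‖x‖ ^ (-(d + σ)) := by
    have e1 : ∀ k : ℕ, ∫ ξ, φ (r⁻¹ • (ξ + k • h)) = r ^ d * ∫ ξ, φ ξ := by
      intro k
      rw [integral_add_right_eq_self (fun ξ => φ (r⁻¹ • ξ)) (k • h),
        Measure.integral_comp_inv_smul_of_nonneg _ _ hr0.le]
      simp
    have e2 : ∫ ξ, ψ (r⁻¹ • ξ) = r ^ d * ∫ ξ, ψ ξ := by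
      rw [Measure.integral_comp_inv_smul_of_nonneg _ _ hr0.le]
      simp
    have e3 : ∑ k ∈ Finset.range (N + 1), (N.choose k : ℝ) = 2 ^ N := by
      exact_mod_cast Nat.sum_range_choose N
    have e4 : r ^ σ * r ^ d = Real.pi ^ (d + σ) * ‖x‖ ^ (-(d + σ)) := by
      rw [← Real.rpow_natCast, ← Real.rpow_add hr0, hr, Real.div_rpow Real.pi_pos.le hx0.le,
        Real.rpow_neg hx0.le, add_comm σ]
      rfl
    rw [hM, integral_const_mul, integral_add
      (integrable_finsetSum _ fun k _ => (iφk k).const_mul _) (iψr.const_mul _),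
      integral_finsetSum _ fun k _ => (iφk k).const_mul _, integral_const_mul, e2]
    simp only [integral_const_mul, e1]
    rw [← Finset.sum_mul, e3, hC]
    linear_combination A * (2 ^ N * (∫ ξ, φ ξ) + 2 ^ (N - σ) * ∫ ξ, ψ ξ) * e4
  have hae : ∀ᵐ ξ : EuclideanSpace ℝ (Fin d), ∀ k : ℕ, ξ + k • h ≠ 0 := by
    rw [ae_all_iff]
    intro k
    have : ({-(k • h)}ᶜ : Set (EuclideanSpace ℝ (Fin d))) ∈ ae volume :=
      compl_mem_ae_iff.2 (measure_singleton _)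
    filter_upwards [this] with ξ hξ h0
    exact hξ (eq_neg_of_add_eq_zero_left h0)
  have bound : ∀ᵐ ξ, ‖Complex.exp ((⟪x, ξ⟫_ℝ : ℂ) * Complex.I) • ((fwdDiff h)^[N] F) ξ‖ ≤ M ξ := by
    filter_upwards [hae] with ξ hξ
    rw [norm_smul, pkb_norm_e, one_mul]
    simp only [hM]
    have hnr : ∀ η : EuclideanSpace ℝ (Fin d), ‖r⁻¹ • η‖ = ‖η‖ / r := by
      intro η
      rw [norm_smul, norm_inv, Real.norm_of_nonneg hr0.le, div_eq_inv_mul]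
    have hsum0 : 0 ≤ ∑ k ∈ Finset.range (N + 1), (N.choose k : ℝ) * φ (r⁻¹ • (ξ + k • h)) :=
      Finset.sum_nonneg fun k _ => mul_nonneg (by positivity) (φ0 _)
    by_cases hbig : 2 * N * r ≤ ‖ξ‖
    · have hξ0 : 0 < ‖ξ‖ := lt_of_lt_of_le (by positivity) hbig
      have hlow : ∀ t ∈ Icc (0 : ℝ) N, ‖ξ‖ / 2 ≤ ‖ξ + t • h‖ := by
        intro t ht
        have h1 : ‖ξ‖ ≤ ‖ξ + t • h‖ + ‖t • h‖ := norm_le_add_norm_add ξ (t • h)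
        have h2 : ‖t • h‖ ≤ N * r := by
          rw [norm_smul, hhr, Real.norm_of_nonneg ht.1]
          gcongr
          exact ht.2
        linarith
      have hne : ∀ t ∈ Icc (0 : ℝ) N, ξ + t • h ≠ 0 := fun t ht =>
        norm_pos_iff.1 (lt_of_lt_of_le (by positivity) (hlow t ht))
      have h1 := pkb_fd_bound' N F ξ h (A * (‖ξ‖ / 2) ^ (σ - N)) cF hne (by
        intro t ht
        refine (bN _ (hne t ht)).trans ?_
        gcongr ?_ * ?_
        exact Real.rpow_le_rpow_of_nonpos (by positivity) (hlow t ht) (by linarith))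
      refine h1.trans ?_
      have hψe : ψ (r⁻¹ • ξ) = (‖ξ‖ / r) ^ (σ - N) := by
        simp only [hψ, hnr]
        rw [indicator_of_mem]
        rw [mem_Ici, le_div_iff₀ hr0]; exact hbig
      calc A * (‖ξ‖ / 2) ^ (σ - N) * ‖h‖ ^ N
          = A * r ^ σ * (0 + 2 ^ (N - σ) * (‖ξ‖ / r) ^ (σ - N)) := by
            rw [hhr, Real.div_rpow hξ0.le (by norm_num), Real.div_rpow hξ0.le hr0.le,
              Real.rpow_sub hr0, Real.rpow_natCast, ← neg_sub σ (N : ℝ),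
              Real.rpow_neg (by norm_num : (0 : ℝ) ≤ 2)]
            have : r ^ σ ≠ 0 := by positivity
            field_simp
            ring
        _ ≤ _ := by rw [hψe]; gcongr
    · push Not at hbig
      rw [fwdDiff_iter_eq_sum_shift]
      refine (norm_sum_le _ _).trans ?_
      have hk : ∀ k ∈ Finset.range (N + 1),
          ‖((-1 : ℤ) ^ (N - k) * (N.choose k : ℤ)) • F (ξ + k • h)‖ ≤
            A * r ^ σ * ((N.choose k : ℝ) * φ (r⁻¹ • (ξ + k • h))) := by
        intro k hk
        have hkN : (k : ℝ) ≤ N := by exact_mod_cast Finset.mem_range_succ_iff.1 hk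
        have hφe : φ (r⁻¹ • (ξ + k • h)) = (‖ξ + k • h‖ / r) ^ σ := by
          simp only [hφ, hnr]
          rw [indicator_of_mem]
          rw [mem_Iio, div_lt_iff₀ hr0]
          calc ‖ξ + k • h‖ ≤ ‖ξ‖ + ‖k • h‖ := norm_add_le _ _
            _ < 2 * N * r + N * r := by
              refine add_lt_add_of_lt_of_le hbig ?_
              rw [← Nat.cast_smul_eq_nsmul ℝ, norm_smul, hhr, Real.norm_of_nonneg (by positivity)]
              gcongr
            _ = _ := by ring
        have h1 : ‖((-1 : ℤ) ^ (N - k) * (N.choose k : ℤ)) • F (ξ + k • h)‖ =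
            (N.choose k : ℝ) * ‖F (ξ + k • h)‖ := by
          rw [← Int.cast_smul_eq_zsmul ℝ, norm_smul]
          simp
        rw [h1, hφe, Real.div_rpow (norm_nonneg _) hr0.le]
        calc _ ≤ (N.choose k : ℝ) * (A * ‖ξ + k • h‖ ^ σ) := by
              gcongr
              exact bF _ (hξ k)
          _ = _ := by field_simp
      refine (Finset.sum_le_sum hk).trans ?_
      rw [← Finset.mul_sum]
      have := ψ0 (r⁻¹ • ξ)
      gcongr
      exact le_add_of_nonneg_right (by positivity)
  have h1 := norm_integral_le_of_norm_le iM bound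
  rw [key, norm_smul, norm_pow, intM] at h1
  have h2 : ‖∫ ξ, Complex.exp ((⟪x, ξ⟫_ℝ : ℂ) * Complex.I) • F ξ‖ ≤ ‖(-2 : ℂ)‖ ^ N *
      ‖∫ ξ, Complex.exp ((⟪x, ξ⟫_ℝ : ℂ) * Complex.I) • F ξ‖ := by
    refine le_mul_of_one_le_left (norm_nonneg _) (one_le_pow₀ ?_)
    simp
  refine (h2.trans h1).trans ?_
  gcongr
  linarith

lemma pkb_weight (k : ℕ) (ε : ℝ) (hε : 0 < ε) :
    ∃ K : ℝ, 0 < K ∧ ∀ y : ℝ, 0 ≤ y → y ^ k * Real.exp (-y ^ ε) ≤ K := by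
  obtain ⟨m, hm⟩ := exists_nat_ge ((k : ℝ) / ε)
  rw [div_le_iff₀ hε] at hm
  refine ⟨m.factorial, by positivity, fun y hy => ?_⟩
  have hfac : (1 : ℝ) ≤ m.factorial := by exact_mod_cast m.factorial_pos
  rw [Real.exp_neg, ← div_eq_mul_inv, div_le_iff₀ (Real.exp_pos _)]
  have hz : 0 ≤ y ^ ε := by positivity
  rcases le_total y 1 with h1 | h1
  · calc y ^ k ≤ 1 := pow_le_one₀ hy h1
      _ = 1 * 1 := by ring
      _ ≤ _ := by
        gcongr
        exact Real.one_le_exp hz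
  · have h2 := Real.pow_div_factorial_le_exp _ hz m
    rw [div_le_iff₀ (by positivity)] at h2
    calc y ^ k = y ^ (k : ℝ) := (Real.rpow_natCast _ _).symm
      _ ≤ y ^ (m * ε) := Real.rpow_le_rpow_of_exponent_le h1 hm
      _ = (y ^ ε) ^ m := by rw [← Real.rpow_natCast, ← Real.rpow_mul hy, mul_comm]
      _ ≤ _ := by linarith

lemma pkb_intH (d : ℕ) (hd : 1 ≤ d) (s ε : ℝ) (hs : -(d : ℝ) < s) (hε : 0 < ε) :
    ∃ I : ℝ, 0 ≤ I ∧ ∀ (E : Type) [NormedAddCommGroup E],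
      ∀ (lam A : ℝ), 0 < lam → ∀ H : EuclideanSpace ℝ (Fin d) → E,
      AEStronglyMeasurable H volume →
      (∀ ξ, ξ ≠ 0 → ‖H ξ‖ ≤ A * ‖ξ‖ ^ s * Real.exp (-(lam ^ ε * ‖ξ‖ ^ ε))) →
      Integrable H ∧ ∫ ξ, ‖H ξ‖ ≤ I * A * lam ^ (-(d : ℝ) - s) := by
  have : Nonempty (Fin d) := ⟨⟨0, hd⟩⟩
  set J : EuclideanSpace ℝ (Fin d) → ℝ := fun ξ => ‖ξ‖ ^ s * Real.exp (-‖ξ‖ ^ ε) with hJ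
  have iJ : Integrable J := pkb_int_exp d hd s ε hs hε
  refine ⟨∫ ξ, J ξ, integral_nonneg fun ξ => by simp only [hJ, Pi.zero_apply]; positivity, ?_⟩
  intro E _ lam A hl H mH bH
  have iM : Integrable (fun ξ => A * lam ^ (-s) * J (lam • ξ)) :=
    (iJ.comp_smul hl.ne').const_mul _
  have h0 : ∀ᵐ ξ : EuclideanSpace ℝ (Fin d), ξ ≠ 0 :=
    compl_mem_ae_iff.2 (measure_singleton 0)
  have hb : ∀ᵐ ξ, ‖H ξ‖ ≤ A * lam ^ (-s) * J (lam • ξ) := by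
    filter_upwards [h0] with ξ hξ
    refine (bH ξ hξ).trans (le_of_eq ?_)
    simp only [hJ, norm_smul, Real.norm_of_nonneg hl.le]
    rw [Real.mul_rpow hl.le (norm_nonneg _), Real.mul_rpow hl.le (norm_nonneg _),
      Real.rpow_neg hl.le]
    have : lam ^ s ≠ 0 := by positivity
    field_simp
  have iH : Integrable H := iM.mono' mH hb
  refine ⟨iH, (integral_mono_ae iH.norm iM hb).trans (le_of_eq ?_)⟩
  rw [integral_const_mul, Measure.integral_comp_smul_of_nonneg _ _ _ (hR := hl.le)]
  simp only [finrank_euclideanSpace, Fintype.card_fin, smul_eq_mul]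
  rw [sub_eq_add_neg, Real.rpow_add hl, Real.rpow_neg hl.le (d : ℝ), Real.rpow_natCast]
  ring

lemma pkb_aesm {d : ℕ} (hd : 1 ≤ d) {E : Type*} [NormedAddCommGroup E]
    {H : EuclideanSpace ℝ (Fin d) → E} (hH : ContinuousOn H {0}ᶜ) :
    AEStronglyMeasurable H volume := by
  have : Nonempty (Fin d) := ⟨⟨0, hd⟩⟩
  have h := hH.aestronglyMeasurable_of_isSeparable (μ := volume) (measurableSet_singleton 0).compl
    (TopologicalSpace.IsSeparable.of_separableSpace _)
  rwa [restrict_compl_singleton] at h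

lemma pkb_core (d k N : ℕ) (hd : 1 ≤ d) (σ ε : ℝ) (hσ : -(d : ℝ) < σ) (hε : 0 < ε)
    (hN : d + σ < N) :
    ∃ C : ℝ, 0 < C ∧ ∀ (E : Type) [NormedAddCommGroup E] [NormedSpace ℂ E],
      ∀ lam A : ℝ, 0 < lam → 0 ≤ A → ∀ H : EuclideanSpace ℝ (Fin d) → E,
      PkbSym N (σ + k) A (fun ξ => Real.exp (-(lam ^ ε * ‖ξ‖ ^ ε))) H →
      ∀ x, ‖∫ ξ, Complex.exp ((⟪x, ξ⟫_ℝ : ℂ) * Complex.I) • H ξ‖ ≤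
        C * A * lam ^ (-(d : ℝ) - (k : ℝ) - σ) * (1 + ‖x‖ / lam) ^ (-((d : ℝ) + σ)) := by
  obtain ⟨K, hK, bK⟩ := pkb_weight k ε hε
  obtain ⟨I, hI, bI⟩ := pkb_intH d hd (σ + k) ε
    (by have : (0 : ℝ) ≤ k := by positivity
        linarith) hε
  obtain ⟨D, hD, bD⟩ := pkb_decay d N hd σ hσ hN
  refine ⟨2 ^ (d + σ) * (I + D * K), by positivity, ?_⟩
  intro E _ _ lam A hl hA H hH x
  have b0 : ∀ ξ, ξ ≠ 0 → ‖H ξ‖ ≤ A * ‖ξ‖ ^ (σ + k) * Real.exp (-(lam ^ ε * ‖ξ‖ ^ ε)) := by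
    intro ξ hξ
    simpa using hH.2 0 (by omega) ξ hξ
  obtain ⟨iH, nH⟩ := bI E lam A hl H (pkb_aesm hd hH.1.continuousOn) b0
  have hM : 0 < (d : ℝ) + σ := by linarith
  rcases le_or_gt ‖x‖ lam with hx | hx
  · have h1 : ‖∫ ξ, Complex.exp ((⟪x, ξ⟫_ℝ : ℂ) * Complex.I) • H ξ‖ ≤ ∫ ξ, ‖H ξ‖ := by
      refine (norm_integral_le_integral_norm _).trans (le_of_eq ?_)
      simp only [norm_smul, pkb_norm_e, one_mul]
    have h2 : (2 : ℝ) ^ (-((d : ℝ) + σ)) ≤ (1 + ‖x‖ / lam) ^ (-((d : ℝ) + σ)) := by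
      refine Real.rpow_le_rpow_of_nonpos (by positivity) ?_ (by linarith)
      have : ‖x‖ / lam ≤ 1 := (div_le_one hl).2 hx
      linarith
    calc _ ≤ I * A * lam ^ (-(d : ℝ) - (σ + k)) := h1.trans nH
      _ = 2 ^ (d + σ) * I * A * lam ^ (-(d : ℝ) - (k : ℝ) - σ) * 2 ^ (-((d : ℝ) + σ)) := by
        rw [Real.rpow_neg (by norm_num : (0 : ℝ) ≤ 2),
          show -(d : ℝ) - (σ + k) = -(d : ℝ) - (k : ℝ) - σ by ring]
        have : (2 : ℝ) ^ ((d : ℝ) + σ) ≠ 0 := by positivity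
        field_simp
      _ ≤ _ := by
        gcongr
        exact le_add_of_nonneg_right (by positivity)
  · have hx0 : 0 < ‖x‖ := hl.trans hx
    have conv : ∀ n : ℕ, ∀ ξ : EuclideanSpace ℝ (Fin d), ξ ≠ 0 →
        A * ‖ξ‖ ^ (σ + k - n) * Real.exp (-(lam ^ ε * ‖ξ‖ ^ ε)) ≤
          A * K * lam ^ (-(k : ℝ)) * ‖ξ‖ ^ (σ - n) := by
      intro n ξ hξ
      have hξ0 : 0 < ‖ξ‖ := norm_pos_iff.2 hξ
      have h1 := bK (lam * ‖ξ‖) (by positivity)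
      rw [mul_pow, Real.mul_rpow hl.le hξ0.le] at h1
      have e1 : ‖ξ‖ ^ (σ + k - n) = ‖ξ‖ ^ (σ - n) * ‖ξ‖ ^ k := by
        rw [← Real.rpow_natCast, ← Real.rpow_add hξ0]
        congr 1; ring
      rw [e1, Real.rpow_neg hl.le, Real.rpow_natCast]
      calc _ = A * (lam ^ k)⁻¹ * ‖ξ‖ ^ (σ - n) *
            (lam ^ k * ‖ξ‖ ^ k * Real.exp (-(lam ^ ε * ‖ξ‖ ^ ε))) := by field_simp
        _ ≤ A * (lam ^ k)⁻¹ * ‖ξ‖ ^ (σ - n) * K := by gcongr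
        _ = _ := by ring
    have h1 := bD E (A * K * lam ^ (-(k : ℝ))) H (by positivity) iH hH.1
      (fun ξ hξ => (b0 ξ hξ).trans (by simpa using conv 0 ξ hξ))
      (fun ξ hξ => (hH.2 N le_rfl ξ hξ).trans (conv N ξ hξ)) x (norm_pos_iff.1 hx0)
    have h2 : (2 * (‖x‖ / lam)) ^ (-((d : ℝ) + σ)) ≤ (1 + ‖x‖ / lam) ^ (-((d : ℝ) + σ)) := by
      refine Real.rpow_le_rpow_of_nonpos (by positivity) ?_ (by linarith)
      have : 1 ≤ ‖x‖ / lam := (one_le_div hl).2 hx.le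
      linarith
    calc _ ≤ _ := h1
      _ = 2 ^ (d + σ) * (D * K) * A * lam ^ (-(d : ℝ) - (k : ℝ) - σ) *
          (2 * (‖x‖ / lam)) ^ (-((d : ℝ) + σ)) := by
        rw [Real.mul_rpow (by norm_num) (by positivity), Real.div_rpow hx0.le hl.le,
          show -(d : ℝ) - (k : ℝ) - σ = -(k : ℝ) + -((d : ℝ) + σ) by ring, Real.rpow_add hl,
          Real.rpow_neg (by norm_num : (0 : ℝ) ≤ 2)]
        have : (2 : ℝ) ^ ((d : ℝ) + σ) ≠ 0 := by positivity
        have : lam ^ (-((d : ℝ) + σ)) ≠ 0 := by positivity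
        field_simp
      _ ≤ _ := by
        gcongr
        exact le_add_of_nonneg_left (by positivity)

/-- Pointwise decay bounds for `G(x) = ∫ F(ξ) e^{i x·ξ} dξ` when the
derivatives of `F` satisfy symbol-type bounds with exponential decay. -/
theorem pointwise_kernel_bound
    (d k : ℕ) (hd : 1 ≤ d) (σ ε : ℝ) (hσ : -(d : ℝ) < σ) (hε : 0 < ε) :
    ∃ C : ℝ, 0 < C ∧
      ∀ (E : Type) [NormedAddCommGroup E] [NormedSpace ℂ E] [FiniteDimensional ℂ E],
      ∀ lam C₀ : ℝ, 0 < lam → 0 ≤ C₀ →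
      ∀ F : EuclideanSpace ℝ (Fin d) → E,
        ContDiffOn ℝ (((d : ℤ) + ⌊σ⌋ + 1).toNat) F {0}ᶜ →
        (∀ n : ℕ, (n : ℤ) ≤ (d : ℤ) + ⌊σ⌋ + 1 →
          ∀ ξ : EuclideanSpace ℝ (Fin d), ξ ≠ 0 →
            ‖iteratedFDerivWithin ℝ n F {0}ᶜ ξ‖ ≤
              C₀ * ‖ξ‖ ^ (σ - (n : ℝ)) * Real.exp (-(lam ^ ε * ‖ξ‖ ^ ε))) →
        ∀ G : EuclideanSpace ℝ (Fin d) → E,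
          (G = fun x => ∫ ξ : EuclideanSpace ℝ (Fin d),
              Complex.exp ((⟪x, ξ⟫_ℝ : ℂ) * Complex.I) • F ξ) →
          ContDiff ℝ k G ∧
            ∀ x, ‖iteratedFDeriv ℝ k G x‖ ≤
              C * C₀ * lam ^ (-(d : ℝ) - (k : ℝ) - σ) *
                (1 + ‖x‖ / lam) ^ (-((d : ℝ) + σ)) := by
  have hfl : -(d : ℤ) ≤ ⌊σ⌋ := Int.le_floor.2 (by push_cast; exact hσ.le)
  obtain ⟨N, hNe⟩ : ∃ N : ℕ, N = ((d : ℤ) + ⌊σ⌋ + 1).toNat := ⟨_, rfl⟩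
  have hNz : (N : ℤ) = (d : ℤ) + ⌊σ⌋ + 1 := by omega
  have hN : d + σ < N := by
    have h1 : (N : ℝ) = (d : ℝ) + ⌊σ⌋ + 1 := by exact_mod_cast hNz
    have := Int.lt_floor_add_one σ
    linarith
  obtain ⟨C, hC, bC⟩ := pkb_core d k N hd σ ε hσ hε hN
  refine ⟨C * (1 + N) ^ k, by positivity, ?_⟩
  intro E _ _ _ lam C₀ hl hC₀ F cF bF G hG
  rw [← hNe] at cF
  have sF : PkbSym N σ C₀ (fun ξ => Real.exp (-(lam ^ ε * ‖ξ‖ ^ ε))) F :=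
    ⟨cF, fun n hn ξ hξ => bF n (by omega) ξ hξ⟩
  have mF : AEStronglyMeasurable F volume := pkb_aesm hd cF.continuousOn
  have b0 : ∀ ξ, ξ ≠ 0 → ‖F ξ‖ ≤ C₀ * ‖ξ‖ ^ σ * Real.exp (-(lam ^ ε * ‖ξ‖ ^ ε)) := by
    intro ξ hξ
    simpa using sF.2 0 (by omega) ξ hξ
  have iF : ∀ n : ℕ, Integrable (fun ξ => ‖ξ‖ ^ n * ‖F ξ‖) := by
    intro n
    obtain ⟨I, _, bI⟩ := pkb_intH d hd (σ + n) ε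
      (by have : (0 : ℝ) ≤ n := by positivity
          linarith) hε
    refine (bI ℝ lam C₀ hl (fun ξ => ‖ξ‖ ^ n * ‖F ξ‖) (AEStronglyMeasurable.mul (by fun_prop) mF.norm) ?_).1
    intro ξ hξ
    have hξ0 : 0 < ‖ξ‖ := norm_pos_iff.2 hξ
    rw [Real.norm_of_nonneg (by positivity), Real.rpow_add hξ0, Real.rpow_natCast]
    calc _ ≤ ‖ξ‖ ^ n * (C₀ * ‖ξ‖ ^ σ * Real.exp (-(lam ^ ε * ‖ξ‖ ^ ε))) := by
          gcongr
          exact b0 ξ hξ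
      _ = _ := by ring
  set L : EuclideanSpace ℝ (Fin d) →L[ℝ] EuclideanSpace ℝ (Fin d) →L[ℝ] ℝ :=
    (-(2 * Real.pi)⁻¹) • innerSL ℝ with hL
  have hLa : ∀ v w, L v w = -(2 * Real.pi)⁻¹ * ⟪w, v⟫_ℝ := by
    intro v w
    rw [real_inner_comm]
    simp [hL]
    rfl
  have hchar : ∀ v w, ((Real.fourierChar (-(L v w)) : Circle) : ℂ) =
      Complex.exp ((⟪w, v⟫_ℝ : ℂ) * Complex.I) := by
    intro v w
    rw [Real.fourierChar_apply, hLa]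
    congr 3
    have := Real.pi_ne_zero
    field_simp
  have hFT : ∀ {E' : Type} [NormedAddCommGroup E'] [NormedSpace ℂ E']
      (f : EuclideanSpace ℝ (Fin d) → E') (w : EuclideanSpace ℝ (Fin d)),
      VectorFourier.fourierIntegral Real.fourierChar volume L.toLinearMap₁₂ f w =
        ∫ ξ, Complex.exp ((⟪w, ξ⟫_ℝ : ℂ) * Complex.I) • f ξ := by
    intro E' _ _ f w
    rw [VectorFourier.fourierIntegral]
    congr 1
    ext v
    rw [← hchar]
    rfl
  have hGF : G = VectorFourier.fourierIntegral Real.fourierChar volume L.toLinearMap₁₂ F := by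
    rw [hG]
    ext w
    exact (hFT F w).symm
  refine ⟨?_, ?_⟩
  · rw [hGF]
    exact VectorFourier.contDiff_fourierIntegral (N := (k : ℕ∞)) L fun n _ => iF n
  · intro x
    refine ContinuousMultilinearMap.opNorm_le_bound (by positivity) fun m => ?_
    rw [hGF, VectorFourier.iteratedFDeriv_fourierIntegral (N := (k : ℕ∞)) L (fun n _ => iF n) mF
      le_rfl, Real.fourierIntegral_continuousMultilinearMap_apply'
        (VectorFourier.integrable_fourierPowSMulRight L (iF k) mF), hFT]
    have hS := pkb_prod N σ C₀ _ F (fun ξ => (Real.exp_pos _).le) hC₀ sF k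
      (fun i => innerSL ℝ (m i)) (fun i => ‖m i‖) (fun i => by simp)
    have hp : 0 ≤ ∏ i, ‖m i‖ := Finset.prod_nonneg fun i _ => norm_nonneg _
    have hb := bC E lam _ hl (by positivity) _ hS x
    have e : ∀ ξ, Complex.exp ((⟪x, ξ⟫_ℝ : ℂ) * Complex.I) •
        VectorFourier.fourierPowSMulRight L F ξ k m = (Complex.I ^ k) •
        (Complex.exp ((⟪x, ξ⟫_ℝ : ℂ) * Complex.I) • ((∏ i, innerSL ℝ (m i) ξ) • F ξ)) := by
      intro ξ
      rw [smul_comm (Complex.I ^ k)]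
      congr 1
      rw [VectorFourier.fourierPowSMulRight_apply]
      simp only [hLa, innerSL_apply_apply, Finset.prod_mul_distrib, Finset.prod_const,
        Finset.card_univ, Fintype.card_fin]
      rw [mul_smul, ← Complex.coe_smul ((-(2 * Real.pi)⁻¹) ^ k), smul_smul]
      congr 1
      push_cast
      rw [← mul_pow]
      congr 1
      have : (Real.pi : ℂ) ≠ 0 := by exact_mod_cast Real.pi_ne_zero
      field_simp
    simp only [e]
    rw [integral_smul, norm_smul, norm_pow, Complex.norm_I, one_pow, one_mul]
    refine hb.trans (le_of_eq ?_)
    ring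
end

section
/- Let d ≥ 1 be an integer, let σ > 0, λ > 0, ε > 0, C₀ ≥ 0. Suppose F : ℝ^d → E (E a finite-dimensional complex normed space) is (d + ⌊σ⌋ + 1)-times continuously differentiable on ℝ^d \ {0} and satisfies ‖∇ⁿF(ξ)‖ ≤ C₀ |ξ|^{σ−n} exp(−λ^ε |ξ|^ε) for every integer 0 ≤ n ≤ d + ⌊σ⌋ + 1 and every ξ ≠ 0, and define G(x) := ∫_{ℝ^d} F(ξ) e^{i x·ξ} dξ. Then for every k ∈ ℕ, every σ′ with 0 ≤ σ′ < min{σ,1}, and every α ∈ ℝ^d, there is a constant C depending only on d, k, σ, σ′ and ε such that ∫_{ℝ^d} ‖δ_α ∇^k G(x)‖ · |x|^{σ′} dx ≤ C C₀ (|α|^{σ′} / λ^{k+σ}) · min{1, |α|/λ}^{1−σ′}. -/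
open MeasureTheory Set
open scoped InnerProductSpace

lemma aux_nontriv (d : ℕ) (hd : 1 ≤ d) : Nontrivial (EuclideanSpace ℝ (Fin d)) := by
  have : Nonempty (Fin d) := ⟨⟨0, hd⟩⟩
  infer_instance

/-- boundedness of `u^p exp(-u^ε)`. -/
lemma aux_sup (p ε : ℝ) (hp : 0 ≤ p) (hε : 0 < ε) :
    ∃ c : ℝ, 0 < c ∧ ∀ u : ℝ, 0 < u → u ^ p * Real.exp (-(u ^ ε)) ≤ c := by
  obtain ⟨n, hn⟩ := exists_nat_ge (p / ε)
  refine ⟨n.factorial + 1, by positivity, fun u hu => ?_⟩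
  have hf : (1 : ℝ) ≤ n.factorial := by exact_mod_cast Nat.one_le_iff_ne_zero.mpr n.factorial_ne_zero
  have he : Real.exp (-(u ^ ε)) ≤ 1 := by
    rw [Real.exp_le_one_iff]; have := Real.rpow_nonneg hu.le ε; linarith
  rcases le_total u 1 with h1 | h1
  · have h2 : u ^ p ≤ 1 := Real.rpow_le_one hu.le h1 hp
    have h3 : 0 ≤ u ^ p := Real.rpow_nonneg hu.le p
    have := mul_le_mul h2 he (Real.exp_pos _).le zero_le_one
    linarith
  · have hw : 1 ≤ u ^ ε := Real.one_le_rpow h1 hε.le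
    have h2 : u ^ p = (u ^ ε) ^ (p / ε) := by
      rw [← Real.rpow_mul hu.le]; congr 1; field_simp
    have h3 : (u ^ ε) ^ (p / ε) ≤ (u ^ ε) ^ n := by
      rw [← Real.rpow_natCast]; exact Real.rpow_le_rpow_of_exponent_le hw hn
    have h4 := Real.pow_div_factorial_le_exp (u ^ ε) (by linarith) n
    rw [div_le_iff₀ (by linarith)] at h4
    rw [h2, Real.exp_neg]
    rw [← div_eq_mul_inv, div_le_iff₀ (Real.exp_pos _)]
    have := Real.exp_pos (u ^ ε)
    nlinarith

lemma aux_scale (τ s ε : ℝ) (hs : s ≤ τ) (hε : 0 < ε) :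
    ∃ c : ℝ, 0 < c ∧ ∀ lam ρ : ℝ, 0 < lam → 0 < ρ →
      ρ ^ τ * Real.exp (-(lam ^ ε * ρ ^ ε)) ≤ c * lam ^ (s - τ) * ρ ^ s := by
  obtain ⟨c, hc, h⟩ := aux_sup (τ - s) ε (by linarith) hε
  refine ⟨c, hc, fun lam ρ hl hρ => ?_⟩
  have h1 := h (lam * ρ) (by positivity)
  rw [Real.mul_rpow hl.le hρ.le, Real.mul_rpow hl.le hρ.le] at h1
  have e1 : ρ ^ τ = ρ ^ (τ - s) * ρ ^ s := by rw [← Real.rpow_add hρ]; congr 1; ring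
  have e2 : lam ^ (s - τ) * lam ^ (τ - s) = 1 := by
    rw [← Real.rpow_add hl]; simp
  have h2 := mul_le_mul_of_nonneg_left h1
    (by positivity : 0 ≤ lam ^ (s - τ) * ρ ^ s)
  calc ρ ^ τ * Real.exp (-(lam ^ ε * ρ ^ ε))
      = (lam ^ (s - τ) * lam ^ (τ - s)) * (ρ ^ (τ - s) * ρ ^ s) * Real.exp (-(lam ^ ε * ρ ^ ε)) := by
        rw [e2, e1, one_mul]
    _ = lam ^ (s - τ) * ρ ^ s * (lam ^ (τ - s) * ρ ^ (τ - s) * Real.exp (-(lam ^ ε * ρ ^ ε))) := by ring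
    _ ≤ _ := h2
    _ = _ := by ring

lemma aux_radial_eq (d : ℕ) (hd : 1 ≤ d) (s y : ℝ) (hy : 0 < y) (S : Set ℝ) :
    y ^ (d - 1) • S.indicator (fun r : ℝ => r ^ s) y
      = S.indicator (fun r : ℝ => r ^ (s + d - 1)) y := by
  by_cases h : y ∈ S
  · simp only [indicator_of_mem h, smul_eq_mul]
    rw [← Real.rpow_natCast, ← Real.rpow_add hy, Nat.cast_sub hd]
    congr 1; push_cast; ring
  · simp [indicator_of_notMem h]

lemma aux_inner (d : ℕ) (hd : 1 ≤ d) (s : ℝ) (hs : -(d : ℝ) < s) :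
    ∃ c : ℝ, 0 < c ∧ ∀ R : ℝ, 0 < R →
      Integrable (fun x : EuclideanSpace ℝ (Fin d) => (Iic R).indicator (fun r : ℝ => r ^ s) ‖x‖) ∧
      ∫ x : EuclideanSpace ℝ (Fin d), (Iic R).indicator (fun r : ℝ => r ^ s) ‖x‖
        ≤ c * R ^ (d + s) := by
  have := aux_nontriv d hd
  have hds : 0 < d + s := by linarith
  set b := (volume : Measure (EuclideanSpace ℝ (Fin d))).real (Metric.ball 0 1) with hb
  have hb0 : 0 ≤ b := measureReal_nonneg
  refine ⟨d * b / (d + s) + 1, by positivity, fun R hR => ⟨?_, ?_⟩⟩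
  · rw [integrable_fun_norm_addHaar volume, finrank_euclideanSpace_fin]
    refine (integrableOn_congr_fun (s := Ioi (0 : ℝ)) (fun y hy => aux_radial_eq d hd s y hy (Iic R)) measurableSet_Ioi).2 ?_
    rw [IntegrableOn, integrable_indicator_iff measurableSet_Iic, IntegrableOn,
      Measure.restrict_restrict measurableSet_Iic, inter_comm, Ioi_inter_Iic]
    have := (intervalIntegral.intervalIntegrable_rpow' (a := 0) (b := R) (r := s + d - 1) (by linarith))
    exact (intervalIntegrable_iff_integrableOn_Ioc_of_le hR.le).1 this
  · rw [integral_fun_norm_addHaar volume, finrank_euclideanSpace_fin]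
    rw [setIntegral_congr_fun measurableSet_Ioi (fun y hy => aux_radial_eq d hd s y hy (Iic R))]
    rw [setIntegral_indicator measurableSet_Iic, Ioi_inter_Iic,
      ← intervalIntegral.integral_of_le hR.le, integral_rpow (Or.inl (by linarith))]
    rw [Real.zero_rpow (by linarith)]
    have e : s + d - 1 + 1 = d + s := by ring
    rw [e, ← hb, nsmul_eq_mul, smul_eq_mul, sub_zero]
    have : 0 ≤ R ^ (d + s) := by positivity
    calc _ = d * b / (d + s) * R ^ (d + s) := by ring
      _ ≤ _ := by nlinarith

lemma aux_outer (d : ℕ) (hd : 1 ≤ d) (s : ℝ) (hs : s < -(d : ℝ)) :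
    ∃ c : ℝ, 0 < c ∧ ∀ R : ℝ, 0 < R →
      Integrable (fun x : EuclideanSpace ℝ (Fin d) => (Ioi R).indicator (fun r : ℝ => r ^ s) ‖x‖) ∧
      ∫ x : EuclideanSpace ℝ (Fin d), (Ioi R).indicator (fun r : ℝ => r ^ s) ‖x‖
        ≤ c * R ^ (d + s) := by
  have := aux_nontriv d hd
  have hds : 0 < -(d + s) := by linarith
  set b := (volume : Measure (EuclideanSpace ℝ (Fin d))).real (Metric.ball 0 1) with hb
  have hb0 : 0 ≤ b := measureReal_nonneg
  refine ⟨d * b / (-(d + s)) + 1, by positivity, fun R hR => ⟨?_, ?_⟩⟩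
  · rw [integrable_fun_norm_addHaar volume, finrank_euclideanSpace_fin]
    refine (integrableOn_congr_fun (s := Ioi (0 : ℝ)) (fun y hy => aux_radial_eq d hd s y hy (Ioi R)) measurableSet_Ioi).2 ?_
    rw [IntegrableOn, integrable_indicator_iff measurableSet_Ioi, IntegrableOn,
      Measure.restrict_restrict measurableSet_Ioi, Ioi_inter_Ioi, sup_eq_left.2 hR.le]
    exact integrableOn_Ioi_rpow_of_lt (by linarith) hR
  · rw [integral_fun_norm_addHaar volume, finrank_euclideanSpace_fin]
    rw [setIntegral_congr_fun measurableSet_Ioi (fun y hy => aux_radial_eq d hd s y hy (Ioi R))]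
    rw [setIntegral_indicator measurableSet_Ioi, Ioi_inter_Ioi, sup_eq_right.2 hR.le,
      integral_Ioi_rpow_of_lt (by linarith) hR]
    have e : s + d - 1 + 1 = d + s := by ring
    rw [e, ← hb, nsmul_eq_mul, smul_eq_mul]
    have : 0 ≤ R ^ (d + s) := by positivity
    calc _ = d * b / (-(d + s)) * R ^ (d + s) := by rw [div_neg]; ring
      _ ≤ _ := by nlinarith

/-- integrals of the weight -/
lemma aux_weight (d : ℕ) (hd : 1 ≤ d) (τ ε : ℝ) (hτ : 0 < τ) (hε : 0 < ε) :
    ∃ c : ℝ, 0 < c ∧ ∀ lam : ℝ, 0 < lam →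
      Integrable (fun x : EuclideanSpace ℝ (Fin d) => ‖x‖ ^ τ * Real.exp (-(lam ^ ε * ‖x‖ ^ ε))) ∧
      ∫ x : EuclideanSpace ℝ (Fin d), ‖x‖ ^ τ * Real.exp (-(lam ^ ε * ‖x‖ ^ ε))
        ≤ c * lam ^ (-τ - d) := by
  have hd' : (1 : ℝ) ≤ d := by exact_mod_cast hd
  obtain ⟨c1, hc1, h1⟩ := aux_scale τ 0 ε hτ.le hε
  obtain ⟨c2, hc2, h2⟩ := aux_scale τ (-d - 1) ε (by linarith) hε
  obtain ⟨c3, hc3, h3⟩ := aux_inner d hd 0 (by linarith)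
  obtain ⟨c4, hc4, h4⟩ := aux_outer d hd (-d - 1) (by linarith)
  refine ⟨c1 * c3 + c2 * c4, by positivity, fun lam hl => ?_⟩
  have hR : 0 < lam⁻¹ := by positivity
  set g : EuclideanSpace ℝ (Fin d) → ℝ := fun x =>
    c1 * lam ^ (0 - τ) * (Iic lam⁻¹).indicator (fun r : ℝ => r ^ (0 : ℝ)) ‖x‖ +
    c2 * lam ^ (-d - 1 - τ) * (Ioi lam⁻¹).indicator (fun r : ℝ => r ^ (-d - 1 : ℝ)) ‖x‖ with hg
  have hgi1 := (h3 _ hR).1.const_mul (c1 * lam ^ (0 - τ))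
  have hgi2 := (h4 _ hR).1.const_mul (c2 * lam ^ (-d - 1 - τ))
  have hgi : Integrable g := hgi1.add hgi2
  have hle : ∀ x : EuclideanSpace ℝ (Fin d),
      ‖x‖ ^ τ * Real.exp (-(lam ^ ε * ‖x‖ ^ ε)) ≤ g x := by
    intro x
    rcases eq_or_ne x 0 with rfl | hx
    · rw [hg]
      simp only [norm_zero]
      rw [Real.zero_rpow hτ.ne', zero_mul,
        indicator_of_mem (show (0 : ℝ) ∈ Iic lam⁻¹ from hR.le),
        indicator_of_notMem (show (0 : ℝ) ∉ Ioi lam⁻¹ from not_lt.2 hR.le)]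
      simp; positivity
    · have hx' : 0 < ‖x‖ := norm_pos_iff.2 hx
      rcases le_or_gt ‖x‖ lam⁻¹ with h | h
      · have := h1 lam ‖x‖ hl hx'
        simp only [hg]
        rw [indicator_of_mem (show ‖x‖ ∈ Iic lam⁻¹ from h),
          indicator_of_notMem (show ‖x‖ ∉ Ioi lam⁻¹ from not_lt.2 h)]
        simpa using this
      · have := h2 lam ‖x‖ hl hx'
        simp only [hg]
        rw [indicator_of_notMem (show ‖x‖ ∉ Iic lam⁻¹ from not_le.2 h),
          indicator_of_mem (show ‖x‖ ∈ Ioi lam⁻¹ from h)]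
        simpa using this
  refine ⟨hgi.mono' (by fun_prop) (ae_of_all _ fun x => ?_), ?_⟩
  · rw [Real.norm_of_nonneg (by positivity)]; exact hle x
  · calc _ ≤ ∫ x, g x := integral_mono_of_nonneg (ae_of_all _ fun x => by positivity) hgi
          (ae_of_all _ hle)
      _ = c1 * lam ^ (0 - τ) * (∫ x : EuclideanSpace ℝ (Fin d), (Iic lam⁻¹).indicator (fun r : ℝ => r ^ (0 : ℝ)) ‖x‖)
          + c2 * lam ^ (-d - 1 - τ) * (∫ x : EuclideanSpace ℝ (Fin d), (Ioi lam⁻¹).indicator (fun r : ℝ => r ^ (-d - 1 : ℝ)) ‖x‖) := by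
        rw [hg, integral_add hgi1 hgi2, integral_const_mul, integral_const_mul]
      _ ≤ c1 * lam ^ (0 - τ) * (c3 * lam⁻¹ ^ (d + 0 : ℝ)) +
          c2 * lam ^ (-d - 1 - τ) * (c4 * lam⁻¹ ^ (d + (-d - 1) : ℝ)) := by
        gcongr
        · exact (h3 _ hR).2
        · exact (h4 _ hR).2
      _ = _ := by
        have e : ∀ a b : ℝ, lam ^ a * lam⁻¹ ^ b = lam ^ (a - b) := by
          intro a b
          rw [Real.inv_rpow hl.le, ← Real.rpow_neg hl.le, ← Real.rpow_add hl]; rfl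
        have e1 := e (0 - τ) (d + 0)
        have e2 := e (-d - 1 - τ) (d + (-d - 1))
        rw [show 0 - τ - (d + 0) = -τ - d by ring] at e1
        rw [show -d - 1 - τ - (d + (-d - 1)) = -τ - d by ring] at e2
        linear_combination c1 * c3 * e1 + c2 * c4 * e2

lemma aux_ind_nonneg {V : Type*} [NormedAddCommGroup V] (S : Set ℝ) (s : ℝ) (η : V) :
    0 ≤ S.indicator (fun r : ℝ => r ^ s) ‖η‖ := by
  by_cases h : ‖η‖ ∈ S
  · rw [indicator_of_mem h]; positivity
  · rw [indicator_of_notMem h]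

lemma aux_fwdDiff {V E : Type*} [NormedAddCommGroup V] [NormedSpace ℝ V]
    [NormedAddCommGroup E] [NormedSpace ℝ E] (h : V) (N : ℕ) :
    ∀ (U : Set V) (f : V → E) (M : ℝ), IsOpen U → Convex ℝ U → ContDiffOn ℝ N f U →
      (∀ x ∈ U, ‖iteratedFDeriv ℝ N f x‖ ≤ M) →
      ∀ η : V, (∀ j : ℕ, j ≤ N → η + j • h ∈ U) → ‖(fwdDiff h)^[N] f η‖ ≤ ‖h‖ ^ N * M := by
  induction N with
  | zero =>
    intro U f M _ _ _ hM η hη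
    have := hM η (by simpa using hη 0 le_rfl)
    simpa using this
  | succ N ih =>
    intro U f M hU hUc hf hM η hη
    rw [Function.iterate_succ_apply]
    have hVo : IsOpen {x : V | x + h ∈ U} := hU.preimage (continuous_id.add continuous_const)
    have hVc : Convex ℝ {x : V | x + h ∈ U} := hUc.translate_preimage_left h
    have hfat : ∀ x ∈ U, ContDiffAt ℝ ((N + 1 : ℕ) : WithTop ℕ∞) f x :=
      fun x hx => hf.contDiffAt (hU.mem_nhds hx)
    have hlt : ((N : ℕ) : WithTop ℕ∞) < ((N + 1 : ℕ) : WithTop ℕ∞) := by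
      exact_mod_cast Nat.lt_succ_self N
    have hc2 : ∀ x, x + h ∈ U → ContDiffAt ℝ N (fun z => f (z + h)) x := by
      intro x hx
      have h1 : ContDiffAt ℝ N f (x + h) := (hfat _ hx).of_le hlt.le
      exact h1.comp x (contDiffAt_id.add contDiffAt_const)
    have key := ih (U ∩ {x : V | x + h ∈ U}) (fwdDiff h f) (M * ‖h‖) (hU.inter hVo)
      (hUc.inter hVc) ?_ ?_ η ?_
    · calc _ ≤ _ := key
        _ = _ := by ring
    · intro x hx
      exact ((hc2 x hx.2).sub ((hfat _ hx.1).of_le hlt.le)).contDiffWithinAt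
    · intro x hx
      have e : fwdDiff h f = (fun z => f (z + h)) - f := rfl
      rw [e, iteratedFDeriv_sub_apply (hc2 x hx.2) ((hfat _ hx.1).of_le hlt.le),
        iteratedFDeriv_comp_add_right]
      have := Convex.norm_image_sub_le_of_norm_fderiv_le (𝕜 := ℝ) (f := iteratedFDeriv ℝ N f)
        (C := M) (s := U) (x := x) (y := x + h)
        (fun y hy => (hfat y hy).differentiableAt_iteratedFDeriv hlt)
        (fun y hy => by rw [norm_fderiv_iteratedFDeriv]; exact hM y hy) hUc hx.1 hx.2
      simpa using this
    · intro j hj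
      refine ⟨hη j (by omega), ?_⟩
      have := hη (j + 1) (by omega)
      rw [add_smul, one_smul, ← add_assoc] at this
      exact this

/-- multiplication rule for the oscillating integral of a difference -/
lemma aux_osc {V E : Type*} [NormedAddCommGroup V] [InnerProductSpace ℝ V] [MeasurableSpace V]
    [BorelSpace V] [FiniteDimensional ℝ V]
    [NormedAddCommGroup E] [NormedSpace ℂ E] (x h : V) (hx : ⟪x, h⟫_ℝ = Real.pi) (N : ℕ) :
    ∀ f : V → E, Integrable f → Integrable ((fwdDiff h)^[N] f) ∧
      ∫ ξ, Complex.exp ((⟪x, ξ⟫_ℝ : ℂ) * Complex.I) • (fwdDiff h)^[N] f ξ =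
        (-2 : ℂ) ^ N • ∫ ξ, Complex.exp ((⟪x, ξ⟫_ℝ : ℂ) * Complex.I) • f ξ := by
  have hexp : ∀ g : V → E, Integrable g →
      Integrable (fun ξ => Complex.exp ((⟪x, ξ⟫_ℝ : ℂ) * Complex.I) • g ξ) := by
    intro g hg
    refine hg.norm.mono' (AEStronglyMeasurable.smul (by
      apply Continuous.aestronglyMeasurable; fun_prop) hg.1) (ae_of_all _ fun ξ => ?_)
    rw [norm_smul, Complex.norm_exp_ofReal_mul_I, one_mul]
  induction N with
  | zero => intro f hf; simpa using hf
  | succ N ih =>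
    intro f hf
    rw [Function.iterate_succ_apply]
    have hf2 : Integrable (fun ξ => f (ξ + h)) := hf.comp_add_right h
    have hd : Integrable (fwdDiff h f) := hf2.sub hf
    refine ⟨(ih _ hd).1, ?_⟩
    rw [(ih _ hd).2, pow_succ, mul_smul]
    congr 1
    have e1 : ∫ ξ, Complex.exp ((⟪x, ξ⟫_ℝ : ℂ) * Complex.I) • fwdDiff h f ξ =
        (∫ ξ, Complex.exp ((⟪x, ξ⟫_ℝ : ℂ) * Complex.I) • f (ξ + h)) -
        ∫ ξ, Complex.exp ((⟪x, ξ⟫_ℝ : ℂ) * Complex.I) • f ξ := by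
      rw [← integral_sub (hexp _ hf2) (hexp _ hf)]
      simp only [fwdDiff, smul_sub]
    have e2 : ∫ ξ, Complex.exp ((⟪x, ξ⟫_ℝ : ℂ) * Complex.I) • f (ξ + h) =
        - ∫ ξ, Complex.exp ((⟪x, ξ⟫_ℝ : ℂ) * Complex.I) • f ξ := by
      rw [← integral_add_right_eq_self
        (fun ξ => Complex.exp ((⟪x, ξ⟫_ℝ : ℂ) * Complex.I) • f ξ) h, ← integral_neg]
      congr 1
      ext ξ
      rw [inner_add_right, hx]
      push_cast
      rw [add_mul, Complex.exp_add, Complex.exp_pi_mul_I]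
      simp
    rw [e1, e2]
    module

lemma aux_decay0 (d : ℕ) (hd : 1 ≤ d) (a : ℝ) (ha0 : -(d : ℝ) < a) (ha1 : a < 1) :
    ∃ C : ℝ, 0 < C ∧ ∀ (E : Type) [NormedAddCommGroup E] [NormedSpace ℂ E],
      ∀ (H : EuclideanSpace ℝ (Fin d) → E) (M : ℝ), 0 ≤ M → Integrable H →
      ContDiffOn ℝ ((d + 1 : ℕ) : WithTop ℕ∞) H {0}ᶜ →
      (∀ ξ, ξ ≠ 0 → ‖H ξ‖ ≤ M * ‖ξ‖ ^ a) →
      (∀ ξ, ξ ≠ 0 → ‖iteratedFDeriv ℝ (d + 1) H ξ‖ ≤ M * ‖ξ‖ ^ (a - (d + 1 : ℕ))) →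
      ∀ x : EuclideanSpace ℝ (Fin d), x ≠ 0 →
        ‖∫ ξ, Complex.exp ((⟪x, ξ⟫_ℝ : ℂ) * Complex.I) • H ξ‖ ≤ C * M * ‖x‖ ^ (-d - a) := by
  have := aux_nontriv d hd
  obtain ⟨c1, hc1, h1⟩ := aux_inner d hd a ha0
  obtain ⟨c2, hc2, h2⟩ := aux_outer d hd (a - (d + 1 : ℕ)) (by push_cast; linarith)
  set N := d + 1 with hN
  have hNpos : (0 : ℝ) < N := by positivity
  have hNneg : a - (N : ℝ) < 0 := by rw [hN]; push_cast; linarith [(Nat.cast_nonneg d : (0 : ℝ) ≤ d)]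
  have hpi := Real.pi_pos
  refine ⟨(2 ^ N * (c1 * (3 * N) ^ (d + a)) +
    (2 : ℝ)⁻¹ ^ (a - N) * (c2 * (2 * N) ^ (d + (a - N)))) * Real.pi ^ (d + a), by positivity, ?_⟩
  intro E _ _ H M hM hHi hHc hH0 hHN x hx
  have hxn : 0 < ‖x‖ := norm_pos_iff.2 hx
  set h : EuclideanSpace ℝ (Fin d) := (Real.pi / ‖x‖ ^ 2) • x with hh
  set R : ℝ := Real.pi / ‖x‖ with hR
  have hRpos : 0 < R := by positivity
  have hhR : ‖h‖ = R := by
    rw [hh, norm_smul, Real.norm_of_nonneg (by positivity), hR]; field_simp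
  have hxh : ⟪x, h⟫_ℝ = Real.pi := by
    rw [hh, inner_smul_right, real_inner_self_eq_norm_sq]; field_simp
  obtain ⟨hDi, hDe⟩ := aux_osc x h hxh N H hHi
  set J := ∫ ξ, Complex.exp ((⟪x, ξ⟫_ℝ : ℂ) * Complex.I) • H ξ with hJ
  have hR1 : 0 < 3 * N * R := by positivity
  have hR2 : 0 < 2 * N * R := by positivity
  set ψ : EuclideanSpace ℝ (Fin d) → ℝ :=
    fun η => M * (Iic (3 * N * R)).indicator (fun r : ℝ => r ^ a) ‖η‖ with hψ
  set χ : EuclideanSpace ℝ (Fin d) → ℝ :=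
    fun η => R ^ N * M * (2 : ℝ)⁻¹ ^ (a - N) *
      (Ioi (2 * N * R)).indicator (fun r : ℝ => r ^ (a - N)) ‖η‖ with hχ
  have hψi : Integrable ψ := (h1 _ hR1).1.const_mul M
  have hχi : Integrable χ := (h2 _ hR2).1.const_mul _
  have hψ0 : ∀ η, 0 ≤ ψ η := fun η => mul_nonneg hM
    (aux_ind_nonneg _ _ _)
  have hχ0 : ∀ η, 0 ≤ χ η := fun η => mul_nonneg (by positivity) (aux_ind_nonneg _ _ _)
  have hψs : ∀ j : ℕ, Integrable (fun ξ => (N.choose j : ℝ) * ψ (ξ + j • h)) :=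
    fun j => (hψi.comp_add_right (j • h)).const_mul _
  have hsum : Integrable (fun ξ => ∑ j ∈ Finset.range (N + 1), (N.choose j : ℝ) * ψ (ξ + j • h)) :=
    integrable_finsetSum _ fun j _ => hψs j
  have hae : ∀ᵐ ξ : EuclideanSpace ℝ (Fin d), ∀ j : ℕ, ξ + j • h ≠ 0 := by
    rw [ae_all_iff]
    intro j
    have : ({-(j • h)} : Set (EuclideanSpace ℝ (Fin d)))ᶜ ∈ ae volume :=
      compl_mem_ae_iff.2 (measure_singleton _)
    filter_upwards [this] with ξ hξ h0
    exact hξ (by simpa using eq_neg_of_add_eq_zero_left h0)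
  have hbound : ∀ᵐ ξ : EuclideanSpace ℝ (Fin d), ‖(fwdDiff h)^[N] H ξ‖ ≤
      (∑ j ∈ Finset.range (N + 1), (N.choose j : ℝ) * ψ (ξ + j • h)) + χ ξ := by
    filter_upwards [hae] with ξ hξ
    have hjh : ∀ j : ℕ, j ≤ N → ‖j • h‖ ≤ N * R := by
      intro j hj
      rw [← Nat.cast_smul_eq_nsmul ℝ, norm_smul, hhR, Real.norm_natCast]
      have : (j : ℝ) ≤ N := by exact_mod_cast hj
      gcongr
    rcases le_or_gt ‖ξ‖ (2 * N * R) with hle | hgt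
    · refine le_add_of_le_of_nonneg ?_ (hχ0 ξ)
      rw [fwdDiff_iter_eq_sum_shift]
      refine (norm_sum_le _ _).trans (Finset.sum_le_sum fun j hj => ?_)
      have hjN : j ≤ N := by simpa [Nat.lt_succ_iff] using hj
      have e : ‖((-1 : ℤ) ^ (N - j) * (N.choose j : ℤ)) • H (ξ + j • h)‖
          = (N.choose j : ℝ) * ‖H (ξ + j • h)‖ := by
        rw [← Int.cast_smul_eq_zsmul ℂ, norm_smul]
        simp
      rw [e]
      gcongr
      have hmem : ‖ξ + j • h‖ ∈ Iic (3 * N * R) := by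
        have := norm_add_le ξ (j • h)
        have := hjh j hjN
        rw [mem_Iic]; linarith
      rw [hψ]
      simp only [indicator_of_mem hmem]
      exact hH0 _ (hξ j)
    · refine le_add_of_nonneg_of_le (Finset.sum_nonneg fun j _ =>
        mul_nonneg (Nat.cast_nonneg _) (hψ0 _)) ?_
      have hξ0 : 0 < ‖ξ‖ := hR2.trans hgt
      have hfar : ∀ η ∈ Metric.ball ξ (‖ξ‖ / 2), ‖ξ‖ / 2 ≤ ‖η‖ := by
        intro η hη
        rw [Metric.mem_ball, dist_eq_norm, norm_sub_rev] at hη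
        have := norm_sub_norm_le ξ η
        linarith
      have hne : ∀ η ∈ Metric.ball ξ (‖ξ‖ / 2), η ≠ 0 := by
        intro η hη
        have := hfar η hη
        exact norm_pos_iff.1 (by linarith)
      have key := aux_fwdDiff h N (Metric.ball ξ (‖ξ‖ / 2)) H (M * (‖ξ‖ / 2) ^ (a - N))
        Metric.isOpen_ball (convex_ball _ _) (hHc.mono fun η hη => hne η hη)
        (fun η hη => (hHN η (hne η hη)).trans (mul_le_mul_of_nonneg_left
          (Real.rpow_le_rpow_of_nonpos (by positivity) (hfar η hη) hNneg.le) hM)) ξ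
        (fun j hj => by
          rw [Metric.mem_ball, dist_eq_norm, add_sub_cancel_left]
          have := hjh j hj
          linarith)
      refine key.trans (le_of_eq ?_)
      rw [hχ, hhR]
      simp only [indicator_of_mem (show ‖ξ‖ ∈ Ioi (2 * N * R) from hgt)]
      rw [div_eq_mul_inv, Real.mul_rpow hξ0.le (by positivity)]
      ring
  have hJ1 : 2 ^ N * ‖J‖ ≤ ∫ ξ, ‖(fwdDiff h)^[N] H ξ‖ := by
    have e : ‖(-2 : ℂ) ^ N • J‖ = 2 ^ N * ‖J‖ := by rw [norm_smul]; simp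
    rw [← e, ← hDe]
    refine (norm_integral_le_integral_norm _).trans (le_of_eq ?_)
    congr 1; ext ξ
    rw [norm_smul, Complex.norm_exp_ofReal_mul_I, one_mul]
  have hJ2 : ∫ ξ, ‖(fwdDiff h)^[N] H ξ‖ ≤ 2 ^ N * (∫ ξ, ψ ξ) + ∫ ξ, χ ξ := by
    refine (integral_mono_ae hDi.norm (hsum.add hχi) hbound).trans (le_of_eq ?_)
    rw [integral_add' hsum hχi, integral_finsetSum _ fun j _ => hψs j]
    congr 1
    have : ∀ j ∈ Finset.range (N + 1), ∫ ξ, (N.choose j : ℝ) * ψ (ξ + j • h)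
        = (N.choose j : ℝ) * ∫ ξ, ψ ξ := by
      intro j _
      rw [integral_const_mul, integral_add_right_eq_self ψ]
    rw [Finset.sum_congr rfl this, ← Finset.sum_mul]
    congr 1
    exact_mod_cast Nat.sum_range_choose N
  have hψI : ∫ ξ, ψ ξ ≤ M * (c1 * (3 * N * R) ^ (d + a)) := by
    rw [hψ, integral_const_mul]
    exact mul_le_mul_of_nonneg_left (h1 _ hR1).2 hM
  have hχI : ∫ ξ, χ ξ ≤ R ^ N * M * (2 : ℝ)⁻¹ ^ (a - N) * (c2 * (2 * N * R) ^ (d + (a - N))) := by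
    rw [hχ, integral_const_mul]
    exact mul_le_mul_of_nonneg_left (h2 _ hR2).2 (by positivity)
  have hJ3 : ‖J‖ ≤ 2 ^ N * ‖J‖ :=
    le_mul_of_one_le_left (norm_nonneg _) (one_le_pow₀ (by norm_num))
  have eR : R ^ (d + a) = Real.pi ^ (d + a) * ‖x‖ ^ (-d - a) := by
    rw [hR, Real.div_rpow hpi.le hxn.le, div_eq_mul_inv, ← Real.rpow_neg hxn.le]
    congr 2; ring
  have e1 : (3 * N * R) ^ (d + a) = (3 * N) ^ (d + a) * R ^ (d + a) :=
    Real.mul_rpow (by positivity) hRpos.le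
  have e2 : R ^ N * (2 * N * R) ^ (d + (a - N)) = (2 * N) ^ (d + (a - N)) * R ^ (d + a) := by
    rw [Real.mul_rpow (by positivity) hRpos.le, ← Real.rpow_natCast R N, mul_left_comm,
      ← Real.rpow_add hRpos]
    congr 2; ring
  calc ‖J‖ ≤ 2 ^ N * (M * (c1 * (3 * N * R) ^ (d + a))) +
        R ^ N * M * (2 : ℝ)⁻¹ ^ (a - N) * (c2 * (2 * N * R) ^ (d + (a - N))) := by
        refine hJ3.trans (hJ1.trans (hJ2.trans (add_le_add ?_ hχI)))
        gcongr
    _ = 2 ^ N * (M * (c1 * ((3 * N) ^ (d + a) * R ^ (d + a)))) +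
        M * (2 : ℝ)⁻¹ ^ (a - N) * c2 * ((2 * N) ^ (d + (a - N)) * R ^ (d + a)) := by
        rw [e1, ← e2]; ring
    _ = _ := by rw [eR]; ring

/-- symbol bounds -/
def AuxSym {d : ℕ} {E : Type} [NormedAddCommGroup E] [NormedSpace ℂ E] (N : ℕ) (τ ε lam A : ℝ)
    (H : EuclideanSpace ℝ (Fin d) → E) : Prop :=
  ContDiffOn ℝ (N : WithTop ℕ∞) H {0}ᶜ ∧ ∀ n : ℕ, n ≤ N → ∀ ξ, ξ ≠ 0 →
    ‖iteratedFDerivWithin ℝ n H {0}ᶜ ξ‖ ≤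
      A * ‖ξ‖ ^ (τ - n) * Real.exp (-(lam ^ ε * ‖ξ‖ ^ ε))

lemma aux_linear {V : Type*} [NormedAddCommGroup V] [NormedSpace ℝ V] (l : V →L[ℝ] ℝ) (i : ℕ)
    (ξ : V) (hξ : ξ ≠ 0) :
    ‖iteratedFDerivWithin ℝ i l {0}ᶜ ξ‖ ≤ ‖l‖ * ‖ξ‖ ^ (1 - i : ℝ) := by
  rw [iteratedFDerivWithin_of_isOpen i isOpen_compl_singleton (show ξ ∈ ({0} : Set V)ᶜ from hξ)]
  match i with
  | 0 => simpa using l.le_opNorm ξ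
  | 1 =>
    rw [← norm_iteratedFDeriv_fderiv, norm_iteratedFDeriv_zero]
    simp
  | (j + 2) =>
    rw [← norm_iteratedFDeriv_fderiv]
    have : fderiv ℝ (l : V → ℝ) = fun _ => l := by ext1 x; exact l.fderiv
    rw [this, iteratedFDeriv_const_of_ne (by omega)]
    simp only [Pi.zero_apply, norm_zero]
    positivity

lemma AuxSym.smul {d : ℕ} {E : Type} [NormedAddCommGroup E] [NormedSpace ℂ E] {N : ℕ}
    {τ ε lam A : ℝ} {H : EuclideanSpace ℝ (Fin d) → E} (hA : 0 ≤ A) (h : AuxSym N τ ε lam A H)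
    (l : EuclideanSpace ℝ (Fin d) →L[ℝ] ℝ) :
    AuxSym N (τ + 1) ε lam (A * (2 ^ N * ‖l‖)) (fun ξ => l ξ • H ξ) := by
  have hl : ContDiffOn ℝ (N : WithTop ℕ∞) l ({0}ᶜ : Set (EuclideanSpace ℝ (Fin d))) :=
    l.contDiff.contDiffOn
  refine ⟨hl.smul h.1, fun n hn ξ hξ => ?_⟩
  have hξ' : 0 < ‖ξ‖ := norm_pos_iff.2 hξ
  have h1 := norm_iteratedFDerivWithin_smul_le hl h.1
    (isOpen_compl_singleton.uniqueDiffOn) (show ξ ∈ ({0}ᶜ : Set _) from hξ) (n := n)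
    (by exact_mod_cast hn)
  refine h1.trans ?_
  set w := Real.exp (-(lam ^ ε * ‖ξ‖ ^ ε)) with hw
  have hw0 : 0 ≤ w := (Real.exp_pos _).le
  have h2 : ∀ i ∈ Finset.range (n + 1), (n.choose i : ℝ) * ‖iteratedFDerivWithin ℝ i l {0}ᶜ ξ‖ *
        ‖iteratedFDerivWithin ℝ (n - i) H {0}ᶜ ξ‖ ≤
      (n.choose i : ℝ) * (‖l‖ * A * ‖ξ‖ ^ (τ + 1 - n) * w) := by
    intro i hi
    have hin : i ≤ n := by simpa [Nat.lt_succ_iff] using hi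
    have a1 := aux_linear l i ξ hξ
    have a2 := h.2 (n - i) (by omega) ξ hξ
    rw [mul_assoc]
    refine mul_le_mul_of_nonneg_left ?_ (Nat.cast_nonneg _)
    refine (mul_le_mul a1 a2 (norm_nonneg _) (by positivity)).trans (le_of_eq ?_)
    have e : ‖ξ‖ ^ (τ + 1 - n) = ‖ξ‖ ^ (1 - i : ℝ) * ‖ξ‖ ^ (τ - (n - i : ℕ)) := by
      rw [← Real.rpow_add hξ']
      congr 1
      rw [Nat.cast_sub hin]; ring
    rw [e]; ring
  refine (Finset.sum_le_sum h2).trans ?_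
  rw [← Finset.sum_mul]
  have h3 : (∑ i ∈ Finset.range (n + 1), (n.choose i : ℝ)) = 2 ^ n := by
    exact_mod_cast Nat.sum_range_choose n
  rw [h3]
  have h4 : (2 : ℝ) ^ n ≤ 2 ^ N := pow_le_pow_right₀ (by norm_num) hn
  calc _ ≤ 2 ^ N * (‖l‖ * A * ‖ξ‖ ^ (τ + 1 - n) * w) := by gcongr
    _ = _ := by ring

lemma AuxSym.prod {d : ℕ} {E : Type} [NormedAddCommGroup E] [NormedSpace ℂ E] {N : ℕ}
    {τ ε lam A : ℝ} {H : EuclideanSpace ℝ (Fin d) → E} (hA : 0 ≤ A) (h : AuxSym N τ ε lam A H)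
    (m : ℕ) : ∀ y : Fin m → EuclideanSpace ℝ (Fin d),
    AuxSym N (τ + m) ε lam (A * (2 ^ N) ^ m * ∏ i, ‖y i‖) (fun ξ => (∏ i, ⟪ξ, y i⟫_ℝ) • H ξ) := by
  induction m with
  | zero => intro y; simpa using h
  | succ m ih =>
    intro y
    have h1 := (ih (fun i => y i.succ)).smul (by positivity) (innerSL ℝ (y 0))
    rw [innerSL_apply_norm] at h1
    have e1 : τ + (m + 1 : ℕ) = τ + m + 1 := by push_cast; ring
    have e2 : A * (2 ^ N) ^ (m + 1) * ∏ i, ‖y i‖ =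
        A * (2 ^ N) ^ m * (∏ i : Fin m, ‖y i.succ‖) * (2 ^ N * ‖y 0‖) := by
      rw [Fin.prod_univ_succ]; ring
    have e3 : (fun ξ => (∏ i, ⟪ξ, y i⟫_ℝ) • H ξ) =
        fun ξ => (innerSL ℝ (y 0)) ξ • (∏ i : Fin m, ⟪ξ, y i.succ⟫_ℝ) • H ξ := by
      ext ξ
      rw [Fin.prod_univ_succ, mul_smul, innerSL_apply_apply, real_inner_comm]
    rw [e1, e2, e3]
    exact h1

lemma AuxSym.aesm {d : ℕ} (hd : 1 ≤ d) {E : Type} [NormedAddCommGroup E] [NormedSpace ℂ E] {N : ℕ}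
    {τ ε lam A : ℝ} {H : EuclideanSpace ℝ (Fin d) → E} (h : AuxSym N τ ε lam A H) :
    AEStronglyMeasurable H := by
  have := aux_nontriv d hd
  have h1 := h.1.continuousOn.aestronglyMeasurable (μ := volume)
    (measurableSet_singleton (0 : EuclideanSpace ℝ (Fin d))).compl
  have h2 : ∀ᵐ x : EuclideanSpace ℝ (Fin d), x ∈ ({0}ᶜ : Set (EuclideanSpace ℝ (Fin d))) :=
    compl_mem_ae_iff.2 (measure_singleton _)
  rwa [Measure.restrict_eq_self_of_ae_mem h2] at h1

lemma AuxSym.bound0 {d : ℕ} {E : Type} [NormedAddCommGroup E] [NormedSpace ℂ E] {N : ℕ}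
    {τ ε lam A : ℝ} {H : EuclideanSpace ℝ (Fin d) → E} (h : AuxSym N τ ε lam A H) (ξ) (hξ : ξ ≠ 0) :
    ‖H ξ‖ ≤ A * (‖ξ‖ ^ τ * Real.exp (-(lam ^ ε * ‖ξ‖ ^ ε))) := by
  have := h.2 0 (Nat.zero_le _) ξ hξ
  simpa [mul_assoc] using this

lemma aux_ne_zero (d : ℕ) (hd : 1 ≤ d) : ∀ᵐ ξ : EuclideanSpace ℝ (Fin d), ξ ≠ 0 := by
  have := aux_nontriv d hd
  exact compl_mem_ae_iff.2 (measure_singleton _)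

lemma aux_sym_int (d : ℕ) (hd : 1 ≤ d) (τ ε : ℝ) (hτ : 0 < τ) (hε : 0 < ε) :
    ∃ C : ℝ, 0 < C ∧ ∀ (E : Type) [NormedAddCommGroup E] [NormedSpace ℂ E],
      ∀ (N : ℕ) (lam A : ℝ) (H : EuclideanSpace ℝ (Fin d) → E), 0 < lam → 0 ≤ A →
        AuxSym N τ ε lam A H → Integrable H ∧ ∫ ξ, ‖H ξ‖ ≤ C * A * lam ^ (-τ - d) := by
  obtain ⟨c, hc, h⟩ := aux_weight d hd τ ε hτ hε
  refine ⟨c, hc, fun E _ _ N lam A H hl hA hH => ?_⟩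
  obtain ⟨h1, h2⟩ := h lam hl
  have hb : ∀ᵐ ξ, ‖H ξ‖ ≤ A * (‖ξ‖ ^ τ * Real.exp (-(lam ^ ε * ‖ξ‖ ^ ε))) := by
    filter_upwards [aux_ne_zero d hd] with ξ hξ using hH.bound0 ξ hξ
  have hi : Integrable H := (h1.const_mul A).mono' (hH.aesm hd) hb
  refine ⟨hi, (integral_mono_ae hi.norm (h1.const_mul A) hb).trans ?_⟩
  rw [integral_const_mul]
  calc _ ≤ A * (c * lam ^ (-τ - d)) := by gcongr
    _ = _ := by ring

lemma aux_decay (d : ℕ) (hd : 1 ≤ d) (τ a ε : ℝ) (hτ : 0 < τ) (hε : 0 < ε) (ha0 : 0 < a)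
    (ha1 : a < 1) (haτ : a ≤ τ) :
    ∃ C : ℝ, 0 < C ∧ ∀ (E : Type) [NormedAddCommGroup E] [NormedSpace ℂ E],
      ∀ (lam A : ℝ) (H : EuclideanSpace ℝ (Fin d) → E), 0 < lam → 0 ≤ A →
        AuxSym (d + 1) τ ε lam A H →
        ∀ x : EuclideanSpace ℝ (Fin d),
          ‖∫ ξ, Complex.exp ((⟪x, ξ⟫_ℝ : ℂ) * Complex.I) • H ξ‖ ≤ C * A * lam ^ (-τ - d) ∧
          (x ≠ 0 → ‖∫ ξ, Complex.exp ((⟪x, ξ⟫_ℝ : ℂ) * Complex.I) • H ξ‖ ≤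
            C * A * (lam ^ (a - τ) * ‖x‖ ^ (-d - a))) := by
  obtain ⟨c1, hc1, h1⟩ := aux_sym_int d hd τ ε hτ hε
  obtain ⟨c2, hc2, h2⟩ := aux_decay0 d hd a
    (by linarith [(Nat.cast_nonneg d : (0 : ℝ) ≤ d)]) ha1
  obtain ⟨c3, hc3, h3⟩ := aux_scale τ a ε haτ hε
  obtain ⟨c4, hc4, h4⟩ := aux_scale (τ - (d + 1 : ℕ)) (a - (d + 1 : ℕ)) ε (by linarith) hε
  refine ⟨c1 + c2 * (c3 + c4), by positivity, fun E _ _ lam A H hl hA hH x => ?_⟩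
  obtain ⟨hi, hI⟩ := h1 E _ lam A H hl hA hH
  constructor
  · have e : ∫ ξ, ‖Complex.exp ((⟪x, ξ⟫_ℝ : ℂ) * Complex.I) • H ξ‖ = ∫ ξ, ‖H ξ‖ := by
      congr 1; ext ξ; rw [norm_smul, Complex.norm_exp_ofReal_mul_I, one_mul]
    refine (norm_integral_le_integral_norm _).trans (e.le.trans (hI.trans ?_))
    have : 0 ≤ c2 * (c3 + c4) := by positivity
    gcongr
    linarith
  · intro hx
    have := h2 E H ((c3 + c4) * A * lam ^ (a - τ)) (by positivity) hi hH.1 ?_ ?_ x hx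
    · refine this.trans ?_
      calc _ = c2 * (c3 + c4) * A * (lam ^ (a - τ) * ‖x‖ ^ (-d - a)) := by ring
        _ ≤ _ := by gcongr; linarith
    · intro ξ hξ
      refine (hH.bound0 ξ hξ).trans ?_
      calc _ ≤ A * (c3 * lam ^ (a - τ) * ‖ξ‖ ^ a) := by
            exact mul_le_mul_of_nonneg_left (h3 lam _ hl (norm_pos_iff.2 hξ)) hA
        _ = c3 * A * lam ^ (a - τ) * ‖ξ‖ ^ a := by ring
        _ ≤ _ := by gcongr; linarith
    · intro ξ hξ
      have b := hH.2 (d + 1) le_rfl ξ hξ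
      rw [iteratedFDerivWithin_of_isOpen (d + 1) isOpen_compl_singleton
        (show ξ ∈ ({0}ᶜ : Set _) from hξ)] at b
      refine b.trans ?_
      have b2 := h4 lam _ hl (norm_pos_iff.2 hξ)
      rw [show a - ((d + 1 : ℕ) : ℝ) - (τ - ((d + 1 : ℕ) : ℝ)) = a - τ by ring] at b2
      rw [mul_assoc]
      calc _ ≤ A * (c4 * lam ^ (a - τ) * ‖ξ‖ ^ (a - (d + 1 : ℕ))) := by gcongr
        _ = c4 * A * lam ^ (a - τ) * ‖ξ‖ ^ (a - (d + 1 : ℕ)) := by ring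
        _ ≤ _ := by gcongr; linarith

lemma aux_deriv {d : ℕ} {E : Type} [NormedAddCommGroup E] [NormedSpace ℂ E] [CompleteSpace E]
    (F : EuclideanSpace ℝ (Fin d) → E) (hm : AEStronglyMeasurable F)
    (hi : ∀ n : ℕ, Integrable (fun v => ‖v‖ ^ n * ‖F v‖)) (m : ℕ) :
    ContDiff ℝ m (fun x => ∫ ξ, Complex.exp ((⟪x, ξ⟫_ℝ : ℂ) * Complex.I) • F ξ) ∧
    ∀ x (y : Fin m → EuclideanSpace ℝ (Fin d)),
      iteratedFDeriv ℝ m (fun x => ∫ ξ, Complex.exp ((⟪x, ξ⟫_ℝ : ℂ) * Complex.I) • F ξ) x y =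
      Complex.I ^ m • ∫ ξ, Complex.exp ((⟪x, ξ⟫_ℝ : ℂ) * Complex.I) • ((∏ i, ⟪ξ, y i⟫_ℝ) • F ξ) := by
  set L : EuclideanSpace ℝ (Fin d) →L[ℝ] EuclideanSpace ℝ (Fin d) →L[ℝ] ℝ :=
    (-(2 * Real.pi)⁻¹) • innerSL ℝ with hL
  have hLa : ∀ v w, L v w = -(2 * Real.pi)⁻¹ * ⟪v, w⟫_ℝ := fun v w => by
    simp [hL]
    rfl
  have hpi : (Real.pi : ℂ) ≠ 0 := by exact_mod_cast Real.pi_ne_zero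
  have hchar : ∀ v w, ((Real.fourierChar (-(L.toLinearMap₁₂ v w)) : Circle) : ℂ) =
      Complex.exp ((⟪w, v⟫_ℝ : ℂ) * Complex.I) := by
    intro v w
    rw [Real.fourierChar_apply]
    congr 1
    rw [ContinuousLinearMap.toLinearMap₁₂_apply_apply_apply, hLa, real_inner_comm]
    push_cast
    field_simp
  have hFour : ∀ f : EuclideanSpace ℝ (Fin d) → E,
      VectorFourier.fourierIntegral Real.fourierChar volume L.toLinearMap₁₂ f =
      fun x => ∫ ξ, Complex.exp ((⟪x, ξ⟫_ℝ : ℂ) * Complex.I) • f ξ := by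
    intro f
    ext x
    rw [VectorFourier.fourierIntegral]
    congr 1
    ext v
    rw [Circle.smul_def, hchar]
  rw [← hFour F]
  constructor
  · exact_mod_cast VectorFourier.contDiff_fourierIntegral L (N := (m : ℕ∞)) (fun n _ => hi n)
  · intro x y
    rw [VectorFourier.iteratedFDeriv_fourierIntegral L (N := (m : ℕ∞)) (fun n _ => hi n) hm le_rfl]
    rw [Real.fourierIntegral_continuousMultilinearMap_apply'
      (VectorFourier.integrable_fourierPowSMulRight L (hi m) hm), hFour]
    simp only
    rw [← integral_smul]
    congr 1
    ext v
    rw [VectorFourier.fourierPowSMulRight_apply, smul_comm (Complex.I ^ m)]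
    congr 1
    simp only [hLa, Finset.prod_mul_distrib, Finset.prod_const, Finset.card_univ, Fintype.card_fin]
    rw [mul_smul, ← Complex.coe_smul, smul_smul]
    congr 1
    push_cast
    rw [← mul_pow]
    congr 1
    field_simp

/-- majorant of the kernel, with weight -/
noncomputable def AuxPhi (d : ℕ) (a lam q : ℝ) (x : EuclideanSpace ℝ (Fin d)) : ℝ :=
  lam ^ (-(d : ℝ)) * (Iic (2 * lam)).indicator (fun r : ℝ => r ^ q) ‖x‖ +
    lam ^ a * (Ioi (2 * lam)).indicator (fun r : ℝ => r ^ (q - d - a)) ‖x‖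

lemma aux_phi_le {d : ℕ} {a lam q : ℝ} {x : EuclideanSpace ℝ (Fin d)} (h : ‖x‖ ≤ 2 * lam) :
    AuxPhi d a lam q x = lam ^ (-(d : ℝ)) * ‖x‖ ^ q := by
  rw [AuxPhi, indicator_of_mem (show ‖x‖ ∈ Iic (2 * lam) from h),
    indicator_of_notMem (show ‖x‖ ∉ Ioi (2 * lam) from not_lt.2 h)]
  ring

lemma aux_phi_gt {d : ℕ} {a lam q : ℝ} {x : EuclideanSpace ℝ (Fin d)} (h : 2 * lam < ‖x‖) :
    AuxPhi d a lam q x = lam ^ a * ‖x‖ ^ (q - d - a) := by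
  rw [AuxPhi, indicator_of_notMem (show ‖x‖ ∉ Iic (2 * lam) from not_le.2 h),
    indicator_of_mem (show ‖x‖ ∈ Ioi (2 * lam) from h)]
  ring

lemma aux_phi_nonneg {d : ℕ} {a lam q : ℝ} (hl : 0 < lam) (x : EuclideanSpace ℝ (Fin d)) :
    0 ≤ AuxPhi d a lam q x :=
  add_nonneg (mul_nonneg (by positivity) (aux_ind_nonneg _ _ _))
    (mul_nonneg (by positivity) (aux_ind_nonneg _ _ _))

lemma aux_phi_mul {d : ℕ} {a lam q : ℝ} (hl : 0 < lam) (x : EuclideanSpace ℝ (Fin d)) :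
    AuxPhi d a lam 0 x * ‖x‖ ^ q = AuxPhi d a lam q x := by
  rcases le_or_gt ‖x‖ (2 * lam) with h | h
  · rw [aux_phi_le h, aux_phi_le h]; simp
  · have : 0 < ‖x‖ := by linarith
    rw [aux_phi_gt h, aux_phi_gt h, mul_assoc, ← Real.rpow_add this]
    congr 2; ring

lemma aux_phi_int (d : ℕ) (hd : 1 ≤ d) (a q : ℝ) (hq : 0 ≤ q) (hqa : q < a) :
    ∃ c : ℝ, 0 < c ∧ ∀ lam : ℝ, 0 < lam → Integrable (AuxPhi d a lam q) ∧
      ∫ x, AuxPhi d a lam q x ≤ c * lam ^ q := by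
  have hd' : (1 : ℝ) ≤ d := by exact_mod_cast hd
  obtain ⟨c1, hc1, h1⟩ := aux_inner d hd q (by linarith)
  obtain ⟨c2, hc2, h2⟩ := aux_outer d hd (q - d - a) (by linarith)
  refine ⟨c1 * 2 ^ (d + q) + c2 * 2 ^ (q - a), by positivity, fun lam hl => ?_⟩
  obtain ⟨i1, j1⟩ := h1 (2 * lam) (by positivity)
  obtain ⟨i2, j2⟩ := h2 (2 * lam) (by positivity)
  have k1 := i1.const_mul (lam ^ (-(d : ℝ)))
  have k2 := i2.const_mul (lam ^ a)
  refine ⟨k1.add k2, ?_⟩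
  unfold AuxPhi
  rw [integral_add k1 k2, integral_const_mul, integral_const_mul]
  have e1 : lam ^ (-(d : ℝ)) * lam ^ (d + q) = lam ^ q := by
    rw [← Real.rpow_add hl]; congr 1; ring
  have e2 : lam ^ a * lam ^ (q - a) = lam ^ q := by
    rw [← Real.rpow_add hl]; congr 1; ring
  rw [Real.mul_rpow (by norm_num) hl.le] at j1 j2
  rw [show (d : ℝ) + (q - d - a) = q - a by ring] at j2
  calc _ ≤ lam ^ (-(d : ℝ)) * (c1 * (2 ^ (d + q) * lam ^ (d + q))) +
        lam ^ a * (c2 * (2 ^ (q - a) * lam ^ (q - a))) := by gcongr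
    _ = c1 * 2 ^ (d + q) * (lam ^ (-(d : ℝ)) * lam ^ (d + q)) +
        c2 * 2 ^ (q - a) * (lam ^ a * lam ^ (q - a)) := by ring
    _ = _ := by rw [e1, e2]; ring

lemma aux_G (d : ℕ) (hd : 1 ≤ d) (σ a ε : ℝ) (hσ : 0 < σ) (hε : 0 < ε) (ha0 : 0 < a)
    (ha1 : a < 1) (haσ : a ≤ σ) (m : ℕ) :
    ∃ C : ℝ, 0 < C ∧ ∀ (E : Type) [NormedAddCommGroup E] [NormedSpace ℂ E] [CompleteSpace E],
      ∀ (lam A : ℝ) (F G : EuclideanSpace ℝ (Fin d) → E), 0 < lam → 0 ≤ A →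
        AuxSym (d + 1) σ ε lam A F →
        (G = fun x => ∫ ξ, Complex.exp ((⟪x, ξ⟫_ℝ : ℂ) * Complex.I) • F ξ) →
        ContDiff ℝ m G ∧ ∀ x : EuclideanSpace ℝ (Fin d),
          ‖iteratedFDeriv ℝ m G x‖ ≤ C * A * lam ^ (-(σ + m)) * lam ^ (-(d : ℝ)) ∧
          (x ≠ 0 → ‖iteratedFDeriv ℝ m G x‖ ≤
            C * A * lam ^ (-(σ + m)) * (lam ^ a * ‖x‖ ^ (-d - a))) := by
  have hm0 : (0 : ℝ) ≤ m := Nat.cast_nonneg m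
  obtain ⟨c, hc, h⟩ := aux_decay d hd (σ + m) a ε (by linarith) hε ha0 ha1 (by linarith)
  refine ⟨c * (2 ^ (d + 1)) ^ m, by positivity, fun E _ _ _ lam A F G hl hA hF hG => ?_⟩
  have hi : ∀ n : ℕ, Integrable (fun v => ‖v‖ ^ n * ‖F v‖) := by
    intro n
    obtain ⟨c', hc', hw⟩ := aux_weight d hd (σ + n) ε (by positivity) hε
    refine ((hw lam hl).1.const_mul A).mono' ?_ ?_
    · exact (by fun_prop : Continuous fun v : EuclideanSpace ℝ (Fin d) =>
        ‖v‖ ^ n).aestronglyMeasurable.mul (hF.aesm hd).norm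
    · filter_upwards [aux_ne_zero d hd] with ξ hξ
      have hξ' : 0 < ‖ξ‖ := norm_pos_iff.2 hξ
      rw [Real.norm_of_nonneg (by positivity), Real.rpow_add hξ', Real.rpow_natCast]
      have := hF.bound0 ξ hξ
      calc _ ≤ ‖ξ‖ ^ n * (A * (‖ξ‖ ^ σ * Real.exp (-(lam ^ ε * ‖ξ‖ ^ ε)))) := by gcongr
        _ = _ := by ring
  obtain ⟨hcd, hder⟩ := aux_deriv F (hF.aesm hd) hi m
  rw [← hG] at hcd hder
  have hn : ∀ (x) (y : Fin m → EuclideanSpace ℝ (Fin d)), ‖iteratedFDeriv ℝ m G x y‖ =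
      ‖∫ ξ, Complex.exp ((⟪x, ξ⟫_ℝ : ℂ) * Complex.I) • ((∏ i, ⟪ξ, y i⟫_ℝ) • F ξ)‖ := by
    intro x y
    rw [hder, norm_smul]; simp
  refine ⟨hcd, fun x => ⟨?_, fun hx => ?_⟩⟩
  · refine ContinuousMultilinearMap.opNorm_le_bound (by positivity) fun y => ?_
    rw [hn]
    refine ((h E lam _ _ hl (by positivity) (hF.prod hA m y)) x).1.trans (le_of_eq ?_)
    have e : lam ^ (-(σ + m) - d) = lam ^ (-(σ + m)) * lam ^ (-(d : ℝ)) := by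
      rw [← Real.rpow_add hl]; rfl
    rw [e]; ring
  · refine ContinuousMultilinearMap.opNorm_le_bound (by positivity) fun y => ?_
    rw [hn]
    refine (((h E lam _ _ hl (by positivity) (hF.prod hA m y)) x).2 hx).trans (le_of_eq ?_)
    have e : lam ^ (a - (σ + m)) = lam ^ (-(σ + m)) * lam ^ a := by
      rw [← Real.rpow_add hl]; congr 1; ring
    rw [e]; ring

/-- Weighted `L¹` bounds for finite differences of derivatives of the
kernel `G(x) = ∫ F(ξ) e^{i x·ξ} dξ` when the derivatives of `F` satisfy symbol-type
bounds with exponential decay. -/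
theorem finite_difference_kernel_L1_bound
    (d k : ℕ) (hd : 1 ≤ d) (σ σ' ε : ℝ) (hσ : 0 < σ)
    (hσ'0 : 0 ≤ σ') (hσ' : σ' < min σ 1) (hε : 0 < ε) :
    ∃ C : ℝ, 0 < C ∧
      ∀ (E : Type) [NormedAddCommGroup E] [NormedSpace ℂ E] [FiniteDimensional ℂ E],
      ∀ lam C₀ : ℝ, 0 < lam → 0 ≤ C₀ →
      ∀ F : EuclideanSpace ℝ (Fin d) → E,
        ContDiffOn ℝ (((d : ℤ) + ⌊σ⌋ + 1).toNat) F {0}ᶜ →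
        (∀ n : ℕ, (n : ℤ) ≤ (d : ℤ) + ⌊σ⌋ + 1 →
          ∀ ξ : EuclideanSpace ℝ (Fin d), ξ ≠ 0 →
            ‖iteratedFDerivWithin ℝ n F {0}ᶜ ξ‖ ≤
              C₀ * ‖ξ‖ ^ (σ - (n : ℝ)) * Real.exp (-(lam ^ ε * ‖ξ‖ ^ ε))) →
        ∀ G : EuclideanSpace ℝ (Fin d) → E,
          (G = fun x => ∫ ξ : EuclideanSpace ℝ (Fin d),
              Complex.exp ((⟪x, ξ⟫_ℝ : ℂ) * Complex.I) • F ξ) →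
          ∀ α : EuclideanSpace ℝ (Fin d),
            (∫ x : EuclideanSpace ℝ (Fin d),
                ‖iteratedFDeriv ℝ k G x - iteratedFDeriv ℝ k G (x - α)‖ * ‖x‖ ^ σ') ≤
              C * C₀ * (‖α‖ ^ σ' / lam ^ ((k : ℝ) + σ)) * (min 1 (‖α‖ / lam)) ^ (1 - σ') := by
  obtain ⟨a, ha, ha2⟩ := exists_between hσ'
  have haσ : a < σ := ha2.trans_le (min_le_left _ _)
  have ha1 : a < 1 := ha2.trans_le (min_le_right _ _)
  have ha0 : 0 < a := hσ'0.trans_lt ha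
  have hfl : 0 ≤ ⌊σ⌋ := Int.floor_nonneg.2 hσ.le
  have hd0 : (0 : ℝ) ≤ d := Nat.cast_nonneg d
  obtain ⟨c1, hc1, h1⟩ := aux_G d hd σ a ε hσ hε ha0 ha1 haσ.le k
  obtain ⟨c2, hc2, h2⟩ := aux_G d hd σ a ε hσ hε ha0 ha1 haσ.le (k + 1)
  obtain ⟨b0, hb0, p0⟩ := aux_phi_int d hd a 0 le_rfl ha0
  obtain ⟨b1, hb1, p1⟩ := aux_phi_int d hd a σ' hσ'0 ha
  refine ⟨c1 * (2 * b1 + b0) + c2 * 2 ^ (d + a) * b1, by positivity, ?_⟩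
  intro E _ _ _ lam C₀ hl hC₀ F hFc hFb G hG α
  have : CompleteSpace E := FiniteDimensional.complete ℂ E
  have hF : AuxSym (d + 1) σ ε lam C₀ F := by
    refine ⟨hFc.of_le ?_, fun n hn ξ hξ => hFb n (by omega) ξ hξ⟩
    have : d + 1 ≤ ((d : ℤ) + ⌊σ⌋ + 1).toNat := by omega
    exact_mod_cast this
  obtain ⟨-, g1⟩ := h1 E lam C₀ F G hl hC₀ hF hG
  obtain ⟨gc, g2⟩ := h2 E lam C₀ F G hl hC₀ hF hG
  obtain ⟨i0, j0⟩ := p0 lam hl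
  obtain ⟨i1, j1⟩ := p1 lam hl
  rcases eq_or_ne α 0 with rfl | hα
  · simp only [sub_zero, sub_self, norm_zero, zero_mul, integral_zero]
    positivity
  have hαp : 0 < ‖α‖ := norm_pos_iff.2 hα
  rcases le_or_gt lam ‖α‖ with hla | hla
  · -- large shift
    set K := c1 * C₀ * lam ^ (-(σ + k)) with hK
    have hK0 : 0 ≤ K := by positivity
    have hb : ∀ x, ‖iteratedFDeriv ℝ k G x‖ ≤ K * AuxPhi d a lam 0 x := by
      intro x
      rcases le_or_gt ‖x‖ (2 * lam) with h | h
      · rw [aux_phi_le h, Real.rpow_zero, mul_one]; exact (g1 x).1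
      · rw [aux_phi_gt h, zero_sub]
        exact (g1 x).2 (norm_pos_iff.1 (by linarith))
    have t1 := i1.comp_sub_right α
    have t0 := (i0.comp_sub_right α).const_mul (‖α‖ ^ σ')
    have T := ((i1.add t1).add t0).const_mul K
    have hle : ∀ x, ‖iteratedFDeriv ℝ k G x - iteratedFDeriv ℝ k G (x - α)‖ * ‖x‖ ^ σ' ≤
        K * (AuxPhi d a lam σ' x + AuxPhi d a lam σ' (x - α) +
          ‖α‖ ^ σ' * AuxPhi d a lam 0 (x - α)) := by
      intro x
      have s1 : ‖x‖ ^ σ' ≤ ‖x - α‖ ^ σ' + ‖α‖ ^ σ' := by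
        refine (Real.rpow_le_rpow (norm_nonneg _) ?_ hσ'0).trans
          (Real.rpow_add_le_add_rpow (norm_nonneg _) (norm_nonneg _) hσ'0 (by linarith))
        simpa using norm_add_le (x - α) α
      have n1 := aux_phi_nonneg (a := a) (q := 0) hl (x - α)
      calc _ ≤ (K * AuxPhi d a lam 0 x + K * AuxPhi d a lam 0 (x - α)) * ‖x‖ ^ σ' := by
            gcongr
            exact (norm_sub_le _ _).trans (add_le_add (hb x) (hb (x - α)))
        _ = K * (AuxPhi d a lam 0 x * ‖x‖ ^ σ' + AuxPhi d a lam 0 (x - α) * ‖x‖ ^ σ') := by ring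
        _ ≤ K * (AuxPhi d a lam 0 x * ‖x‖ ^ σ' +
            AuxPhi d a lam 0 (x - α) * (‖x - α‖ ^ σ' + ‖α‖ ^ σ')) := by gcongr
        _ = K * (AuxPhi d a lam 0 x * ‖x‖ ^ σ' + AuxPhi d a lam 0 (x - α) * ‖x - α‖ ^ σ' +
            ‖α‖ ^ σ' * AuxPhi d a lam 0 (x - α)) := by ring
        _ = _ := by rw [aux_phi_mul hl, aux_phi_mul hl]
    refine (integral_mono_of_nonneg (ae_of_all _ fun x => by positivity) T
      (ae_of_all _ hle)).trans ?_
    have hmin : min 1 (‖α‖ / lam) = 1 := min_eq_left ((one_le_div hl).2 hla)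
    rw [hmin, Real.one_rpow, mul_one, integral_const_mul]
    have eI : ∫ x, ((AuxPhi d a lam σ' + fun x => AuxPhi d a lam σ' (x - α)) +
          fun x => ‖α‖ ^ σ' * AuxPhi d a lam 0 (x - α)) x =
        (∫ x, AuxPhi d a lam σ' x) + (∫ x, AuxPhi d a lam σ' x) +
          ‖α‖ ^ σ' * ∫ x, AuxPhi d a lam 0 x := by
      rw [integral_add' (i1.add t1) t0, integral_add' i1 t1, integral_const_mul,
        integral_sub_right_eq_self (AuxPhi d a lam σ'), integral_sub_right_eq_self (AuxPhi d a lam 0)]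
    have hlσ : lam ^ σ' ≤ ‖α‖ ^ σ' := Real.rpow_le_rpow hl.le hla hσ'0
    rw [Real.rpow_zero, mul_one] at j0
    have e : lam ^ (-(σ + k)) = (lam ^ (k + σ))⁻¹ := by
      rw [← Real.rpow_neg hl.le]; congr 1; ring
    calc _ ≤ K * (b1 * ‖α‖ ^ σ' + b1 * ‖α‖ ^ σ' + ‖α‖ ^ σ' * b0) := by
          refine mul_le_mul_of_nonneg_left ?_ hK0
          refine eI.le.trans ?_
          have : b1 * lam ^ σ' ≤ b1 * ‖α‖ ^ σ' := by gcongr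
          have : ‖α‖ ^ σ' * (∫ x, AuxPhi d a lam 0 x) ≤ ‖α‖ ^ σ' * b0 := by gcongr
          linarith
      _ = c1 * (2 * b1 + b0) * C₀ * (‖α‖ ^ σ' / lam ^ (k + σ)) := by
          rw [hK, e]; ring
      _ ≤ _ := by
          gcongr
          have : 0 ≤ c2 * 2 ^ (d + a) * b1 := by positivity
          linarith
  · -- small shift
    set K := c2 * C₀ * lam ^ (-(σ + (k + 1 : ℕ))) with hK
    have hK0 : 0 ≤ K := by positivity
    have hdiff : ∀ y, DifferentiableAt ℝ (iteratedFDeriv ℝ k G) y := fun y =>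
      gc.contDiffAt.differentiableAt_iteratedFDeriv (by exact_mod_cast Nat.lt_succ_self k)
    have h2ge : (1 : ℝ) ≤ 2 ^ (d + a) := Real.one_le_rpow (by norm_num) (by linarith)
    have hb : ∀ x, ‖iteratedFDeriv ℝ k G x - iteratedFDeriv ℝ k G (x - α)‖ ≤
        K * 2 ^ (d + a) * ‖α‖ * AuxPhi d a lam 0 x := by
      intro x
      rcases le_or_gt ‖x‖ (2 * lam) with h | h
      · have := Convex.norm_image_sub_le_of_norm_fderiv_le (𝕜 := ℝ) (f := iteratedFDeriv ℝ k G)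
          (C := K * lam ^ (-(d : ℝ))) (s := univ) (x := x - α) (y := x) (fun y _ => hdiff y)
          (fun y _ => by rw [norm_fderiv_iteratedFDeriv]; exact (g2 y).1) convex_univ trivial trivial
        rw [aux_phi_le h, Real.rpow_zero, mul_one]
        rw [sub_sub_cancel] at this
        refine this.trans ?_
        calc _ = K * 1 * ‖α‖ * lam ^ (-(d : ℝ)) := by ring
          _ ≤ _ := by gcongr
      · have hx0 : 0 < ‖x‖ := by linarith
        have hfar : ∀ η ∈ Metric.ball x (‖x‖ / 2), ‖x‖ / 2 ≤ ‖η‖ := by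
          intro η hη
          rw [Metric.mem_ball, dist_eq_norm, norm_sub_rev] at hη
          have := norm_sub_norm_le x η
          linarith
        have := Convex.norm_image_sub_le_of_norm_fderiv_le (𝕜 := ℝ) (f := iteratedFDeriv ℝ k G)
          (C := K * (lam ^ a * (‖x‖ / 2) ^ (-d - a))) (s := Metric.ball x (‖x‖ / 2))
          (x := x - α) (y := x) (fun y _ => hdiff y)
          (fun y hy => by
            rw [norm_fderiv_iteratedFDeriv]
            have hy' := hfar y hy
            refine ((g2 y).2 (norm_pos_iff.1 (by linarith))).trans ?_
            refine mul_le_mul_of_nonneg_left (mul_le_mul_of_nonneg_left ?_ (by positivity)) hK0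
            exact Real.rpow_le_rpow_of_nonpos (by positivity) hy' (by linarith))
          (convex_ball _ _)
          (by rw [Metric.mem_ball, dist_eq_norm, sub_sub_cancel_left, norm_neg]; linarith)
          (Metric.mem_ball_self (by positivity))
        rw [aux_phi_gt h, zero_sub]
        rw [sub_sub_cancel] at this
        refine this.trans (le_of_eq ?_)
        have e : (‖x‖ / 2) ^ (-d - a) = ‖x‖ ^ (-d - a) * 2 ^ (d + a) := by
          rw [Real.div_rpow hx0.le (by norm_num), div_eq_mul_inv, ← Real.rpow_neg (by norm_num)]
          congr 2; ring
        rw [e]; ring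
    have hle : ∀ x, ‖iteratedFDeriv ℝ k G x - iteratedFDeriv ℝ k G (x - α)‖ * ‖x‖ ^ σ' ≤
        K * 2 ^ (d + a) * ‖α‖ * AuxPhi d a lam σ' x := by
      intro x
      rw [← aux_phi_mul hl, ← mul_assoc]
      exact mul_le_mul_of_nonneg_right (hb x) (by positivity)
    refine (integral_mono_of_nonneg (ae_of_all _ fun x => by positivity) (i1.const_mul _)
      (ae_of_all _ hle)).trans ?_
    have hmin : min 1 (‖α‖ / lam) = ‖α‖ / lam := min_eq_right ((div_le_one hl).2 hla.le)
    rw [hmin, integral_const_mul]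
    have e1 : ‖α‖ ^ σ' / lam ^ (k + σ) * (‖α‖ / lam) ^ (1 - σ') =
        lam ^ (-(σ + (k + 1 : ℕ))) * ‖α‖ * lam ^ σ' := by
      rw [Real.div_rpow hαp.le hl.le, div_mul_div_comm, ← Real.rpow_add hαp, ← Real.rpow_add hl,
        show σ' + (1 - σ') = 1 by ring, Real.rpow_one, div_eq_mul_inv, ← Real.rpow_neg hl.le,
        mul_comm _ ‖α‖, mul_assoc, ← Real.rpow_add hl]
      congr 2; push_cast; ring
    calc _ ≤ K * 2 ^ (d + a) * ‖α‖ * (b1 * lam ^ σ') := by gcongr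
      _ = c2 * 2 ^ (d + a) * b1 * C₀ * (lam ^ (-(σ + (k + 1 : ℕ))) * ‖α‖ * lam ^ σ') := by
          rw [hK]; ring
      _ = c2 * 2 ^ (d + a) * b1 * C₀ *
          (‖α‖ ^ σ' / lam ^ (k + σ) * (‖α‖ / lam) ^ (1 - σ')) := by rw [e1]
      _ = c2 * 2 ^ (d + a) * b1 * C₀ *
          (‖α‖ ^ σ' / lam ^ (k + σ)) * (‖α‖ / lam) ^ (1 - σ') := by ring
      _ ≤ _ := by
          gcongr
          have : 0 ≤ c1 * (2 * b1 + b0) := by positivity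
          linarith
end

section
/- Let d, N ≥ 1 be integers, s > 0, 0 < c₀ < 1 < c₁, t > 0, and set L := d + ⌊s⌋ + 2. Let A : [0,t] × (ℝ^d \ {0}) → Matrix (Fin N) (Fin N) ℝ be continuous and, for each τ, L-times continuously differentiable in ξ with the derivatives ∇_ξ^l A jointly continuous, satisfying: (i) ⟨v, A(τ,ξ)·v⟩ ≥ c₀ |ξ|^s ‖v‖² for all v ∈ ℝ^N, τ ∈ [0,t], ξ ≠ 0; (ii) ‖∇_ξ^l A(τ,ξ)‖ ≤ c₁ |ξ|^{s−l} for all integers 0 ≤ l ≤ L and all τ, ξ ≠ 0. Suppose 𝒦 : [0,t] × (ℝ^d \ {0}) → Matrix (Fin N) (Fin N) ℝ is such that 𝒦 and its ξ-derivatives ∇_ξ^l 𝒦 for 1 ≤ l ≤ L are jointly continuous on [0,t] × (ℝ^d \ {0}); 𝒦(0, ξ) = Id for all ξ ≠ 0; for each ξ ≠ 0 and each 0 ≤ l ≤ L, τ ↦ ∇_ξ^l 𝒦(τ,ξ) is differentiable on (0,t) and the mixed derivatives commute, i.e. ∂_τ(∇_ξ^l 𝒦)(τ,ξ) = −∇_ξ^l(𝒦(τ,·)·A(τ,·))(ξ).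 Then for every integer 1 ≤ l ≤ L there is a constant C, depending only on d, N, s and l, such that ‖∇_ξ^l 𝒦(τ,ξ)‖ ≤ C c₀^{−l} c₁^{l} · τ |ξ|^{s−l} e^{−(c₀/2) τ |ξ|^s} for all τ ∈ (0, t] and ξ ≠ 0. -/
open Set

attribute [local instance] Matrix.frobeniusNormedAddCommGroup Matrix.frobeniusNormedSpace

lemma frob_sq {N : ℕ} (M : Matrix (Fin N) (Fin N) ℝ) :
    ‖M‖ = Real.sqrt (∑ i, ∑ j, M i j ^ 2) := by
  rw [Matrix.frobenius_norm_def, Real.sqrt_eq_rpow]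
  simp

lemma frob_cs {N : ℕ} (M P : Matrix (Fin N) (Fin N) ℝ) :
    ∑ i, ∑ j, M i j * P i j ≤ ‖M‖ * ‖P‖ := by
  rw [frob_sq, frob_sq]
  have := Real.sum_mul_le_sqrt_mul_sqrt (Finset.univ : Finset (Fin N × Fin N))
    (fun p => M p.1 p.2) (fun p => P p.1 p.2)
  simpa [Fintype.sum_prod_type] using this

lemma entry_deriv {N : ℕ} {u : ℝ → Matrix (Fin N) (Fin N) ℝ} {u' : Matrix (Fin N) (Fin N) ℝ}
    {τ : ℝ} (h : HasDerivAt u u' τ) (i j : Fin N) : HasDerivAt (fun τ => u τ i j) (u' i j) τ :=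
  ((LinearMap.toContinuousLinearMap (Matrix.entryLinearMap ℝ ℝ i j :
    Matrix (Fin N) (Fin N) ℝ →ₗ[ℝ] ℝ)).hasFDerivAt.comp_hasDerivAt τ h)

lemma energy {N : ℕ} {t b : ℝ} (u f A : ℝ → Matrix (Fin N) (Fin N) ℝ) (h h' : ℝ → ℝ)
    (hu : ContinuousOn u (Icc 0 t))
    (hd : ∀ τ ∈ Ioo 0 t, HasDerivAt u (-(u τ * A τ) - f τ) τ)
    (hA : ∀ τ ∈ Icc 0 t, ∀ v : Fin N → ℝ,
      b * (∑ i, (v i) ^ 2) ≤ ∑ i, ∑ j, v i * A τ i j * v j)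
    (hh : ContinuousOn h (Icc 0 t)) (hh' : ∀ τ ∈ Ioo 0 t, HasDerivAt h (h' τ) τ)
    (hf : ∀ τ ∈ Ioo 0 t, Real.exp (b * τ) * ‖f τ‖ ≤ h' τ)
    (τ : ℝ) (hτ : τ ∈ Icc 0 t) :
    Real.exp (b * τ) * ‖u τ‖ ≤ ‖u 0‖ + h τ - h 0 := by
  have key : ∀ ε > 0, Real.exp (b * τ) * ‖u τ‖ ≤ ‖u 0‖ + h τ - h 0 + ε := by
    intro ε hε
    set E : ℝ → ℝ := fun τ => Real.exp (2 * b * τ) * ‖u τ‖ ^ 2 + ε ^ 2 with hE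
    have hEpos : ∀ τ, 0 < E τ := fun τ => by simp only [hE]; positivity
    have hSq : ∀ M : Matrix (Fin N) (Fin N) ℝ, ‖M‖ ^ 2 = ∑ i, ∑ j, M i j ^ 2 := by
      intro M
      rw [frob_sq, Real.sq_sqrt]
      positivity
    have hEd : ∀ σ ∈ Ioo 0 t, HasDerivAt E (Real.exp (2 * b * σ) * (2 * b) * ‖u σ‖ ^ 2 +
        Real.exp (2 * b * σ) * (∑ i, ∑ j, 2 * (u σ i j * (-(u σ * A σ) - f σ) i j))) σ := by
      intro σ hσ
      have h1 : HasDerivAt (fun σ => ‖u σ‖ ^ 2)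
          (∑ i, ∑ j, 2 * (u σ i j * (-(u σ * A σ) - f σ) i j)) σ := by
        have : (fun σ => ‖u σ‖ ^ 2) = fun σ => ∑ i, ∑ j, u σ i j ^ 2 := by
          funext σ; exact hSq _
        rw [this]
        refine HasDerivAt.fun_sum fun i _ => HasDerivAt.fun_sum fun j _ => ?_
        refine ((entry_deriv (hd σ hσ) i j).fun_pow 2).congr_deriv ?_
        simp [mul_assoc]
      have h2 : HasDerivAt (fun σ => Real.exp (2 * b * σ)) (Real.exp (2 * b * σ) * (2 * b)) σ := by
        simpa using ((hasDerivAt_id σ).const_mul (2 * b)).exp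
      exact (h2.mul h1).add_const _
    have hW : AntitoneOn (fun σ => Real.sqrt (E σ) - h σ) (Icc 0 t) := by
      have hder : ∀ σ ∈ Ioo 0 t, HasDerivAt (fun σ => Real.sqrt (E σ) - h σ) _ σ :=
        fun σ hσ => ((hEd σ hσ).sqrt (hEpos σ).ne').sub (hh' σ hσ)
      apply antitoneOn_of_deriv_nonpos (convex_Icc 0 t)
      · refine ContinuousOn.sub (ContinuousOn.sqrt ?_) hh
        have := hu.norm
        simp only [hE]
        fun_prop
      · rw [interior_Icc]
        exact fun σ hσ => (hder σ hσ).differentiableAt.differentiableWithinAt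
      · rw [interior_Icc]
        intro σ hσ
        rw [(hder σ hσ).deriv, sub_nonpos, div_le_iff₀ (by have := Real.sqrt_pos.2 (hEpos σ); positivity)]
        have hc : b * ‖u σ‖ ^ 2 ≤ ∑ i, ∑ j, u σ i j * (u σ * A σ) i j := by
          rw [hSq, Finset.mul_sum]
          refine Finset.sum_le_sum fun i _ => ?_
          refine (hA σ (Ioo_subset_Icc_self hσ) (u σ i)).trans (le_of_eq ?_)
          rw [Finset.sum_comm]
          refine Finset.sum_congr rfl fun j _ => ?_
          rw [Matrix.mul_apply, Finset.mul_sum]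
          refine Finset.sum_congr rfl fun k _ => ?_
          ring
        have hcs := frob_cs (u σ) (- f σ)
        rw [norm_neg] at hcs
        have hS : ∑ i, ∑ j, 2 * (u σ i j * (-(u σ * A σ) - f σ) i j) =
            - 2 * (∑ i, ∑ j, u σ i j * (u σ * A σ) i j) + 2 * ∑ i, ∑ j, u σ i j * (-f σ) i j := by
          simp only [Finset.mul_sum, ← Finset.sum_add_distrib]
          refine Finset.sum_congr rfl fun i _ => Finset.sum_congr rfl fun j _ => ?_
          simp only [Matrix.sub_apply, Matrix.neg_apply]
          ring
        rw [hS]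
        have he : Real.exp (2 * b * σ) = Real.exp (b * σ) * Real.exp (b * σ) := by
          rw [← Real.exp_add]; congr 1; ring
        have hle : Real.exp (b * σ) * ‖u σ‖ ≤ Real.sqrt (E σ) := by
          apply Real.le_sqrt_of_sq_le
          simp only [hE, he]
          nlinarith [sq_nonneg ε]
        have hfin := mul_le_mul (hf σ hσ) hle (by positivity)
          (le_trans (by positivity) (hf σ hσ))
        have hep := Real.exp_pos (2 * b * σ)
        calc _ ≤ Real.exp (2 * b * σ) * (2 * b) * ‖u σ‖ ^ 2 +
              Real.exp (2 * b * σ) * (-2 * (b * ‖u σ‖ ^ 2) + 2 * (‖u σ‖ * ‖f σ‖)) := by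
              have : -2 * (∑ i, ∑ j, u σ i j * (u σ * A σ) i j) + 2 * ∑ i, ∑ j, u σ i j * (-f σ) i j ≤
                  -2 * (b * ‖u σ‖ ^ 2) + 2 * (‖u σ‖ * ‖f σ‖) := by linarith
              have := mul_le_mul_of_nonneg_left this hep.le
              linarith
          _ = 2 * (Real.exp (b * σ) * ‖f σ‖ * (Real.exp (b * σ) * ‖u σ‖)) := by
              rw [he]; ring
          _ ≤ _ := by linarith
    have h0 : (0:ℝ) ∈ Icc 0 t := ⟨le_rfl, hτ.1.trans hτ.2⟩
    have hm := hW h0 hτ hτ.1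
    simp only at hm
    have hle : Real.exp (b * τ) * ‖u τ‖ ≤ Real.sqrt (E τ) := by
      apply Real.le_sqrt_of_sq_le
      have he : Real.exp (2 * b * τ) = Real.exp (b * τ) * Real.exp (b * τ) := by
        rw [← Real.exp_add]; congr 1; ring
      simp only [hE, he]
      nlinarith [sq_nonneg ε]
    have h0' : Real.sqrt (E 0) ≤ ‖u 0‖ + ε := by
      apply Real.sqrt_le_iff.2 ⟨by positivity, ?_⟩
      simp only [hE, mul_zero, Real.exp_zero]
      nlinarith [norm_nonneg (u 0)]
    linarith
  exact le_of_forall_pos_le_add key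

lemma leibniz_comm_gen {F : Type*} [NormedAddCommGroup F] [NormedSpace ℝ F]
    (mul : F →ₗ[ℝ] F →ₗ[ℝ] F) (hmul : ∀ x y, ‖mul x y‖ ≤ ‖x‖ * ‖y‖)
    {E : Type*} [NormedAddCommGroup E] [NormedSpace ℝ E]
    {S : Set E} (hS : UniqueDiffOn ℝ S) {K A : E → F} {n : WithTop ℕ∞}
    (hK : ContDiffOn ℝ n K S) (hA : ContDiffOn ℝ n A S) {l : ℕ} (hl : (l : WithTop ℕ∞) ≤ n)
    {x : E} (hx : x ∈ S) (m : Fin l → E) :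
    ‖iteratedFDerivWithin ℝ l (fun z => mul (K z) (A z)) S x m -
      mul (iteratedFDerivWithin ℝ l K S x m) (A x)‖ ≤
    (∑ j ∈ Finset.range l, (l.choose j : ℝ) * ‖iteratedFDerivWithin ℝ j K S x‖ *
      ‖iteratedFDerivWithin ℝ (l - j) A S x‖) * ∏ i, ‖m i‖ := by
  have hb : ∀ x y, ‖mul x y‖ ≤ 1 * ‖x‖ * ‖y‖ := by simpa using hmul
  let B : F →L[ℝ] F →L[ℝ] F := LinearMap.mkContinuous₂ mul 1 hb
  have hBap : ∀ x y, B x y = mul x y := fun x y => rfl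
  have hBn : ‖B‖ ≤ 1 := LinearMap.mkContinuous₂_norm_le _ zero_le_one _
  simp only [← hBap]
  set R := B.flip (A x) with hR
  have hsub : ContDiffOn ℝ n (fun z => A z - A x) S := hA.sub contDiffOn_const
  have e1 : (fun z => B (K z) (A z)) = (R ∘ K) + (fun z => B (K z) (A z - A x)) := by
    funext z
    simp [hR]
  have hB : ContDiffOn ℝ n (fun z => B (K z) (A z - A x)) S :=
    B.isBoundedBilinearMap.contDiff.comp_contDiffOn (hK.prodMk hsub)
  have hRK : ContDiffOn ℝ n (R ∘ K) S := R.contDiff.comp_contDiffOn hK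
  have e2 : iteratedFDerivWithin ℝ l (fun z => B (K z) (A z)) S x m -
      B (iteratedFDerivWithin ℝ l K S x m) (A x) =
      iteratedFDerivWithin ℝ l (fun z => B (K z) (A z - A x)) S x m := by
    rw [e1, iteratedFDerivWithin_add_apply ((hRK.of_le hl) x hx) ((hB.of_le hl) x hx) hS hx,
      R.iteratedFDerivWithin_comp_left (hK x hx) hS hx hl]
    simp [hR]
  rw [e2]
  refine (ContinuousMultilinearMap.le_opNorm _ m).trans ?_
  gcongr
  refine (B.norm_iteratedFDerivWithin_le_of_bilinear_of_le_one hK hsub hS hx hl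
    hBn).trans ?_
  rw [Finset.sum_range_succ]
  have hz : ∀ k : ℕ, k = 0 → ‖iteratedFDerivWithin ℝ k (fun z => A z - A x) S x‖ = 0 := by
    rintro k rfl
    rw [norm_iteratedFDerivWithin_zero, sub_self, norm_zero]
  rw [hz (l - l) (Nat.sub_self l), mul_zero, add_zero]
  refine le_of_eq (Finset.sum_congr rfl fun j hj => ?_)
  congr 2
  have hj' := Finset.mem_range.1 hj
  have : (fun z => A z - A x) = A - fun _ => A x := rfl
  rw [this, iteratedFDerivWithin_sub_apply
    ((hA.of_le (le_trans (by exact_mod_cast Nat.sub_le _ _) hl)) x hx)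
    contDiffWithinAt_const hS hx, iteratedFDerivWithin_const_of_ne (by omega)]
  simp

lemma leibniz_comm {N : ℕ} {E : Type*} [NormedAddCommGroup E] [NormedSpace ℝ E]
    {S : Set E} (hS : UniqueDiffOn ℝ S) {K A : E → Matrix (Fin N) (Fin N) ℝ} {n : WithTop ℕ∞}
    (hK : ContDiffOn ℝ n K S) (hA : ContDiffOn ℝ n A S) {l : ℕ} (hl : (l : WithTop ℕ∞) ≤ n)
    {x : E} (hx : x ∈ S) (m : Fin l → E) :
    ‖iteratedFDerivWithin ℝ l (fun z => K z * A z) S x m -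
      iteratedFDerivWithin ℝ l K S x m * A x‖ ≤
    (∑ j ∈ Finset.range l, (l.choose j : ℝ) * ‖iteratedFDerivWithin ℝ j K S x‖ *
      ‖iteratedFDerivWithin ℝ (l - j) A S x‖) * ∏ i, ‖m i‖ :=
  leibniz_comm_gen (LinearMap.mul ℝ (Matrix (Fin N) (Fin N) ℝ))
    (fun x y => by exact_mod_cast Matrix.frobenius_nnnorm_mul x y) hS hK hA hl hx m

/-- Evaluation of a curve of multilinear maps. -/
lemma eval_deriv {F E : Type*} [NormedAddCommGroup F] [NormedSpace ℝ F]
    [NormedAddCommGroup E] [NormedSpace ℝ E] {l : ℕ}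
    {g : ℝ → ContinuousMultilinearMap ℝ (fun _ : Fin l => E) F}
    {g' : ContinuousMultilinearMap ℝ (fun _ : Fin l => E) F} {τ : ℝ} (h : HasDerivAt g g' τ)
    (m : Fin l → E) : HasDerivAt (fun τ => g τ m) (g' m) τ :=
  (ContinuousMultilinearMap.apply ℝ (fun _ : Fin l => E) F m).hasFDerivAt.comp_hasDerivAt τ h

lemma eval_cont {F E : Type*} [NormedAddCommGroup F] [NormedSpace ℝ F]
    [NormedAddCommGroup E] [NormedSpace ℝ E] {l : ℕ}
    {g : ℝ → ContinuousMultilinearMap ℝ (fun _ : Fin l => E) F} {S : Set ℝ}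
    (h : ContinuousOn g S) (m : Fin l → E) : ContinuousOn (fun τ => g τ m) S :=
  (ContinuousMultilinearMap.apply ℝ (fun _ : Fin l => E) F m).continuous.comp_continuousOn h

/-- The hypotheses at a fixed time horizon. -/
structure Hyp (L N : ℕ) {E : Type*} [NormedAddCommGroup E] [NormedSpace ℝ E] (s c₀ c₁ t : ℝ)
    (A K : ℝ → E → Matrix (Fin N) (Fin N) ℝ) : Prop where
  c0 : 0 < c₀
  c0' : c₀ < 1
  c1 : 1 < c₁
  smA : ∀ τ ∈ Icc (0 : ℝ) t, ContDiffOn ℝ (L : WithTop ℕ∞) (A τ) {0}ᶜ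
  coer : ∀ τ ∈ Icc (0 : ℝ) t, ∀ ξ : E, ξ ≠ 0 → ∀ v : Fin N → ℝ,
            c₀ * ‖ξ‖ ^ s * (∑ i, (v i) ^ 2) ≤ ∑ i, ∑ j, v i * A τ ξ i j * v j
  bd : ∀ l' : ℕ, l' ≤ L → ∀ τ ∈ Icc (0 : ℝ) t, ∀ ξ : E, ξ ≠ 0 →
            ‖iteratedFDerivWithin ℝ l' (A τ) {0}ᶜ ξ‖ ≤ c₁ * ‖ξ‖ ^ (s - (l' : ℝ))
  smK : ∀ τ ∈ Icc (0 : ℝ) t, ContDiffOn ℝ (L : WithTop ℕ∞) (K τ) {0}ᶜ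
  cK : ∀ l' : ℕ, l' ≤ L → ∀ ξ : E, ξ ≠ 0 →
    ContinuousOn (fun τ => iteratedFDerivWithin ℝ l' (K τ) {0}ᶜ ξ) (Icc 0 t)
  atZero : ∀ ξ : E, ξ ≠ 0 → K 0 ξ = 1
  ev : ∀ l' : ℕ, l' ≤ L → ∀ ξ : E, ξ ≠ 0 → ∀ τ ∈ Ioo (0 : ℝ) t,
            HasDerivAt (fun τ' => iteratedFDerivWithin ℝ l' (K τ') {0}ᶜ ξ)
              (-(iteratedFDerivWithin ℝ l' (fun ζ => K τ ζ * A τ ζ) {0}ᶜ ξ)) τ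

section
variable {L N : ℕ} {E : Type*} [NormedAddCommGroup E] [NormedSpace ℝ E] {s c₀ c₁ t : ℝ}
    {A K : ℝ → E → Matrix (Fin N) (Fin N) ℝ}

lemma Hyp.zero_bound (H : Hyp L N s c₀ c₁ t A K) (τ : ℝ) (hτ : τ ∈ Icc 0 t) (ξ : E) (hξ : ξ ≠ 0) :
    Real.exp (c₀ * ‖ξ‖ ^ s * τ) * ‖K τ ξ‖ ≤ ‖(1 : Matrix (Fin N) (Fin N) ℝ)‖ := by
  have := energy (t := t) (b := c₀ * ‖ξ‖ ^ s) (fun τ => K τ ξ) (fun _ => 0) (fun τ => A τ ξ)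
    (fun _ => 0) (fun _ => 0) ?_ ?_ (fun τ hτ v => H.coer τ hτ ξ hξ v) continuousOn_const
    (fun τ _ => hasDerivAt_const τ 0) (by simp) τ hτ
  · simpa [H.atZero ξ hξ] using this
  · have := eval_cont (H.cK 0 (Nat.zero_le _) ξ hξ) (fun _ => (0 : E))
    simp only [iteratedFDerivWithin_zero_apply] at this
    exact this
  · intro σ hσ
    have := eval_deriv (H.ev 0 (Nat.zero_le _) ξ hξ σ hσ) (fun _ => (0 : E))
    simp only [iteratedFDerivWithin_zero_apply, neg_apply] at this
    refine HasDerivAt.congr_deriv this ?_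
    simp

lemma Hyp.step (H : Hyp L N s c₀ c₁ t A K) {l : ℕ} (hl1 : 1 ≤ l) (hl : l ≤ L) {P Q a : ℝ}
    (ξ : E) (hξ : ξ ≠ 0) (ha : 2 * a = c₀ * ‖ξ‖ ^ s) (ha0 : 0 ≤ a) (hP : 0 ≤ P) (hQ : 0 ≤ Q)
    (hb : ∀ σ ∈ Ioo 0 t, ∑ j ∈ Finset.range l, (l.choose j : ℝ) *
      ‖iteratedFDerivWithin ℝ j (K σ) {0}ᶜ ξ‖ * ‖iteratedFDerivWithin ℝ (l - j) (A σ) {0}ᶜ ξ‖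
      ≤ (P + Q * a * σ) * Real.exp (-(a * σ)))
    (τ : ℝ) (hτ : τ ∈ Icc 0 t) :
    ‖iteratedFDerivWithin ℝ l (K τ) {0}ᶜ ξ‖ ≤ (P + Q) * τ * Real.exp (-(a * τ)) := by
  have hS : UniqueDiffOn ℝ ({0}ᶜ : Set E) := isOpen_compl_singleton.uniqueDiffOn
  refine ContinuousMultilinearMap.opNorm_le_bound (by have := hτ.1; positivity) fun m => ?_
  set p := ∏ i, ‖m i‖ with hp
  have hp0 : 0 ≤ p := by positivity
  have h0 : iteratedFDerivWithin ℝ l (K 0) {0}ᶜ ξ m = 0 := by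
    rw [iteratedFDerivWithin_congr (s := {0}ᶜ) (f := fun _ => (1 : Matrix (Fin N) (Fin N) ℝ))
      (fun x hx => H.atZero x hx) hξ, iteratedFDerivWithin_const_of_ne (by omega)]
    rfl
  have hhd : ∀ σ, HasDerivAt (fun σ : ℝ => (P + Q) * p * (σ * Real.exp (a * σ)))
      ((P + Q) * p * (1 * Real.exp (a * σ) + σ * (Real.exp (a * σ) * a))) σ := by
    intro σ
    have h2 : HasDerivAt (fun σ => Real.exp (a * σ)) (Real.exp (a * σ) * a) σ := by
      simpa using ((hasDerivAt_id σ).const_mul a).exp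
    exact ((hasDerivAt_id σ).mul h2).const_mul _
  have := energy (t := t) (b := c₀ * ‖ξ‖ ^ s) (fun τ => iteratedFDerivWithin ℝ l (K τ) {0}ᶜ ξ m)
    (fun σ => iteratedFDerivWithin ℝ l (fun z => K σ z * A σ z) {0}ᶜ ξ m -
      iteratedFDerivWithin ℝ l (K σ) {0}ᶜ ξ m * A σ ξ) (fun τ => A τ ξ) _ _
    (eval_cont (H.cK l hl ξ hξ) m) ?_ (fun τ hτ v => H.coer τ hτ ξ hξ v)
    (fun σ _ => (hhd σ).continuousAt.continuousWithinAt) (fun σ _ => hhd σ) ?_ τ hτ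
  · simp only [h0, norm_zero, zero_mul, mul_zero, sub_zero, zero_add] at this
    have he : Real.exp (a * τ) = Real.exp (c₀ * ‖ξ‖ ^ s * τ) * Real.exp (-(a * τ)) := by
      rw [← Real.exp_add, ← ha]; congr 1; ring
    rw [he] at this
    have hpos := Real.exp_pos (c₀ * ‖ξ‖ ^ s * τ)
    refine le_of_mul_le_mul_left (this.trans (le_of_eq ?_)) hpos
    ring
  · intro σ hσ
    have := eval_deriv (H.ev l hl ξ hξ σ hσ) m
    rw [neg_apply] at this
    have hXY : ∀ X Y : Matrix (Fin N) (Fin N) ℝ, -X = -Y - (X - Y) := fun X Y => by abel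
    exact HasDerivAt.congr_deriv this (hXY _ _)
  · intro σ hσ
    have hσ' := Ioo_subset_Icc_self hσ
    have hle := leibniz_comm hS (H.smK σ hσ') (H.smA σ hσ') (l := l) (by exact_mod_cast hl)
      (x := ξ) hξ m
    have h1 := mul_le_mul_of_nonneg_right (hb σ hσ) hp0
    have he : Real.exp (c₀ * ‖ξ‖ ^ s * σ) * Real.exp (-(a * σ)) = Real.exp (a * σ) := by
      rw [← Real.exp_add, ← ha]; congr 1; ring
    refine (mul_le_mul_of_nonneg_left (hle.trans h1) (Real.exp_pos _).le).trans ?_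
    calc _ = (P + Q * a * σ) * p * (Real.exp (c₀ * ‖ξ‖ ^ s * σ) * Real.exp (-(a * σ))) := by ring
      _ = (P * 1 + Q * (a * σ)) * (p * Real.exp (a * σ)) := by rw [he]; ring
      _ ≤ ((P + Q) * (1 + a * σ)) * (p * Real.exp (a * σ)) := by
        gcongr
        have := mul_nonneg ha0 hσ.1.le
        nlinarith
      _ = _ := by ring

lemma Hyp.ind_step (H : Hyp L N s c₀ c₁ t A K) {n : ℕ} {C : ℝ} (hC : 0 < C) (hl : n + 1 ≤ L)
    (ξ : E) (hξ : ξ ≠ 0)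
    (ih : ∀ l, 1 ≤ l → l ≤ n → ∀ τ ∈ Icc (0 : ℝ) t,
      ‖iteratedFDerivWithin ℝ l (K τ) {0}ᶜ ξ‖ ≤ C * (c₁ / c₀) ^ l * τ * ‖ξ‖ ^ (s - (l : ℝ)) *
        Real.exp (-(c₀ * ‖ξ‖ ^ s / 2 * τ))) (τ : ℝ) (hτ : τ ∈ Icc 0 t) :
    ‖iteratedFDerivWithin ℝ (n + 1) (K τ) {0}ᶜ ξ‖ ≤
      (‖(1 : Matrix (Fin N) (Fin N) ℝ)‖ + 2 ^ (n + 2) * C) * (c₁ / c₀) ^ (n + 1) * τ *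
        ‖ξ‖ ^ (s - ((n + 1 : ℕ) : ℝ)) * Real.exp (-(c₀ * ‖ξ‖ ^ s / 2 * τ)) := by
  have hc0 := H.c0
  have hc1 : 0 < c₁ := zero_lt_one.trans H.c1
  have hr : 0 < ‖ξ‖ := norm_pos_iff.2 hξ
  have hq : 1 ≤ c₁ / c₀ := by rw [le_div_iff₀ hc0]; linarith [H.c1, H.c0']
  have hc1q : c₁ ≤ c₁ / c₀ := by
    rw [le_div_iff₀ hc0]; nlinarith [H.c0']
  set q := c₁ / c₀ with hqd
  have hc1e : c₁ = q * c₀ := by rw [hqd]; field_simp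
  have hq0 : 0 < q := by linarith
  set b1 := ‖(1 : Matrix (Fin N) (Fin N) ℝ)‖ with hb1
  have hb10 : 0 ≤ b1 := norm_nonneg _
  set a := c₀ * ‖ξ‖ ^ s / 2 with had
  have ha0 : 0 ≤ a := by positivity
  set ρ := ‖ξ‖ ^ (s - ((n + 1 : ℕ) : ℝ)) with hρ
  have hρ0 : 0 < ρ := by positivity
  have := H.step (l := n + 1) (by omega) hl (P := b1 * q ^ (n + 1) * ρ)
    (Q := 2 ^ (n + 2) * C * q ^ (n + 1) * ρ) (a := a) ξ hξ (by rw [had]; ring) ha0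
    (by positivity) (by positivity) ?_ τ hτ
  · refine this.trans (le_of_eq ?_)
    ring
  intro σ hσ
  have hσ' := Ioo_subset_Icc_self hσ
  have hσ0 := hσ.1
  rw [Finset.sum_range_succ']
  have hfirst : ((n + 1).choose 0 : ℝ) * ‖iteratedFDerivWithin ℝ 0 (K σ) {0}ᶜ ξ‖ *
      ‖iteratedFDerivWithin ℝ (n + 1 - 0) (A σ) {0}ᶜ ξ‖ ≤
      b1 * q ^ (n + 1) * ρ * Real.exp (-(a * σ)) := by
    have h0 := H.zero_bound σ hσ' ξ hξ
    have hK0 : ‖K σ ξ‖ ≤ b1 * Real.exp (-(a * σ)) := by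
      have h1 : Real.exp (a * σ) * ‖K σ ξ‖ ≤ b1 := by
        refine le_trans ?_ h0
        gcongr
        rw [had]
        have : 0 ≤ c₀ * ‖ξ‖ ^ s := by positivity
        linarith
      rw [Real.exp_neg, ← div_eq_mul_inv, le_div_iff₀ (Real.exp_pos _)]
      linarith
    have hA := H.bd (n + 1) hl σ hσ' ξ hξ
    rw [norm_iteratedFDerivWithin_zero, Nat.choose_zero_right, Nat.cast_one, one_mul, Nat.sub_zero]
    have hcq : c₁ ≤ q ^ (n + 1) := hc1q.trans (le_self_pow₀ hq (by omega))
    calc _ ≤ (b1 * Real.exp (-(a * σ))) * (c₁ * ρ) := by gcongr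
      _ ≤ (b1 * Real.exp (-(a * σ))) * (q ^ (n + 1) * ρ) := by gcongr
      _ = _ := by ring
  have hrest : ∑ k ∈ Finset.range n, ((n + 1).choose (k + 1) : ℝ) *
      ‖iteratedFDerivWithin ℝ (k + 1) (K σ) {0}ᶜ ξ‖ *
      ‖iteratedFDerivWithin ℝ (n + 1 - (k + 1)) (A σ) {0}ᶜ ξ‖ ≤
      ∑ k ∈ Finset.range n, ((n + 1).choose (k + 1) : ℝ) *
        (2 * C * q ^ (n + 1) * ρ * a * σ * Real.exp (-(a * σ))) := by
    refine Finset.sum_le_sum fun k hk => ?_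
    have hk' := Finset.mem_range.1 hk
    rw [mul_assoc]
    refine mul_le_mul_of_nonneg_left ?_ (Nat.cast_nonneg _)
    have h1 := ih (k + 1) (by omega) (by omega) σ hσ'
    have h2 := H.bd (n + 1 - (k + 1)) (by omega) σ hσ' ξ hξ
    have hcast : ((n + 1 - (k + 1) : ℕ) : ℝ) = ((n + 1 : ℕ) : ℝ) - ((k + 1 : ℕ) : ℝ) := by
      rw [Nat.cast_sub (by omega)]
    rw [hcast] at h2
    have hrr : ‖ξ‖ ^ (s - ((k + 1 : ℕ) : ℝ)) * ‖ξ‖ ^ (s - (((n + 1 : ℕ) : ℝ) - ((k + 1 : ℕ) : ℝ))) =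
        ρ * ‖ξ‖ ^ s := by
      rw [hρ, ← Real.rpow_add hr, ← Real.rpow_add hr]
      congr 1; ring
    calc _ ≤ (C * q ^ (k + 1) * σ * ‖ξ‖ ^ (s - ((k + 1 : ℕ) : ℝ)) * Real.exp (-(a * σ))) *
          (c₁ * ‖ξ‖ ^ (s - (((n + 1 : ℕ) : ℝ) - ((k + 1 : ℕ) : ℝ)))) := by gcongr
      _ = C * q ^ (k + 1) * σ * Real.exp (-(a * σ)) * c₁ * (‖ξ‖ ^ (s - ((k + 1 : ℕ) : ℝ)) *
          ‖ξ‖ ^ (s - (((n + 1 : ℕ) : ℝ) - ((k + 1 : ℕ) : ℝ)))) := by ring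
      _ = C * q ^ (k + 2) * σ * Real.exp (-(a * σ)) * (ρ * (2 * a)) := by
        rw [hrr, had, hc1e]; ring
      _ ≤ C * q ^ (n + 1) * σ * Real.exp (-(a * σ)) * (ρ * (2 * a)) := by
        have : q ^ (k + 2) ≤ q ^ (n + 1) := pow_le_pow_right₀ hq (by omega)
        gcongr
      _ = _ := by ring
  have hchoose : ∑ k ∈ Finset.range n, ((n + 1).choose (k + 1) : ℝ) ≤ 2 ^ (n + 1) := by
    have h := Nat.sum_range_choose (n + 1)
    rw [Finset.sum_range_succ, Finset.sum_range_succ'] at h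
    have h' : ∑ k ∈ Finset.range n, (n + 1).choose (k + 1) ≤ 2 ^ (n + 1) := by omega
    exact_mod_cast h'
  rw [← Finset.sum_mul] at hrest
  have hX : 0 ≤ 2 * C * q ^ (n + 1) * ρ * a * σ * Real.exp (-(a * σ)) := by positivity
  calc _ ≤ 2 ^ (n + 1) * (2 * C * q ^ (n + 1) * ρ * a * σ * Real.exp (-(a * σ))) +
        b1 * q ^ (n + 1) * ρ * Real.exp (-(a * σ)) :=
        add_le_add (hrest.trans (mul_le_mul_of_nonneg_right hchoose hX)) hfirst
    _ = _ := by ring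

end

lemma main_ind (L N : ℕ) {E : Type*} [NormedAddCommGroup E] [NormedSpace ℝ E] (s : ℝ) (n : ℕ)
    (hn : n ≤ L) : ∃ C : ℝ, 0 < C ∧ ∀ (c₀ c₁ t : ℝ) (A K : ℝ → E → Matrix (Fin N) (Fin N) ℝ),
      Hyp L N s c₀ c₁ t A K → ∀ ξ : E, ξ ≠ 0 → ∀ l, 1 ≤ l → l ≤ n → ∀ τ ∈ Icc (0 : ℝ) t,
      ‖iteratedFDerivWithin ℝ l (K τ) {0}ᶜ ξ‖ ≤ C * (c₁ / c₀) ^ l * τ * ‖ξ‖ ^ (s - (l : ℝ)) *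
        Real.exp (-(c₀ * ‖ξ‖ ^ s / 2 * τ)) := by
  induction n with
  | zero => exact ⟨1, one_pos, fun _ _ _ _ _ _ _ _ l h1 h2 => by omega⟩
  | succ n ih =>
    obtain ⟨C, hC, h⟩ := ih (by omega)
    refine ⟨‖(1 : Matrix (Fin N) (Fin N) ℝ)‖ + 2 ^ (n + 2) * C, by positivity, ?_⟩
    intro c₀ c₁ t A K H ξ hξ l hl1 hl τ hτ
    rcases Nat.lt_or_ge n l with hnl | hnl
    · obtain rfl : l = n + 1 := by omega
      exact H.ind_step hC hn ξ hξ (h c₀ c₁ t A K H ξ hξ) τ hτ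
    · refine (h c₀ c₁ t A K H ξ hξ l hl1 hnl τ hτ).trans ?_
      have hc0 := H.c0
      have hc1 : 0 < c₁ := zero_lt_one.trans H.c1
      have hτ0 := hτ.1
      have h2 : (1 : ℝ) ≤ 2 ^ (n + 2) := one_le_pow₀ (by norm_num)
      have : C ≤ ‖(1 : Matrix (Fin N) (Fin N) ℝ)‖ + 2 ^ (n + 2) * C := by
        nlinarith [norm_nonneg (1 : Matrix (Fin N) (Fin N) ℝ)]
      gcongr

/-- Bounds for the `ξ`-derivatives of the (time-reversed) Fourier transform
`𝒦` of the fundamental solution of a coercive parabolic system of order `s`. -/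
theorem xi_derivative_fundamental_solution_bound
    (d N : ℕ) (hd : 1 ≤ d) (hN : 1 ≤ N) (s : ℝ) (hs : 0 < s)
    (l : ℕ) (hl1 : 1 ≤ l) (hlL : l ≤ d + Nat.floor s + 2) :
    ∃ C : ℝ, 0 < C ∧
      ∀ c₀ c₁ t : ℝ, 0 < c₀ → c₀ < 1 → 1 < c₁ → 0 < t →
      ∀ A 𝒦 : ℝ → EuclideanSpace ℝ (Fin d) → Matrix (Fin N) (Fin N) ℝ,
        -- A is jointly continuous on [0,t] × (ℝ^d \ {0})
        ContinuousOn (fun p : ℝ × EuclideanSpace ℝ (Fin d) => A p.1 p.2)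
          (Icc 0 t ×ˢ {0}ᶜ) →
        -- A is L-times continuously differentiable in ξ
        (∀ τ ∈ Icc (0 : ℝ) t, ContDiffOn ℝ (d + Nat.floor s + 2) (A τ) {0}ᶜ) →
        -- the ξ-derivatives of A are jointly continuous
        (∀ l' : ℕ, l' ≤ d + Nat.floor s + 2 →
          ContinuousOn (fun p : ℝ × EuclideanSpace ℝ (Fin d) =>
              iteratedFDerivWithin ℝ l' (A p.1) {0}ᶜ p.2)
            (Icc 0 t ×ˢ {0}ᶜ)) →
        -- (i) coercivity of A
        (∀ τ ∈ Icc (0 : ℝ) t, ∀ ξ : EuclideanSpace ℝ (Fin d), ξ ≠ 0 →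
          ∀ v : Fin N → ℝ,
            c₀ * ‖ξ‖ ^ s * (∑ i, (v i) ^ 2) ≤ ∑ i, ∑ j, v i * A τ ξ i j * v j) →
        -- (ii) symbol-type bounds for the ξ-derivatives of A
        (∀ l' : ℕ, l' ≤ d + Nat.floor s + 2 → ∀ τ ∈ Icc (0 : ℝ) t,
          ∀ ξ : EuclideanSpace ℝ (Fin d), ξ ≠ 0 →
            ‖iteratedFDerivWithin ℝ l' (A τ) {0}ᶜ ξ‖ ≤ c₁ * ‖ξ‖ ^ (s - (l' : ℝ))) →
        -- 𝒦 is L-times continuously differentiable in ξ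
        (∀ τ ∈ Icc (0 : ℝ) t, ContDiffOn ℝ (d + Nat.floor s + 2) (𝒦 τ) {0}ᶜ) →
        -- 𝒦 and its ξ-derivatives are jointly continuous
        (∀ l' : ℕ, l' ≤ d + Nat.floor s + 2 →
          ContinuousOn (fun p : ℝ × EuclideanSpace ℝ (Fin d) =>
              iteratedFDerivWithin ℝ l' (𝒦 p.1) {0}ᶜ p.2)
            (Icc 0 t ×ˢ {0}ᶜ)) →
        -- initial condition
        (∀ ξ : EuclideanSpace ℝ (Fin d), ξ ≠ 0 → 𝒦 0 ξ = 1) →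
        -- evolution equation for the ξ-derivatives: ∂_τ(∇_ξ^l 𝒦) = −∇_ξ^l(𝒦·A)
        (∀ l' : ℕ, l' ≤ d + Nat.floor s + 2 →
          ∀ ξ : EuclideanSpace ℝ (Fin d), ξ ≠ 0 → ∀ τ ∈ Ioo (0 : ℝ) t,
            HasDerivAt (fun τ' => iteratedFDerivWithin ℝ l' (𝒦 τ') {0}ᶜ ξ)
              (-(iteratedFDerivWithin ℝ l' (fun ζ => 𝒦 τ ζ * A τ ζ) {0}ᶜ ξ)) τ) →
        -- conclusion
        ∀ τ ∈ Ioc (0 : ℝ) t, ∀ ξ : EuclideanSpace ℝ (Fin d), ξ ≠ 0 →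
          ‖iteratedFDerivWithin ℝ l (𝒦 τ) {0}ᶜ ξ‖ ≤
            C * c₀⁻¹ ^ l * c₁ ^ l * τ * ‖ξ‖ ^ (s - (l : ℝ)) *
              Real.exp (-(c₀ / 2) * τ * ‖ξ‖ ^ s) := by
  obtain ⟨C, hC, h⟩ := main_ind (E := EuclideanSpace ℝ (Fin d)) (d + Nat.floor s + 2) N s l hlL
  refine ⟨C, hC, ?_⟩
  intro c₀ c₁ t hc0 hc0' hc1 ht A K _ smA _ coer bd smK cK hinit ev τ hτ ξ hξ
  have H : Hyp (d + Nat.floor s + 2) N s c₀ c₁ t A K :=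
    { c0 := hc0
      c0' := hc0'
      c1 := hc1
      smA := fun τ hτ => by exact_mod_cast smA τ hτ
      coer := coer
      bd := bd
      smK := fun τ hτ => by exact_mod_cast smK τ hτ
      cK := fun l' hl' ξ hξ => (cK l' hl').comp (f := fun τ : ℝ => (τ, ξ))
        (by fun_prop) (fun τ hτ => ⟨hτ, hξ⟩)
      atZero := hinit
      ev := ev }
  refine (h c₀ c₁ t A K H ξ hξ l hl1 le_rfl τ (Ioc_subset_Icc_self hτ)).trans (le_of_eq ?_)
  have e : -(c₀ * ‖ξ‖ ^ s / 2 * τ) = -(c₀ / 2) * τ * ‖ξ‖ ^ s := by ring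
  rw [e, div_eq_mul_inv, mul_pow]
  ring
end

section
/- Let d ≥ 1 be an integer, σ > −d a real number, and ε ∈ (0,1). Suppose m : ℝ^d → ℂ is (d+2)-times continuously differentiable on ℝ^d \ {0} with |∇^k m(ξ)| ≤ |ξ|^{σ−k} for all integers 0 ≤ k ≤ d+2 and all ξ ≠ 0. Let v : ℝ^d → ℂ be a measurable function with ∫_{ℝ^d} (|ξ|^{σ−ε} + |ξ|^{σ+ε}) |v(ξ)| dξ < ∞, and define T(x) := ∫_{ℝ^d} m(ξ) v(ξ) e^{i x·ξ} dξ, Λ₊(x) := ∫_{ℝ^d} |ξ|^{σ+ε} v(ξ) e^{i x·ξ} dξ, Λ₋(x) := ∫_{ℝ^d} |ξ|^{σ−ε} v(ξ) e^{i x·ξ} dξ. Then there is a constant C depending only on d, σ and ε such that sup_x |T(x)| ≤ C (sup_x |Λ₊(x)|)^{1/2} (sup_x |Λ₋(x)|)^{1/2}. -/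
open MeasureTheory Set
open scoped InnerProductSpace

section
open scoped FourierTransform

lemma mib_L1 (V : Type*) [NormedAddCommGroup V] [InnerProductSpace ℝ V] [FiniteDimensional ℝ V]
    [MeasurableSpace V] [BorelSpace V] (n : ℕ) (hn : Module.finrank ℝ V = n) :
    ∃ K : ℝ, 0 < K ∧ ∀ (g : V → ℂ) (B : ℝ), ContDiff ℝ (n + 1 : ℕ) g →
      (∀ η, 2 < ‖η‖ → g η = 0) → (∀ k ≤ n + 1, ∀ η, ‖iteratedFDeriv ℝ k g η‖ ≤ B) →
      Integrable g ∧ Integrable (𝓕 g) ∧ ∫ y, ‖𝓕 g y‖ ≤ K * B := by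
  set A : ℝ := (volume (Metric.closedBall (0 : V) 2)).toReal with hA
  set J : ℝ := ∫ y : V, (1 + ‖y‖) ^ (-((n : ℝ) + 1)) with hJ
  have hJi : Integrable (fun y : V => (1 + ‖y‖) ^ (-((n : ℝ) + 1))) :=
    integrable_one_add_norm (by rw [hn]; linarith)
  have hJ0 : 0 ≤ J := integral_nonneg fun y => by positivity
  have hA0 : 0 ≤ A := ENNReal.toReal_nonneg
  set Q : ℝ := 2 ^ n * (A + 2 ^ (n+1) * ((n + 2) * A)) with hQ
  have hQ0 : 0 ≤ Q := by positivity
  refine ⟨Q * J + 1, by positivity, ?_⟩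
  intro g B hg hsupp hB
  have hB0 : 0 ≤ B := (norm_nonneg _).trans (hB 0 (by omega) 0)
  have hts : tsupport g ⊆ Metric.closedBall 0 2 := by
    apply closure_minimal _ Metric.isClosed_closedBall
    intro η hη
    by_contra h
    apply hη
    apply hsupp
    simpa using h
  have hcs : HasCompactSupport g := HasCompactSupport.of_support_subset_isCompact
    (isCompact_closedBall 0 2) (subset_closure.trans hts)
  have hgi : Integrable g := hg.continuous.integrable_of_hasCompactSupport hcs
  have hint : ∀ k ≤ n + 1, Integrable (fun η => ‖iteratedFDeriv ℝ k g η‖) ∧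
      ∫ η, ‖iteratedFDeriv ℝ k g η‖ ≤ B * A := by
    intro k hk
    have hc : Continuous (iteratedFDeriv ℝ k g) :=
      hg.continuous_iteratedFDeriv (by exact_mod_cast hk)
    have hi := hc.integrable_of_hasCompactSupport (μ := volume) (hcs.iteratedFDeriv k)
    refine ⟨hi.norm, ?_⟩
    have h1 : ∫ η, ‖iteratedFDeriv ℝ k g η‖ =
        ∫ η in Metric.closedBall 0 2, ‖iteratedFDeriv ℝ k g η‖ := by
      symm
      apply setIntegral_eq_integral_of_forall_compl_eq_zero
      intro η hη
      rw [norm_eq_zero]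
      by_contra h
      exact hη (hts (support_iteratedFDeriv_subset k h))
    rw [h1]
    calc _ ≤ ∫ η in Metric.closedBall (0:V) 2, B := by
          apply integral_mono hi.norm.integrableOn
          · exact integrableOn_const (measure_closedBall_lt_top).ne
          · intro η; exact hB k hk η
      _ = B * A := by simp [hA, Measure.real, mul_comm]
  have hN : ∀ j : ℕ, j ≤ n + 1 → ∀ y, ‖y‖ ^ j * ‖𝓕 g y‖ ≤ 2 ^ j * ((j + 1) * (B * A)) := by
    intro j hj y
    have := Real.pow_mul_norm_iteratedFDeriv_fourier_le (f := g) (K := 0) (N := (n+1 : ℕ))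
      (by exact_mod_cast hg) ?_ (k := 0) (n := j) (by simp) (by exact_mod_cast hj) y
    · simp only [norm_iteratedFDeriv_zero] at this
      refine this.trans ?_
      simp
      have h2 : ∑ i ∈ Finset.range (j+1), ∫ (v : V), ‖iteratedFDeriv ℝ i g v‖ ≤ (j + 1) * (B * A) := by
        calc _ ≤ ∑ i ∈ Finset.range (j+1), B * A := Finset.sum_le_sum fun i hi =>
              (hint i (by have := Finset.mem_range.1 hi; omega)).2
          _ = _ := by simp
      simp at *
      nlinarith [h2]
    · intro k i hk hi
      have hk : k = 0 := by simpa using hk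
      subst hk
      simpa using (hint i (by exact_mod_cast hi)).1
  have hpt : ∀ y, ‖𝓕 g y‖ ≤ (Q * B) * (1 + ‖y‖) ^ (-((n : ℝ) + 1)) := by
    intro y
    have h0 := hN 0 (by omega) y
    have h1 := hN (n+1) le_rfl y
    have h2 := add_pow_le (zero_le_one) (norm_nonneg y) (n+1)
    have hp : (0:ℝ) < (1 + ‖y‖) ^ (n+1) := by positivity
    rw [Real.rpow_neg (by positivity), ← div_eq_mul_inv]
    have : (1 + ‖y‖) ^ ((n:ℝ) + 1) = (1 + ‖y‖) ^ (n+1) := by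
      rw [← Real.rpow_natCast]; push_cast; rfl
    rw [this, le_div_iff₀ hp]
    calc ‖𝓕 g y‖ * (1 + ‖y‖) ^ (n+1) ≤ ‖𝓕 g y‖ * (2 ^ n * (1 + ‖y‖ ^ (n+1))) := by
          gcongr; simpa using h2
      _ = 2 ^ n * (‖𝓕 g y‖ + ‖y‖ ^ (n+1) * ‖𝓕 g y‖) := by ring
      _ ≤ 2 ^ n * (B * A + 2 ^ (n+1) * (((n+1:ℕ) + 1) * (B * A))) := by
          gcongr; simpa using h0
      _ = Q * B := by rw [hQ]; push_cast; ring
  have hFc : Continuous (𝓕 g) := VectorFourier.fourierIntegral_continuous Real.continuous_fourierChar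
    (by exact continuous_inner) hgi
  have hFi : Integrable (𝓕 g) := (hJi.const_mul (Q * B)).mono' hFc.aestronglyMeasurable
    (Filter.Eventually.of_forall hpt)
  refine ⟨hgi, hFi, ?_⟩
  calc _ ≤ ∫ y : V, (Q * B) * (1 + ‖y‖) ^ (-((n : ℝ) + 1)) :=
        integral_mono hFi.norm (hJi.const_mul _) hpt
    _ = Q * B * J := by rw [integral_const_mul]
    _ ≤ (Q * J + 1) * B := by nlinarith
lemma mib_L2 (V : Type*) [NormedAddCommGroup V] [InnerProductSpace ℝ V] [FiniteDimensional ℝ V]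
    (n : ℕ) (σ : ℝ) (w : V → ℂ) (hw : ContDiff ℝ (n + 1 : ℕ) w) (hw1 : ∀ η, ‖η‖ < 1/2 → w η = 0)
    (hw2 : ∀ η, 2 < ‖η‖ → w η = 0) :
    ∃ B : ℝ, 0 < B ∧ ∀ m : V → ℂ, ContDiffOn ℝ (n + 1 : ℕ) m {0}ᶜ →
      (∀ k : ℕ, k ≤ n + 1 → ∀ ξ : V, ξ ≠ 0 →
          ‖iteratedFDerivWithin ℝ k m {0}ᶜ ξ‖ ≤ ‖ξ‖ ^ (σ - (k : ℝ))) →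
      ContDiff ℝ (n + 1 : ℕ) (fun η => m η * w η) ∧
      ∀ k ≤ n + 1, ∀ η, ‖iteratedFDeriv ℝ k (fun η => m η * w η) η‖ ≤ B := by
  have hwc : HasCompactSupport w := HasCompactSupport.of_support_subset_isCompact
    (isCompact_closedBall 0 2) (by
      intro η hη
      by_contra h
      exact hη (hw2 η (by simpa using h)))
  have hW : ∀ k : ℕ, ∃ W : ℝ, k ≤ n + 1 → ∀ η, ‖iteratedFDeriv ℝ k w η‖ ≤ W := by
    intro k
    by_cases hk : k ≤ n + 1
    · have hc : Continuous (iteratedFDeriv ℝ k w) :=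
        hw.continuous_iteratedFDeriv (by exact_mod_cast hk)
      obtain ⟨W, hW⟩ := hc.bounded_above_of_compact_support (hwc.iteratedFDeriv k)
      exact ⟨W, fun _ => hW⟩
    · exact ⟨0, fun h => absurd h hk⟩
  choose Wk hWk using hW
  set W : ℝ := ∑ k ∈ Finset.range (n + 2), |Wk k| with hWdef
  have hWb : ∀ k ≤ n + 1, ∀ η, ‖iteratedFDeriv ℝ k w η‖ ≤ W := by
    intro k hk η
    refine (hWk k hk η).trans ((le_abs_self _).trans ?_)
    exact Finset.single_le_sum (f := fun k => |Wk k|) (fun i _ => abs_nonneg _)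
      (Finset.mem_range.2 (by omega))
  have hW0 : 0 ≤ W := Finset.sum_nonneg fun i _ => abs_nonneg _
  set R : ℝ := ∑ k ∈ Finset.range (n + 2), (2:ℝ) ^ |σ - k| with hR
  have hR0 : 0 ≤ R := Finset.sum_nonneg fun i _ => by positivity
  have hRb : ∀ k ≤ n + 1, ∀ η : V, 1/2 ≤ ‖η‖ → ‖η‖ ≤ 2 → ‖η‖ ^ (σ - (k:ℝ)) ≤ R := by
    intro k hk η h1 h2
    have : ‖η‖ ^ (σ - (k:ℝ)) ≤ 2 ^ |σ - k| := by
      rcases le_total 0 (σ - (k:ℝ)) with h | h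
      · rw [abs_of_nonneg h]; gcongr
      · rw [abs_of_nonpos h, Real.rpow_neg (by norm_num), ← Real.inv_rpow (by norm_num)]
        apply Real.rpow_le_rpow_of_nonpos (by norm_num) (by simpa using h1) h
    refine this.trans ?_
    exact Finset.single_le_sum (f := fun k : ℕ => (2:ℝ) ^ |σ - k|) (fun i _ => by positivity)
      (Finset.mem_range.2 (by omega))
  refine ⟨2 ^ (n+1) * R * W + 1, by positivity, ?_⟩
  intro m hm hmb
  set g : V → ℂ := fun η => m η * w η with hg
  have ho : IsOpen ({0}ᶜ : Set V) := isOpen_compl_singleton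
  have hts : tsupport g ⊆ {η | 1/2 ≤ ‖η‖ ∧ ‖η‖ ≤ 2} := by
    apply closure_minimal
    · intro η hη
      by_contra h
      apply hη
      simp only [mem_ofPred_eq, not_and_or, not_le] at h
      rcases h with h | h
      · simp [hg, hw1 η h]
      · simp [hg, hw2 η h]
    · exact (isClosed_le continuous_const continuous_norm).inter
        (isClosed_le continuous_norm continuous_const)
  refine ⟨?_, ?_⟩
  · rw [contDiff_iff_contDiffAt]
    intro η
    by_cases h : η = 0
    · subst h
      have : g =ᶠ[nhds 0] fun _ => 0 := by
        filter_upwards [Metric.ball_mem_nhds (0:V) (show (0:ℝ) < 1/2 by norm_num)] with η hη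
        simp [hg, hw1 η (by simpa using hη)]
      exact contDiffAt_const.congr_of_eventuallyEq this
    · exact (hm.contDiffAt (ho.mem_nhds h)).mul hw.contDiffAt
  · intro k hk η
    by_cases hη : 1/2 ≤ ‖η‖ ∧ ‖η‖ ≤ 2
    · have hne : η ≠ 0 := by
        rintro rfl
        have := hη.1; norm_num at this
      rw [← iteratedFDerivWithin_of_isOpen k ho (show η ∈ ({0}ᶜ : Set V) from hne)]
      refine (norm_iteratedFDerivWithin_mul_le hm hw.contDiffOn ho.uniqueDiffOn hne
        (n := k) (by exact_mod_cast hk)).trans ?_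
      calc _ ≤ ∑ i ∈ Finset.range (k+1), (k.choose i : ℝ) * R * W := by
            apply Finset.sum_le_sum
            intro i hi
            have hi' := Finset.mem_range.1 hi
            have h1 := (hmb i (by omega) η hne).trans (hRb i (by omega) η hη.1 hη.2)
            have h2 := hWb (k - i) (by omega) η
            rw [← iteratedFDerivWithin_of_isOpen _ ho (show η ∈ ({0}ᶜ : Set V) from hne)] at h2
            gcongr
        _ = 2 ^ k * R * W := by
            rw [← Finset.sum_mul, ← Finset.sum_mul]
            norm_cast
            rw [Nat.sum_range_choose]
        _ ≤ 2 ^ (n+1) * R * W := by gcongr; norm_num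
        _ ≤ _ := by linarith
    · have : iteratedFDeriv ℝ k g η = 0 := by
        by_contra h
        exact hη (hts (support_iteratedFDeriv_subset k h))
      rw [this, norm_zero]; positivity

lemma mib_L3 (V : Type*) [NormedAddCommGroup V] [InnerProductSpace ℝ V]
    (N : ℕ) (σ : ℝ) (m : V → ℂ) (hm : ContDiffOn ℝ N m {0}ᶜ)
    (hmb : ∀ k : ℕ, k ≤ N → ∀ ξ : V, ξ ≠ 0 →
          ‖iteratedFDerivWithin ℝ k m {0}ᶜ ξ‖ ≤ ‖ξ‖ ^ (σ - (k : ℝ))) (t : ℝ) (ht : 0 < t) :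
    ContDiffOn ℝ N (fun η => ((t ^ (-σ) : ℝ) : ℂ) * m (t • η)) {0}ᶜ ∧
    (∀ k : ℕ, k ≤ N → ∀ ξ : V, ξ ≠ 0 →
          ‖iteratedFDerivWithin ℝ k (fun η => ((t ^ (-σ) : ℝ) : ℂ) * m (t • η)) {0}ᶜ ξ‖
            ≤ ‖ξ‖ ^ (σ - (k : ℝ))) := by
  set G : V →L[ℝ] V := t • ContinuousLinearMap.id ℝ V with hG
  have ho : IsOpen ({0}ᶜ : Set V) := isOpen_compl_singleton
  have hGa : ∀ η, G η = t • η := fun η => by simp [hG]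
  have hpre : G ⁻¹' ({0}ᶜ : Set V) = {0}ᶜ := by
    ext η; simp [hGa, ht.ne']
  have hGn : ‖G‖ ≤ t := by
    refine G.opNorm_le_bound ht.le fun x => ?_
    rw [hGa, norm_smul, Real.norm_of_nonneg ht.le]
  have hcomp : ContDiffOn ℝ N (m ∘ G) {0}ᶜ := by
    have := hm.comp_continuousLinearMap G
    rwa [hpre] at this
  have heq : (fun η => ((t ^ (-σ) : ℝ) : ℂ) * m (t • η)) = (t ^ (-σ) : ℝ) • (m ∘ G) := by
    ext η; simp [hGa]
  rw [heq]
  refine ⟨by exact hcomp.const_smul (t ^ (-σ)), ?_⟩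
  intro k hk ξ hξ
  have hξ' : ξ ∈ ({0}ᶜ : Set V) := hξ
  have hGξ : G ξ ∈ ({0}ᶜ : Set V) := by
    rw [← mem_preimage, hpre]; exact hξ
  rw [iteratedFDerivWithin_const_smul_apply ((hcomp.of_le (by exact_mod_cast hk)) ξ hξ')
    ho.uniqueDiffOn hξ']
  have h1 := G.iteratedFDerivWithin_comp_right hm ho.uniqueDiffOn (by rw [hpre]; exact ho.uniqueDiffOn)
    hGξ (i := k) (by exact_mod_cast hk)
  rw [hpre] at h1
  rw [h1, norm_smul, Real.norm_of_nonneg (by positivity)]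
  have h2 := ContinuousMultilinearMap.norm_compContinuousLinearMap_le
    (iteratedFDerivWithin ℝ k m {0}ᶜ (G ξ)) (fun _ : Fin k => G)
  have h3 := hmb k hk (G ξ) hGξ
  have h4 : ‖G ξ‖ = t * ‖ξ‖ := by rw [hGa, norm_smul, Real.norm_of_nonneg ht.le]
  calc _ ≤ t ^ (-σ) * ((t * ‖ξ‖) ^ (σ - (k:ℝ)) * t ^ k) := by
        gcongr
        refine h2.trans ?_
        rw [← h4]
        simp only [Finset.prod_const, Finset.card_univ, Fintype.card_fin]
        gcongr
    _ = ‖ξ‖ ^ (σ - (k:ℝ)) := by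
        rw [Real.mul_rpow ht.le (norm_nonneg _), ← Real.rpow_natCast t k]
        have : t ^ (-σ) * (t ^ (σ - (k:ℝ)) * t ^ (k:ℝ)) = 1 := by
          rw [← Real.rpow_add ht, ← Real.rpow_add ht]; simp
        linear_combination ‖ξ‖ ^ (σ - (k:ℝ)) * this

lemma mib_L5 (V : Type*) [NormedAddCommGroup V] [InnerProductSpace ℝ V] [FiniteDimensional ℝ V]
    [MeasurableSpace V] [BorelSpace V] (g : V → ℂ) (hgc : Continuous g) (hg : Integrable g)
    (hF : Integrable (𝓕 g)) (u : V → ℂ) (hu : Integrable u) (M : ℝ)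
    (hM : ∀ x : V, ‖∫ ξ : V, u ξ * Complex.exp ((⟪x, ξ⟫_ℝ : ℂ) * Complex.I)‖ ≤ M)
    (t : ℝ) (x : V) :
    ‖∫ ξ : V, g (t • ξ) * u ξ * Complex.exp ((⟪x, ξ⟫_ℝ : ℂ) * Complex.I)‖
      ≤ (∫ y, ‖𝓕 g y‖) * M := by
  have hinv : ∀ ξ, g (t • ξ) * u ξ * Complex.exp ((⟪x, ξ⟫_ℝ : ℂ) * Complex.I) =
      ∫ y, 𝓕 g y * (u ξ * Complex.exp ((⟪x + (2 * Real.pi * t) • y, ξ⟫_ℝ : ℂ) * Complex.I)) := by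
    intro ξ
    have h1 : g (t • ξ) = 𝓕⁻ (𝓕 g) (t • ξ) := by rw [hgc.fourierInv_fourier_eq hg hF]
    rw [h1, Real.fourierInv_eq', mul_assoc, ← integral_mul_const]
    congr 1
    ext y
    rw [inner_add_left, inner_smul_left, inner_smul_right]
    simp only [smul_eq_mul, conj_trivial]
    push_cast
    rw [add_mul, Complex.exp_add]
    have : (2 * (Real.pi:ℂ) * t * (⟪y, ξ⟫_ℝ : ℂ)) * Complex.I =
      2 * (Real.pi:ℂ) * (t * (⟪y, ξ⟫_ℝ : ℂ)) * Complex.I := by ring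
    rw [this]; ring
  simp_rw [hinv]
  rw [integral_integral_swap]
  · simp_rw [integral_const_mul]
    calc _ ≤ ∫ y, ‖𝓕 g y‖ * M := by
          apply norm_integral_le_of_norm_le (hF.norm.mul_const M)
          filter_upwards with y
          rw [norm_mul]
          gcongr
          exact hM _
      _ = _ := integral_mul_const _ _
  · have h1 : Integrable (fun p : V × V => 𝓕 g p.2 * u p.1) (volume.prod volume) := by
      have := hu.mul_prod hF
      exact this.congr (Filter.Eventually.of_forall fun p => by simp [mul_comm])
    have hcont : Continuous (fun p : V × V =>
      Complex.exp ((⟪x + (2 * Real.pi * t) • p.2, p.1⟫_ℝ : ℂ) * Complex.I)) := by fun_prop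
    have := h1.mul_bdd (c := 1) hcont.aestronglyMeasurable
      (Filter.Eventually.of_forall fun p => by rw [Complex.norm_exp_ofReal_mul_I])
    exact this.congr (Filter.Eventually.of_forall fun p => by simp [Function.uncurry, mul_assoc])

lemma mib_L4 (V : Type*) [NormedAddCommGroup V] [InnerProductSpace ℝ V] [FiniteDimensional ℝ V]
    [MeasurableSpace V] [BorelSpace V] (n : ℕ) (hn : Module.finrank ℝ V = n) (σ s : ℝ)
    (ψ : V → ℝ) (hψ : ContDiff ℝ (n + 1 : ℕ) ψ) (hψ1 : ∀ η, ‖η‖ < 1/2 → ψ η = 0)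
    (hψ2 : ∀ η, 2 < ‖η‖ → ψ η = 0) :
    ∃ C : ℝ, 0 < C ∧ ∀ m : V → ℂ, ContDiffOn ℝ (n + 1 : ℕ) m {0}ᶜ →
      (∀ k : ℕ, k ≤ n + 1 → ∀ ξ : V, ξ ≠ 0 →
          ‖iteratedFDerivWithin ℝ k m {0}ᶜ ξ‖ ≤ ‖ξ‖ ^ (σ - (k : ℝ))) →
      ∀ v : V → ℂ, Integrable (fun ξ => ((‖ξ‖ ^ s : ℝ) : ℂ) * v ξ) →
      ∀ M : ℝ, (∀ x : V, ‖∫ ξ : V, ((‖ξ‖ ^ s : ℝ) : ℂ) * v ξ *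
          Complex.exp ((⟪x, ξ⟫_ℝ : ℂ) * Complex.I)‖ ≤ M) →
      ∀ t : ℝ, 0 < t → ∀ x : V,
        ‖∫ ξ : V, ((ψ (t⁻¹ • ξ) : ℝ) : ℂ) * (m ξ * v ξ *
          Complex.exp ((⟪x, ξ⟫_ℝ : ℂ) * Complex.I))‖ ≤ C * M * t ^ (σ - s) := by
  set w : V → ℂ := fun η => ((‖η‖ ^ (-s) * ψ η : ℝ) : ℂ) with hw
  have hw1 : ∀ η, ‖η‖ < 1/2 → w η = 0 := fun η h => by simp [hw, hψ1 η h]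
  have hw2 : ∀ η, 2 < ‖η‖ → w η = 0 := fun η h => by simp [hw, hψ2 η h]
  have hwc : ContDiff ℝ (n + 1 : ℕ) w := by
    rw [contDiff_iff_contDiffAt]
    intro η
    by_cases h : η = 0
    · subst h
      have : w =ᶠ[nhds 0] fun _ => 0 := by
        filter_upwards [Metric.ball_mem_nhds (0:V) (show (0:ℝ) < 1/2 by norm_num)] with η hη
        exact hw1 η (by simpa using hη)
      exact contDiffAt_const.congr_of_eventuallyEq this
    · have h1 : ContDiffAt ℝ (n + 1 : ℕ) (fun η : V => ‖η‖ ^ (-s) * ψ η) η :=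
        ((contDiffAt_norm ℝ h).rpow_const_of_ne (by simpa using h)).mul hψ.contDiffAt
      exact Complex.ofRealCLM.contDiff.contDiffAt.comp η h1
  obtain ⟨K, hK0, hK⟩ := mib_L1 V n hn
  obtain ⟨B, hB0, hB⟩ := mib_L2 V n σ w hwc hw1 hw2
  refine ⟨K * B, by positivity, ?_⟩
  intro m hm hmb v hv M hM t ht x
  obtain ⟨hmt, hmtb⟩ := mib_L3 V (n+1) σ m hm hmb t ht
  obtain ⟨hg, hgB⟩ := hB _ hmt hmtb
  obtain ⟨hgi, hFi, hFB⟩ := hK _ B hg (fun η h => by simp [hw2 η h]) hgB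
  have hM0 : 0 ≤ M := (norm_nonneg _).trans (hM 0)
  have key := mib_L5 V _ hg.continuous hgi hFi _ hv M hM t⁻¹ x
  have heq : ∀ ξ : V, ((ψ (t⁻¹ • ξ) : ℝ) : ℂ) * (m ξ * v ξ *
          Complex.exp ((⟪x, ξ⟫_ℝ : ℂ) * Complex.I)) =
      ((t ^ (σ - s) : ℝ) : ℂ) * ((((t ^ (-σ) : ℝ) : ℂ) * m (t • t⁻¹ • ξ) * w (t⁻¹ • ξ)) *
        (((‖ξ‖ ^ s : ℝ) : ℂ) * v ξ) * Complex.exp ((⟪x, ξ⟫_ℝ : ℂ) * Complex.I)) := by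
    intro ξ
    by_cases h : ξ = 0
    · subst h
      simp [hw, hψ1 0 (by simp)]
    · have hξ : 0 < ‖ξ‖ := norm_pos_iff.2 h
      have h1 : t ^ (σ - s) * (t ^ (-σ) * ‖t⁻¹ • ξ‖ ^ (-s) * ‖ξ‖ ^ s) = 1 := by
        rw [norm_smul, Real.norm_of_nonneg (by positivity),
          Real.mul_rpow (by positivity) (by positivity), Real.inv_rpow ht.le,
          Real.rpow_neg ht.le s, inv_inv, Real.rpow_neg hξ.le, Real.rpow_sub ht,
          Real.rpow_neg ht.le]
        have := Real.rpow_pos_of_pos ht σ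
        have := Real.rpow_pos_of_pos ht s
        have := Real.rpow_pos_of_pos hξ s
        field_simp
      have h2 : ((t ^ (σ - s) : ℝ) : ℂ) * (((t ^ (-σ) : ℝ) : ℂ) * ((‖t⁻¹ • ξ‖ ^ (-s) : ℝ) : ℂ)
          * ((‖ξ‖ ^ s : ℝ) : ℂ)) = 1 := by exact_mod_cast h1
      rw [smul_inv_smul₀ ht.ne']
      simp only [hw]
      rw [Complex.ofReal_mul]
      linear_combination (-((ψ (t⁻¹ • ξ) : ℝ) : ℂ) * (m ξ * v ξ *
          Complex.exp ((⟪x, ξ⟫_ℝ : ℂ) * Complex.I))) * h2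
  simp_rw [heq]
  rw [integral_const_mul, norm_mul, Complex.norm_real, Real.norm_of_nonneg (by positivity)]
  calc _ ≤ t ^ (σ - s) * (K * B * M) := by
        gcongr
        exact key.trans (by gcongr)
    _ = _ := by ring

lemma mib_tel (I : ℝ → ℂ) (A B ε : ℝ) (hA : 0 ≤ A) (hB : 0 ≤ B) (hε : 0 < ε)
    (h1 : ∀ a > 0, ‖I a - I (2 * a)‖ ≤ A * a ^ ε)
    (h2 : ∀ a > 0, ‖I a - I (2 * a)‖ ≤ B * a ^ (-ε)) (L : ℂ)
    (hl1 : ∀ a > 0, Filter.Tendsto (fun N : ℕ => I ((2:ℝ)⁻¹ ^ N * a)) Filter.atTop (nhds L))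
    (hl2 : ∀ a > 0, Filter.Tendsto (fun N : ℕ => I (2 ^ N * a)) Filter.atTop (nhds 0)) :
    ∀ a > 0, ‖L‖ ≤ (1 - (2:ℝ) ^ (-ε))⁻¹ * (A * a ^ ε + B * a ^ (-ε)) := by
  intro a ha
  set r : ℝ := (2:ℝ) ^ (-ε) with hr
  have hr0 : 0 < r := by positivity
  have hr1 : r < 1 := Real.rpow_lt_one_of_one_lt_of_neg (by norm_num) (by linarith)
  have hs : ∀ N, ∑ j ∈ Finset.range N, r ^ j ≤ (1 - r)⁻¹ := fun N => by
    rw [← tsum_geometric_of_lt_one hr0.le hr1]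
    exact (summable_geometric_of_lt_one hr0.le hr1).sum_le_tsum _ (fun i _ => by positivity)
  have ha1 : 0 < a ^ ε := by positivity
  have ha2 : 0 < a ^ (-ε) := by positivity
  have e1 : ∀ N : ℕ, ‖I ((2:ℝ)⁻¹ ^ N * a) - I a‖ ≤ A * a ^ ε * ∑ j ∈ Finset.range N, r ^ j := by
    intro N
    induction N with
    | zero => simp
    | succ N ih =>
      have h := h1 ((2:ℝ)⁻¹ ^ (N+1) * a) (by positivity)
      have e : 2 * ((2:ℝ)⁻¹ ^ (N+1) * a) = (2:ℝ)⁻¹ ^ N * a := by rw [pow_succ]; ring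
      have e' : ((2:ℝ)⁻¹ ^ (N+1) * a) ^ ε = r ^ (N+1) * a ^ ε := by
        rw [Real.mul_rpow (by positivity) ha.le, hr, Real.rpow_neg (by norm_num),
          ← Real.inv_rpow (by norm_num), ← Real.rpow_natCast, ← Real.rpow_natCast,
          ← Real.rpow_mul (by norm_num), ← Real.rpow_mul (by norm_num), mul_comm ε]
      rw [e, e'] at h
      have h3 := norm_sub_le_norm_sub_add_norm_sub (I ((2:ℝ)⁻¹ ^ (N+1) * a)) (I ((2:ℝ)⁻¹ ^ N * a)) (I a)
      have h4 : r ^ (N+1) ≤ r ^ N := pow_le_pow_of_le_one hr0.le hr1.le (by omega)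
      have h5 : A * (r ^ (N+1) * a ^ ε) ≤ A * (r ^ N * a ^ ε) := by gcongr
      rw [Finset.sum_range_succ]
      linarith
  have e2 : ∀ N : ℕ, ‖I a - I (2 ^ N * a)‖ ≤ B * a ^ (-ε) * ∑ j ∈ Finset.range N, r ^ j := by
    intro N
    induction N with
    | zero => simp
    | succ N ih =>
      have h := h2 (2 ^ N * a) (by positivity)
      have e : 2 * ((2:ℝ) ^ N * a) = (2:ℝ) ^ (N+1) * a := by rw [pow_succ]; ring
      have e' : ((2:ℝ) ^ N * a) ^ (-ε) = r ^ N * a ^ (-ε) := by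
        rw [Real.mul_rpow (by positivity) ha.le, hr, ← Real.rpow_natCast, ← Real.rpow_natCast,
          ← Real.rpow_mul (by norm_num), ← Real.rpow_mul (by norm_num), mul_comm (-ε)]
      rw [e, e'] at h
      have h3 := norm_sub_le_norm_sub_add_norm_sub (I a) (I ((2:ℝ) ^ N * a)) (I ((2:ℝ) ^ (N+1) * a))
      rw [Finset.sum_range_succ]
      linarith
  have hlim := ((hl1 a ha).sub (hl2 a ha)).norm
  rw [sub_zero] at hlim
  refine le_of_tendsto' hlim fun N => ?_
  have h3 := norm_sub_le_norm_sub_add_norm_sub (I ((2:ℝ)⁻¹ ^ N * a)) (I a) (I (2 ^ N * a))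
  have h5 : A * a ^ ε * ∑ j ∈ Finset.range N, r ^ j ≤ A * a ^ ε * (1 - r)⁻¹ := by
    gcongr; exact hs N
  have h6 : B * a ^ (-ε) * ∑ j ∈ Finset.range N, r ^ j ≤ B * a ^ (-ε) * (1 - r)⁻¹ := by
    gcongr; exact hs N
  linarith [e1 N, e2 N]

lemma mib_opt (L S P Q ε : ℝ) (hS : 0 ≤ S) (hP : 0 ≤ P) (hQ : 0 ≤ Q) (hε : 0 < ε)
    (h : ∀ a > 0, L ≤ S * (P * a ^ ε + Q * a ^ (-ε))) :
    L ≤ 2 * S * √P * √Q := by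
  have h1 : ∀ δ > 0, L ≤ 2 * S * √(P + δ) * √(Q + δ) := by
    intro δ hδ
    have hp : 0 < √(P + δ) := Real.sqrt_pos.2 (by linarith)
    have hq : 0 < √(Q + δ) := Real.sqrt_pos.2 (by linarith)
    have hp2 : √(P + δ) ^ 2 = P + δ := Real.sq_sqrt (by linarith)
    have hq2 : √(Q + δ) ^ 2 = Q + δ := Real.sq_sqrt (by linarith)
    have := h ((√(Q + δ) / √(P + δ)) ^ (ε⁻¹)) (by positivity)
    rw [Real.rpow_neg (by positivity), ← Real.rpow_mul (by positivity),
      inv_mul_cancel₀ hε.ne', Real.rpow_one, inv_div] at this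
    refine this.trans ?_
    calc _ ≤ S * (√(P + δ) ^ 2 * (√(Q + δ) / √(P + δ)) + √(Q + δ) ^ 2 * (√(P + δ) / √(Q + δ))) := by
          rw [hp2, hq2]; gcongr <;> linarith
      _ = _ := by field_simp; ring
  have hc : Filter.Tendsto (fun δ : ℝ => 2 * S * √(P + δ) * √(Q + δ)) (nhdsWithin 0 (Ioi 0))
      (nhds (2 * S * √P * √Q)) := by
    have : Continuous (fun δ : ℝ => 2 * S * √(P + δ) * √(Q + δ)) := by fun_prop
    have := this.tendsto 0
    simp only [add_zero] at this
    exact this.mono_left nhdsWithin_le_nhds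
  exact ge_of_tendsto hc (by filter_upwards [self_mem_nhdsWithin] with δ hδ using h1 δ hδ)

end

/-- Interpolation bound for a Fourier multiplier of order `σ`:
`‖𝒯f‖_∞ ≲ ‖Λ^{σ+ε}f‖_∞^{1/2} ‖Λ^{σ−ε}f‖_∞^{1/2}`. -/
theorem multiplier_interpolation_bound
    (d : ℕ) (hd : 1 ≤ d) (σ ε : ℝ) (hσ : -(d : ℝ) < σ) (hε : 0 < ε) (hε1 : ε < 1) :
    ∃ C : ℝ, 0 < C ∧
      ∀ m v : EuclideanSpace ℝ (Fin d) → ℂ,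
        ContDiffOn ℝ (d + 2) m {0}ᶜ →
        (∀ k : ℕ, k ≤ d + 2 → ∀ ξ : EuclideanSpace ℝ (Fin d), ξ ≠ 0 →
          ‖iteratedFDerivWithin ℝ k m {0}ᶜ ξ‖ ≤ ‖ξ‖ ^ (σ - (k : ℝ))) →
        Measurable v →
        Integrable (fun ξ : EuclideanSpace ℝ (Fin d) =>
          (‖ξ‖ ^ (σ - ε) + ‖ξ‖ ^ (σ + ε)) * ‖v ξ‖) →
        ∀ Mp Mm : ℝ,
          (∀ x : EuclideanSpace ℝ (Fin d),
            ‖∫ ξ : EuclideanSpace ℝ (Fin d),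
                ((‖ξ‖ ^ (σ + ε) : ℝ) : ℂ) * v ξ * Complex.exp ((⟪x, ξ⟫_ℝ : ℂ) * Complex.I)‖
              ≤ Mp) →
          (∀ x : EuclideanSpace ℝ (Fin d),
            ‖∫ ξ : EuclideanSpace ℝ (Fin d),
                ((‖ξ‖ ^ (σ - ε) : ℝ) : ℂ) * v ξ * Complex.exp ((⟪x, ξ⟫_ℝ : ℂ) * Complex.I)‖
              ≤ Mm) →
          ∀ x : EuclideanSpace ℝ (Fin d),
            ‖∫ ξ : EuclideanSpace ℝ (Fin d),
                m ξ * v ξ * Complex.exp ((⟪x, ξ⟫_ℝ : ℂ) * Complex.I)‖ ≤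
              C * Real.sqrt Mp * Real.sqrt Mm := by
  classical
  have hfr : Module.finrank ℝ (EuclideanSpace ℝ (Fin d)) = d := by simp
  haveI : Nonempty (Fin d) := ⟨⟨0, hd⟩⟩
  let χ : ContDiffBump (0 : EuclideanSpace ℝ (Fin d)) := ⟨1, 2, by norm_num, by norm_num⟩
  set ψ : EuclideanSpace ℝ (Fin d) → ℝ := fun η => χ η - χ ((2:ℝ) • η) with hψdef
  have hχ1 : ∀ η : EuclideanSpace ℝ (Fin d), ‖η‖ ≤ 1 → χ η = 1 := fun η h =>
    χ.one_of_mem_closedBall (by simpa using h)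
  have hχ0 : ∀ η : EuclideanSpace ℝ (Fin d), 2 ≤ ‖η‖ → χ η = 0 := fun η h =>
    χ.zero_of_le_dist (by simpa using h)
  have hn2 : ∀ η : EuclideanSpace ℝ (Fin d), ‖(2:ℝ) • η‖ = 2 * ‖η‖ := fun η => by
    rw [norm_smul]; simp
  have hψc : ContDiff ℝ (d + 1 : ℕ) ψ :=
    χ.contDiff.sub (χ.contDiff.comp (contDiff_const_smul (2:ℝ)))
  have hψ1 : ∀ η, ‖η‖ < 1/2 → ψ η = 0 := fun η h => by
    simp only [hψdef]
    rw [hχ1 η (by linarith), hχ1 _ (by rw [hn2]; linarith), sub_self]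
  have hψ2 : ∀ η, 2 < ‖η‖ → ψ η = 0 := fun η h => by
    simp only [hψdef]
    rw [hχ0 η (by linarith), hχ0 _ (by rw [hn2]; linarith), sub_self]
  obtain ⟨Cp, hCp0, hCp⟩ := mib_L4 (EuclideanSpace ℝ (Fin d)) d hfr σ (σ + ε) ψ hψc hψ1 hψ2
  obtain ⟨Cm, hCm0, hCm⟩ := mib_L4 (EuclideanSpace ℝ (Fin d)) d hfr σ (σ - ε) ψ hψc hψ1 hψ2
  set C : ℝ := max Cp Cm with hC
  have hC0 : 0 < C := lt_max_of_lt_left hCp0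
  have hr1 : (2:ℝ) ^ (-ε) < 1 := Real.rpow_lt_one_of_one_lt_of_neg (by norm_num) (by linarith)
  have hS : 0 < (1 - (2:ℝ) ^ (-ε))⁻¹ := inv_pos.2 (by linarith)
  refine ⟨2 * ((1 - (2:ℝ) ^ (-ε))⁻¹ * C), by positivity, ?_⟩
  intro m v hm hmb hv hint Mp Mm hMp hMm x
  have hMp0 : 0 ≤ Mp := (norm_nonneg _).trans (hMp 0)
  have hMm0 : 0 ≤ Mm := (norm_nonneg _).trans (hMm 0)
  have hm' : ContDiffOn ℝ (d + 1 : ℕ) m {0}ᶜ := hm.of_le (by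
    have : ((d + 1 : ℕ) : WithTop ℕ∞) ≤ ((d + 2 : ℕ) : WithTop ℕ∞) := by
      exact_mod_cast Nat.le_succ (d + 1)
    simpa using this)
  have hmb' : ∀ k : ℕ, k ≤ d + 1 → ∀ ξ : EuclideanSpace ℝ (Fin d), ξ ≠ 0 →
      ‖iteratedFDerivWithin ℝ k m {0}ᶜ ξ‖ ≤ ‖ξ‖ ^ (σ - (k : ℝ)) :=
    fun k hk => hmb k (by omega)
  have hvp : Integrable (fun ξ : EuclideanSpace ℝ (Fin d) => ((‖ξ‖ ^ (σ + ε) : ℝ) : ℂ) * v ξ) := by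
    refine hint.mono' (by fun_prop) (Filter.Eventually.of_forall fun ξ => ?_)
    rw [norm_mul, Complex.norm_real, Real.norm_of_nonneg (by positivity)]
    gcongr
    linarith [Real.rpow_nonneg (norm_nonneg ξ) (σ - ε)]
  have hvm : Integrable (fun ξ : EuclideanSpace ℝ (Fin d) => ((‖ξ‖ ^ (σ - ε) : ℝ) : ℂ) * v ξ) := by
    refine hint.mono' (by fun_prop) (Filter.Eventually.of_forall fun ξ => ?_)
    rw [norm_mul, Complex.norm_real, Real.norm_of_nonneg (by positivity)]
    gcongr
    linarith [Real.rpow_nonneg (norm_nonneg ξ) (σ + ε)]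
  have hne : ∀ᵐ ξ : EuclideanSpace ℝ (Fin d), ξ ≠ 0 := by
    simp [ae_iff]
  have hmm : AEStronglyMeasurable m (volume : Measure (EuclideanSpace ℝ (Fin d))) := by
    have h1 := hm.continuousOn.aestronglyMeasurable (μ := volume)
      (isOpen_compl_singleton (x := (0 : EuclideanSpace ℝ (Fin d)))).measurableSet
    have h2 : (volume : Measure (EuclideanSpace ℝ (Fin d))).restrict {0}ᶜ = volume :=
      Measure.restrict_eq_self_of_ae_mem hne
    rwa [h2] at h1
  set F : EuclideanSpace ℝ (Fin d) → ℂ := fun ξ =>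
    m ξ * v ξ * Complex.exp ((⟪x, ξ⟫_ℝ : ℂ) * Complex.I) with hF
  have hFi : Integrable F := by
    refine hint.mono' ((hmm.mul hv.aestronglyMeasurable).mul
      (Continuous.aestronglyMeasurable (by fun_prop))) ?_
    filter_upwards [hne] with ξ hξ
    have hξ0 : 0 < ‖ξ‖ := norm_pos_iff.2 hξ
    rw [norm_mul, norm_mul, Complex.norm_exp_ofReal_mul_I, mul_one]
    gcongr
    have h := hmb 0 (by omega) ξ hξ
    rw [norm_iteratedFDerivWithin_zero] at h
    refine h.trans ?_
    simp only [Nat.cast_zero, sub_zero]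
    rcases le_total 1 ‖ξ‖ with h1 | h1
    · have := Real.rpow_le_rpow_of_exponent_le h1 (show σ ≤ σ + ε by linarith)
      linarith [Real.rpow_nonneg (norm_nonneg ξ) (σ - ε)]
    · have := Real.rpow_le_rpow_of_exponent_ge hξ0 h1 (show σ - ε ≤ σ by linarith)
      linarith [Real.rpow_nonneg (norm_nonneg ξ) (σ + ε)]
  have hχn : ∀ η : EuclideanSpace ℝ (Fin d), ‖((χ η : ℝ) : ℂ)‖ ≤ 1 := fun η => by
    rw [Complex.norm_real, Real.norm_of_nonneg χ.nonneg]; exact χ.le_one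
  have hχc : ∀ a : ℝ, Continuous (fun ξ : EuclideanSpace ℝ (Fin d) => ((χ (a • ξ) : ℝ) : ℂ)) :=
    fun a => Complex.continuous_ofReal.comp (χ.continuous.comp (continuous_const_smul a))
  have hχF : ∀ a : ℝ, Integrable (fun ξ => ((χ (a • ξ) : ℝ) : ℂ) * F ξ) := fun a =>
    hFi.bdd_mul (c := 1) (hχc a).aestronglyMeasurable (Filter.Eventually.of_forall fun ξ => hχn _)
  set I : ℝ → ℂ := fun a => ∫ ξ, ((χ (a • ξ) : ℝ) : ℂ) * F ξ with hI
  have hdiff : ∀ a > 0, I a - I (2 * a) =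
      ∫ ξ, ((ψ ((a⁻¹)⁻¹ • ξ) : ℝ) : ℂ) * F ξ := by
    intro a ha
    simp only [hI]
    rw [← integral_sub (hχF a) (hχF (2 * a))]
    congr 1
    ext ξ
    simp only [hψdef, inv_inv, smul_smul]
    push_cast
    ring
  have hlim : ∀ (u : ℕ → ℝ) (c : ℂ),
      (∀ ξ : EuclideanSpace ℝ (Fin d), ξ ≠ 0 →
        ∀ᶠ N in Filter.atTop, ((χ (u N • ξ) : ℝ) : ℂ) = c) →
      Filter.Tendsto (fun N => I (u N)) Filter.atTop (nhds (∫ ξ, c * F ξ)) := by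
    intro u c h
    refine tendsto_integral_of_dominated_convergence (fun ξ => ‖F ξ‖)
      (fun N => (hχF (u N)).aestronglyMeasurable) hFi.norm ?_ ?_
    · intro N
      filter_upwards with ξ
      rw [norm_mul]
      exact mul_le_of_le_one_left (norm_nonneg _) (hχn _)
    · filter_upwards [hne] with ξ hξ
      refine tendsto_const_nhds.congr' ?_
      filter_upwards [h ξ hξ] with N hN
      rw [hN]
  have hmain := mib_tel I (C * Mp) (C * Mm) ε (by positivity) (by positivity) hε ?_ ?_ (∫ ξ, F ξ)
    ?_ ?_
  · have := mib_opt ‖∫ ξ, F ξ‖ ((1 - (2:ℝ) ^ (-ε))⁻¹ * C) Mp Mm ε (by positivity) hMp0 hMm0 hε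
      (fun a ha => (hmain a ha).trans_eq (by ring))
    exact this
  · intro a ha
    rw [hdiff a ha]
    refine (hCp m hm' hmb' v hvp Mp hMp a⁻¹ (by positivity) x).trans ?_
    have : (a⁻¹) ^ (σ - (σ + ε)) = a ^ ε := by
      rw [show σ - (σ + ε) = -ε by ring, Real.rpow_neg (by positivity), Real.inv_rpow ha.le, inv_inv]
    rw [this]
    gcongr
    exact le_max_left _ _
  · intro a ha
    rw [hdiff a ha]
    refine (hCm m hm' hmb' v hvm Mm hMm a⁻¹ (by positivity) x).trans ?_
    have : (a⁻¹) ^ (σ - (σ - ε)) = a ^ (-ε) := by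
      rw [show σ - (σ - ε) = ε by ring, Real.rpow_neg (by positivity), Real.inv_rpow ha.le]
    rw [this]
    gcongr
    exact le_max_right _ _
  · intro a ha
    have := hlim (fun N : ℕ => (2:ℝ)⁻¹ ^ N * a) 1 ?_
    · simpa only [one_mul] using this
    · intro ξ hξ
      have ht : Filter.Tendsto (fun N : ℕ => (2:ℝ)⁻¹ ^ N * (a * ‖ξ‖)) Filter.atTop (nhds 0) := by
        have := (tendsto_pow_atTop_nhds_zero_of_lt_one (r := (2:ℝ)⁻¹) (by norm_num)
          (by norm_num)).mul_const (a * ‖ξ‖)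
        rwa [zero_mul] at this
      filter_upwards [ht.eventually_le_const zero_lt_one] with N hN
      rw [hχ1 _ (by
        rw [norm_smul, Real.norm_of_nonneg (by positivity), mul_assoc]; exact hN)]
      simp
  · intro a ha
    have := hlim (fun N : ℕ => (2:ℝ) ^ N * a) 0 ?_
    · simpa only [zero_mul, integral_zero] using this
    · intro ξ hξ
      have hξ0 : 0 < ‖ξ‖ := norm_pos_iff.2 hξ
      have ht : Filter.Tendsto (fun N : ℕ => (2:ℝ) ^ N * (a * ‖ξ‖)) Filter.atTop Filter.atTop :=
        (tendsto_pow_atTop_atTop_of_one_lt (by norm_num)).atTop_mul_const (by positivity)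
      filter_upwards [ht.eventually_ge_atTop 2] with N hN
      rw [hχ0 _ (by
        rw [norm_smul, Real.norm_of_nonneg (by positivity), mul_assoc]; exact hN)]
      simp
end
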